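/- There exists a constant C > 0 such that for every finite tree T on n ≥ 2 vertices whose maximum degree Δ satisfies Δ ≥ 3, and every integer k ≥ Δ + 1, the discrete-time Glauber dynamics for k-edge-colourings of T is an ergodic Markov chain whose stationary distribution is uniform on the set of proper k-edge-colourings of T, and its mixing time is at most n^C. -/

import Mathlib

/-!
The proof establishes a Poincaré inequality with polynomial constant for the uniform measure on the
proper edge colourings of a tree, and deduces the mixing time bound from the resulting spectral gap.

The tree is rooted at a leaf, which gives a parent relation on edges (`Rooted`, `exists_rooted`).
For a set `A` of edges, `En A f` is the expected conditional variance of `f` given the colours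
outside `A`. The aim, `Rooted.poincare`, is to bound `En univ f` by
`10 ^ 8 * k * m ^ 21 * ∑ x, En {x} f`, where `m` is the number of edges. Three ingredients enter.

* The star inequality `Star.En_le`: for sibling subtrees with at least one spare colour, the
  conditional variance over their union is at most `5` times the sum of those over the subtrees.
  A subtree interacts with its siblings only through the colour of its top edge, since permuting
  two colours inside a subtree is harmless below the top edge; for functions of the colours of the
  top edges, the components that depend on one colour are nearly orthogonal.
* The fan inequality `Fan.En_le`: the same for sibling subtrees and one further edge `p` with a part
  `P` of the tree attached, where `p` may have fewer available colours. If the colour wanted at `p`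
  is in use at a sibling `i`, then `p` is recoloured in three moves, the first of which moves `i` to
  an intermediate colour.
* Contraction along heavy paths, `Rooted.Vr_contract`. With `h` the heavy child of `e` and `h'` the
  heavy child of `h`, the variance explained by the colour of `h` is at most a local term plus half
  the variance explained by the colour of `h'`. As the factor is less than one, descending a heavy
  path only adds up contributions of light subtrees (`Rooted.Psi_step`), instead of multiplying
  constants. Constants multiply only when passing to a light subtree, whose size is at most half of
  that of its parent, so that the total loss is polynomial (`Rooted.Psi_le`).

The Poincaré inequality yields a spectral gap for the Glauber dynamics and hence mixing in
polynomial time as long as `k ≤ 8 n` (`mixing_small`). For `k ≥ 8 n`, where the bound should not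
depend on `k`, the coupling that uses the same edge and the same colour in both copies contracts the
Hamming distance (`mixing_large`). The exponent `50` works in both cases.
-/

open Finset
open scoped Classical

/-- Two edges are incident if they are distinct and share an endpoint. -/
def EdgeInc {V : Type*} (e f : Sym2 V) : Prop := e ≠ f ∧ ∃ v : V, v ∈ e ∧ v ∈ f

section TreeChain

variable {V : Type} [Fintype V] [DecidableEq V] (G : SimpleGraph V) [DecidableRel G.Adj]
  (k : ℕ)

/-- The edges of `G`. -/
abbrev Edge := {e : Sym2 V // e ∈ G.edgeFinset}

/-- The set `Ω` of proper `k`-edge-colourings of `G`. -/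
abbrev ECol := {σ : Edge G → Fin k // ∀ e f : Edge G, EdgeInc e.1 f.1 → σ e ≠ σ f}

/-- Off-diagonal transition probabilities of the discrete-time Glauber dynamics for
`k`-edge-colourings: from `σ`, a uniformly random edge `e` and colour `c` are chosen, and `e`
is recoloured with `c` if the result is proper.  For `σ ≠ η` differing at exactly one edge
this gives probability `1/(|E|·k)`. -/
noncomputable def Poff (σ η : ECol G k) : ℝ :=
  if (Finset.univ.filter fun e : Edge G => σ.1 e ≠ η.1 e).card = 1 then
    1 / ((G.edgeFinset.card : ℝ) * k)
  else 0

/-- The transition matrix `P` of the discrete-time Glauber dynamics for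
`k`-edge-colourings of `G` (laziness on the diagonal makes rows sum to one). -/
noncomputable def Pstep : Matrix (ECol G k) (ECol G k) ℝ :=
  Matrix.of fun σ η =>
    if σ = η then 1 - ∑ η' ∈ Finset.univ.filter fun b => b ≠ σ, Poff G k σ η'
    else Poff G k σ η

/-- Total variation distance between two distributions on a finite set. -/
noncomputable def tvDist {Ω : Type*} [Fintype Ω] (ν π : Ω → ℝ) : ℝ :=
  (1 / 2) * ∑ x : Ω, |ν x - π x|

/-- The mixing time: the least `t` such that, from every starting state, the distribution
after `t` steps is within total variation distance `1/4` of the uniform distribution. -/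
noncomputable def mixTime : ℕ :=
  sInf {t : ℕ | ∀ σ : ECol G k,
    tvDist (fun η => (Pstep G k ^ t) σ η)
      (fun _ => 1 / (Fintype.card (ECol G k) : ℝ)) < 1 / 4}

end TreeChain

/-! ### Conditional expectations and variances of functions of colourings -/

namespace TreeCol

section Framework

set_option linter.unusedSectionVars false

variable {E : Type} [Fintype E] {adj : E → E → Prop} {k : ℕ}

/-- Proper `k`-colourings of the elements of `E` with respect to a conflict relation `adj`. -/
abbrev Col (adj : E → E → Prop) (k : ℕ) := {σ : E → Fin k // ∀ e f : E, adj e f → σ e ≠ σ f}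

/-- `σ` and `η` agree outside `A`. -/
def Agr (A : Finset E) (σ η : Col adj k) : Prop := ∀ x, x ∉ A → σ.1 x = η.1 x

lemma Agr.refl (A : Finset E) (σ : Col adj k) : Agr A σ σ := fun _ _ => rfl

lemma Agr.symm {A : Finset E} {σ η : Col adj k} (h : Agr A σ η) : Agr A η σ :=
  fun x hx => (h x hx).symm

lemma Agr.trans {A : Finset E} {σ η ζ : Col adj k} (h : Agr A σ η) (h' : Agr A η ζ) :
    Agr A σ ζ := fun x hx => (h x hx).trans (h' x hx)

lemma Agr.mono {A B : Finset E} (hAB : A ⊆ B) {σ η : Col adj k} (h : Agr A σ η) : Agr B σ η :=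
  fun x hx => h x (fun hA => hx (hAB hA))

/-- The colourings that agree with `σ` outside `A`. -/
noncomputable def cls (A : Finset E) (σ : Col adj k) : Finset (Col adj k) :=
  univ.filter fun η => Agr A σ η

lemma mem_cls {A : Finset E} {σ η : Col adj k} : η ∈ cls A σ ↔ Agr A σ η := by simp [cls]

lemma cls_eq {A : Finset E} {σ η : Col adj k} (h : Agr A σ η) : cls A σ = cls A η := by
  ext ζ; rw [mem_cls, mem_cls]; exact ⟨fun h' => h.symm.trans h', fun h' => h.trans h'⟩

lemma cls_pos (A : Finset E) (σ : Col adj k) : (0 : ℝ) < (cls A σ).card := by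
  exact_mod_cast Finset.card_pos.2 ⟨σ, mem_cls.2 (Agr.refl A σ)⟩

/-- Conditional expectation of `f` given the colours outside `A`, for the uniform measure. -/
noncomputable def Pr (A : Finset E) (f : Col adj k → ℝ) (σ : Col adj k) : ℝ :=
  (∑ η ∈ cls A σ, f η) / (cls A σ).card

/-- `f` does not depend on the colours in `A` (on the set of proper colourings). -/
def Inv (A : Finset E) (f : Col adj k → ℝ) : Prop := ∀ σ η, Agr A σ η → f σ = f η

/-- The (unnormalised) expected conditional variance of `f` given the colours outside `A`. -/
noncomputable def En (A : Finset E) (f : Col adj k → ℝ) : ℝ := ∑ σ, (f σ - Pr A f σ) ^ 2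

lemma Inv.mono {A B : Finset E} (hAB : A ⊆ B) {f : Col adj k → ℝ} (h : Inv B f) : Inv A f :=
  fun σ η hs => h σ η (hs.mono hAB)

lemma inv_Pr (A : Finset E) (f : Col adj k → ℝ) : Inv A (Pr A f) := by
  intro σ η h; unfold Pr; rw [cls_eq h]

lemma Inv.sub {A : Finset E} {f g : Col adj k → ℝ} (hf : Inv A f) (hg : Inv A g) :
    Inv A (fun σ => f σ - g σ) := fun σ η h => by
  show f σ - g σ = f η - g η
  rw [hf σ η h, hg σ η h]

lemma Pr_of_inv {A : Finset E} {f : Col adj k → ℝ} (h : Inv A f) : Pr A f = f := by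
  funext σ
  unfold Pr
  rw [Finset.sum_congr rfl (fun η hη => (h σ η (mem_cls.1 hη)).symm)]
  rw [Finset.sum_const, nsmul_eq_mul]
  field_simp [(cls_pos A σ).ne']

lemma Pr_sub (A : Finset E) (f g : Col adj k → ℝ) (σ) :
    Pr A (fun σ => f σ - g σ) σ = Pr A f σ - Pr A g σ := by
  unfold Pr; rw [Finset.sum_sub_distrib, sub_div]

/-- The defining property of conditional expectation. -/
lemma sum_mul_Pr {A : Finset E} {g : Col adj k → ℝ} (hg : Inv A g) (f : Col adj k → ℝ) :
    ∑ σ, g σ * Pr A f σ = ∑ σ, g σ * f σ := by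
  have h1 : ∀ σ, g σ * Pr A f σ
      = ∑ η, if Agr A σ η then g η * f η / (cls A η).card else 0 := by
    intro σ
    rw [← Finset.sum_filter]
    unfold Pr
    rw [mul_div_assoc', Finset.mul_sum, Finset.sum_div]
    apply Finset.sum_congr rfl
    intro η hη
    rw [hg σ η (mem_cls.1 hη), cls_eq (mem_cls.1 hη)]
  simp_rw [h1]
  rw [Finset.sum_comm]
  apply Finset.sum_congr rfl
  intro η _
  rw [← Finset.sum_filter]
  have : (univ.filter fun σ => Agr A σ η) = cls A η := by
    ext σ; simp [cls]; exact ⟨Agr.symm, Agr.symm⟩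
  rw [this, Finset.sum_const, nsmul_eq_mul]
  field_simp [(cls_pos A η).ne']

lemma Pr_unique {A : Finset E} {f h : Col adj k → ℝ} (hh : Inv A h)
    (H : ∀ g, Inv A g → ∑ σ, g σ * h σ = ∑ σ, g σ * f σ) : Pr A f = h := by
  have hg : Inv A (fun σ => Pr A f σ - h σ) := (inv_Pr A f).sub hh
  have h1 := sum_mul_Pr hg f
  have h2 := H _ hg
  have h3 : ∑ σ, (Pr A f σ - h σ) * (Pr A f σ - h σ) = 0 := by
    have : ∀ σ, (Pr A f σ - h σ) * (Pr A f σ - h σ)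
      = (Pr A f σ - h σ) * Pr A f σ - (Pr A f σ - h σ) * h σ := fun σ => by ring
    simp_rw [this]
    rw [Finset.sum_sub_distrib, h1, h2, sub_self]
  rw [Finset.sum_eq_zero_iff_of_nonneg (fun σ _ => mul_self_nonneg _)] at h3
  funext σ
  have := h3 σ (mem_univ _)
  have := mul_self_eq_zero.1 this
  linarith

lemma Pr_Pr_of_subset {A B : Finset E} (h : A ⊆ B) (f : Col adj k → ℝ) :
    Pr B (Pr A f) = Pr B f := by
  symm
  apply Pr_unique (inv_Pr _ _)
  intro g hg
  rw [sum_mul_Pr hg, sum_mul_Pr (hg.mono h)]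

lemma Pr_Pr_of_superset {A B : Finset E} (h : A ⊆ B) (f : Col adj k → ℝ) :
    Pr A (Pr B f) = Pr B f := Pr_of_inv ((inv_Pr B f).mono h)

/-- Conditional expectation is self-adjoint. -/
lemma Pr_adj (A : Finset E) (f g : Col adj k → ℝ) :
    ∑ σ, Pr A f σ * g σ = ∑ σ, f σ * Pr A g σ := by
  rw [← sum_mul_Pr (inv_Pr A f) g]
  have := sum_mul_Pr (inv_Pr A g) f
  simp_rw [mul_comm (Pr A g _)] at this
  exact this

lemma sum_Pr (A : Finset E) (f : Col adj k → ℝ) : ∑ σ, Pr A f σ = ∑ σ, f σ := by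
  have := sum_mul_Pr (A := A) (g := fun _ => 1) (fun _ _ _ => rfl) f
  simpa using this

lemma sum_Pr_sq (A : Finset E) (f : Col adj k → ℝ) :
    ∑ σ, Pr A f σ ^ 2 = ∑ σ, Pr A f σ * f σ := by
  rw [← sum_mul_Pr (inv_Pr A f) f]; simp_rw [sq]

lemma En_eq (A : Finset E) (f : Col adj k → ℝ) :
    En A f = ∑ σ, f σ ^ 2 - ∑ σ, Pr A f σ ^ 2 := by
  unfold En
  have : ∀ σ, (f σ - Pr A f σ) ^ 2 = f σ ^ 2 - 2 * (Pr A f σ * f σ) + Pr A f σ ^ 2 :=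
    fun σ => by ring
  simp_rw [this]
  rw [Finset.sum_add_distrib, Finset.sum_sub_distrib, ← Finset.mul_sum, ← sum_Pr_sq]
  ring

lemma En_nonneg (A : Finset E) (f : Col adj k → ℝ) : 0 ≤ En A f :=
  Finset.sum_nonneg fun _ _ => sq_nonneg _

lemma sum_Pr_sq_le (A : Finset E) (f : Col adj k → ℝ) :
    ∑ σ, Pr A f σ ^ 2 ≤ ∑ σ, f σ ^ 2 := by
  have := En_nonneg A f
  rw [En_eq] at this; linarith

/-- For `A ⊆ B`, the variance over `B` of the average over `A`. -/
lemma En_Pr {A B : Finset E} (h : A ⊆ B) (f : Col adj k → ℝ) :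
    En B (Pr A f) = ∑ σ, (Pr A f σ - Pr B f σ) ^ 2 := by
  unfold En; rw [Pr_Pr_of_subset h]

/-- Law of total variance. -/
lemma En_split {A B : Finset E} (h : A ⊆ B) (f : Col adj k → ℝ) :
    En B f = En A f + En B (Pr A f) := by
  rw [En_eq, En_eq, En_eq, Pr_Pr_of_subset h]; ring

lemma En_mono {A B : Finset E} (h : A ⊆ B) (f : Col adj k → ℝ) : En A f ≤ En B f := by
  rw [En_split h]; linarith [En_nonneg B (Pr A f)]

lemma En_Pr_le {A B : Finset E} (h : A ⊆ B) (f : Col adj k → ℝ) : En B (Pr A f) ≤ En B f := by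
  rw [En_split h f]; linarith [En_nonneg A f]

lemma En_empty (f : Col adj k → ℝ) : En ∅ f = 0 := by
  have : Pr ∅ f = f := by
    apply Pr_of_inv
    intro σ η h
    have : σ = η := Subtype.ext (funext fun x => h x (by simp))
    rw [this]
  unfold En; simp [this]

/-- No element of `A` equals or conflicts with an element of `B`. -/
def Sep (adj : E → E → Prop) (A B : Finset E) : Prop :=
  ∀ x ∈ A, ∀ y ∈ B, x ≠ y ∧ ¬ adj x y ∧ ¬ adj y x

lemma Sep.symm {A B : Finset E} (h : Sep adj A B) : Sep adj B A :=
  fun x hx y hy => ⟨(h y hy x hx).1.symm, (h y hy x hx).2.2, (h y hy x hx).2.1⟩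

lemma Sep.mono {A B A' B' : Finset E} (h : Sep adj A B) (hA : A' ⊆ A) (hB : B' ⊆ B) :
    Sep adj A' B' := fun x hx y hy => h x (hA hx) y (hB hy)

/-- For separated `A` and `B`, colourings that agree off `A ∪ B` can be recombined: there is a
proper colouring equal to `η` on `A` and to `σ` elsewhere. -/
lemma exists_glue {A B : Finset E} (h : Sep adj A B) {σ η : Col adj k} (hs : Agr (A ∪ B) σ η) :
    ∃ ζ : Col adj k, (∀ x ∈ A, ζ.1 x = η.1 x) ∧ (∀ x, x ∉ A → ζ.1 x = σ.1 x) := by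
  have key : ∀ x ∈ A, ∀ y ∉ A, (adj x y ∨ adj y x) → σ.1 y = η.1 y := by
    intro x hx y hy hxy
    by_cases hyB : y ∈ B
    · have := h x hx y hyB; tauto
    · exact hs y (by simp [hy, hyB])
  refine ⟨⟨fun x => if x ∈ A then η.1 x else σ.1 x, ?_⟩, ?_, ?_⟩
  · intro e f hef
    by_cases he : e ∈ A <;> by_cases hf : f ∈ A <;> simp only [he, hf, if_true, if_false]
    · exact η.2 e f hef
    · rw [key e he f hf (Or.inl hef)]; exact η.2 e f hef
    · rw [key f hf e he (Or.inr hef)]; exact η.2 e f hef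
    · exact σ.2 e f hef
  · intro x hx; simp [hx]
  · intro x hx; simp [hx]

lemma Inv.union {A B : Finset E} (h : Sep adj A B) {f : Col adj k → ℝ} (hA : Inv A f)
    (hB : Inv B f) : Inv (A ∪ B) f := by
  intro σ η hs
  obtain ⟨ζ, h1, h2⟩ := exists_glue h hs
  rw [hA σ ζ (fun x hx => (h2 x hx).symm)]
  apply hB
  intro x hx
  by_cases hxA : x ∈ A
  · exact h1 x hxA
  · rw [h2 x hxA]; exact hs x (by simp [hx, hxA])

/-- Averaging over `A` preserves independence from a set separated from `A`. -/
lemma Inv.Pr {A B : Finset E} (h : Sep adj A B) {f : Col adj k → ℝ} (hB : Inv B f) :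
    Inv B (Pr A f) := by
  intro σ η hs
  have glue : ∀ σ η : Col adj k, Agr B σ η → ∀ ζ : Col adj k, Agr A σ ζ →
      ∃ ζ' : Col adj k, (∀ x ∈ A, ζ'.1 x = ζ.1 x) ∧ (∀ x, x ∉ A → ζ'.1 x = η.1 x) := by
    intro σ η hs ζ hz
    apply exists_glue h
    intro x hx
    simp only [mem_union, not_or] at hx
    rw [← hs x hx.2, hz x hx.1]
  choose! F hF1 hF2 using glue
  have hval : ∀ σ η : Col adj k, Agr B σ η → ∀ ζ : Col adj k, Agr A σ ζ →
      F η σ (F σ η ζ) = ζ := by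
    intro σ η hs ζ hz
    have hz' : Agr A η (F σ η ζ) := fun x hx => (hF2 σ η hs ζ hz x hx).symm
    apply Subtype.ext; funext x
    by_cases hx : x ∈ A
    · rw [hF1 η σ hs.symm _ hz' x hx, hF1 σ η hs ζ hz x hx]
    · rw [hF2 η σ hs.symm _ hz' x hx, hz x hx]
  have hmem : ∀ σ η : Col adj k, Agr B σ η → ∀ ζ ∈ cls A σ, F σ η ζ ∈ cls A η := by
    intro σ η hs ζ hz
    rw [mem_cls] at *
    exact fun x hx => (hF2 σ η hs ζ hz x hx).symm
  have hf : ∀ ζ ∈ cls A σ, f ζ = f (F σ η ζ) := by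
    intro ζ hz
    rw [mem_cls] at hz
    apply hB
    intro x hx
    by_cases hxA : x ∈ A
    · rw [hF1 σ η hs ζ hz x hxA]
    · rw [hF2 σ η hs ζ hz x hxA, ← hs x hx, hz x hxA]
  have hsum : ∑ ζ ∈ cls A σ, f ζ = ∑ ζ ∈ cls A η, f ζ :=
    Finset.sum_nbij' (F σ η) (F η σ) (hmem σ η hs) (hmem η σ hs.symm)
      (fun ζ hz => hval σ η hs ζ (mem_cls.1 hz))
      (fun ζ hz => hval η σ hs.symm ζ (mem_cls.1 hz)) hf
  have hcard : (cls A σ).card = (cls A η).card :=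
    Finset.card_nbij' (F σ η) (F η σ) (hmem σ η hs) (hmem η σ hs.symm)
      (fun ζ hz => hval σ η hs ζ (mem_cls.1 hz))
      (fun ζ hz => hval η σ hs.symm ζ (mem_cls.1 hz))
  unfold TreeCol.Pr
  rw [hsum, hcard]

/-- Averages over separated sets factor. -/
lemma Pr_union {A B : Finset E} (h : Sep adj A B) (f : Col adj k → ℝ) :
    Pr (A ∪ B) f = Pr A (Pr B f) := by
  apply Pr_unique
  · exact (inv_Pr A _).union h (Inv.Pr h (inv_Pr B f))
  · intro g hg
    rw [sum_mul_Pr (hg.mono subset_union_left), sum_mul_Pr (hg.mono subset_union_right)]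

lemma Pr_comm {A B : Finset E} (h : Sep adj A B) (f : Col adj k → ℝ) :
    Pr A (Pr B f) = Pr B (Pr A f) := by
  rw [← Pr_union h, Finset.union_comm, Pr_union h.symm]

lemma En_Pr_sep {A B : Finset E} (h : Sep adj A B) (f : Col adj k → ℝ) :
    En B (Pr A f) ≤ En B f := by
  have : ∀ σ, Pr A f σ - Pr B (Pr A f) σ = Pr A (fun σ => f σ - Pr B f σ) σ := by
    intro σ; rw [Pr_sub, Pr_comm h]
  unfold En
  simp_rw [this]
  exact sum_Pr_sq_le A _

lemma En_union_le {A B : Finset E} (h : Sep adj A B) (f : Col adj k → ℝ) :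
    En (A ∪ B) f ≤ En A f + En B f := by
  rw [En_split (subset_union_left (s₁ := A) (s₂ := B))]
  have : En (A ∪ B) (Pr A f) = En B (Pr A f) := by
    rw [En_eq, En_eq, Pr_Pr_of_subset subset_union_left, Pr_union h, Pr_comm h]
  rw [this]
  linarith [En_Pr_sep h f]

/-- Tensorization of the variance over a family of pairwise separated sets. -/
lemma En_biUnion_le {ι : Type} (S : Finset ι) (A : ι → Finset E)
    (h : ∀ i ∈ S, ∀ j ∈ S, i ≠ j → Sep adj (A i) (A j)) (f : Col adj k → ℝ) :
    En (S.biUnion A) f ≤ ∑ i ∈ S, En (A i) f := by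
  induction S using Finset.induction_on with
  | empty => simp [En_empty]
  | insert a S ha ih =>
    rw [Finset.biUnion_insert, Finset.sum_insert ha]
    have hsep : Sep adj (A a) (S.biUnion A) := by
      intro x hx y hy
      obtain ⟨j, hj, hy⟩ := Finset.mem_biUnion.1 hy
      exact h a (mem_insert_self _ _) j (mem_insert_of_mem hj)
        (by rintro rfl; exact ha hj) x hx y hy
    have := ih (fun i hi j hj => h i (mem_insert_of_mem hi) j (mem_insert_of_mem hj))
    linarith [En_union_le hsep f]

/-- Averaging over `D₁ ∪ D₂`, with `D₁ ⊆ B` and `D₂` separated from `B`, does not increase the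
variance over `B`. -/
lemma En_Pr_le' {B D D₁ D₂ : Finset E} (hD : D = D₂ ∪ D₁) (h1 : D₁ ⊆ B) (h2 : Sep adj D₂ B)
    (f : Col adj k → ℝ) : En B (Pr D f) ≤ En B f := by
  rw [hD, Pr_union (h2.mono (Finset.Subset.refl _) h1)]
  exact (En_Pr_sep h2 _).trans (En_Pr_le h1 f)

end Framework

end TreeCol

/-! ### Colour swaps on anchored sets -/

namespace TreeCol

section Swaps

set_option linter.unusedSectionVars false

variable {E : Type} [Fintype E] {adj : E → E → Prop} [hsy : Std.Symm adj] {k : ℕ}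

/-- `A` is anchored at its element `r` if every outside neighbour of `A` is a neighbour of `r`.
In this case a permutation of colours inside `A` only has to respect the constraints at `r`. -/
structure Anch (adj : E → E → Prop) (A : Finset E) (r : E) : Prop where
  mem : r ∈ A
  bd : ∀ x ∈ A, ∀ y, y ∉ A → adj x y → adj r y

/-- The colours that the colouring outside `A` leaves available at `r`. -/
noncomputable def Lst (A : Finset E) (r : E) (σ : Col adj k) : Finset (Fin k) :=
  univ.filter fun b => ∀ y, y ∉ A → adj r y → σ.1 y ≠ b

lemma mem_Lst {A : Finset E} {r : E} {σ : Col adj k} {b : Fin k} :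
    b ∈ Lst A r σ ↔ ∀ y, y ∉ A → adj r y → σ.1 y ≠ b := by simp [Lst]

lemma Lst_congr {A : Finset E} {r : E} {σ η : Col adj k} (h : Agr A σ η) :
    Lst A r σ = Lst A r η := by
  ext b; simp only [mem_Lst]
  exact forall_congr' fun y => forall_congr' fun hy => by rw [h y hy]

lemma root_mem_Lst (A : Finset E) (r : E) (σ : Col adj k) : σ.1 r ∈ Lst A r σ :=
  mem_Lst.2 fun y _ hry => (σ.2 r y hry).symm

lemma Lst_card_pos (A : Finset E) (r : E) (σ : Col adj k) : (0 : ℝ) < (Lst A r σ).card := by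
  exact_mod_cast Finset.card_pos.2 ⟨_, root_mem_Lst A r σ⟩

lemma Lst_root_congr {A : Finset E} {r r' : E} (h : ∀ y, y ∉ A → (adj r y ↔ adj r' y))
    (σ : Col adj k) : Lst A r σ = Lst A r' σ := by
  ext b; simp only [mem_Lst]
  exact forall_congr' fun y => forall_congr' fun hy => by rw [h y hy]

lemma Lst_erase {A A' : Finset E} {r i : E} (hAA : A' ⊆ A) (hi' : i ∉ A')
    (hri : adj r i) (hu : ∀ y ∈ A, y ∉ A' → adj r y → y = i) (σ : Col adj k) :
    Lst A' r σ = (Lst A r σ).erase (σ.1 i) := by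
  ext b
  simp only [mem_Lst, mem_erase]
  constructor
  · intro h
    exact ⟨(h i hi' hri).symm, fun y hy => h y (fun hy' => hy (hAA hy'))⟩
  · rintro ⟨h1, h2⟩ y hy hry
    by_cases hyA : y ∈ A
    · rw [hu y hyA hy hry]; exact h1.symm
    · exact h2 y hyA hry

lemma Lst_eq_sdiff {A T : Finset E} {r : E} (hT : ∀ y, y ∈ T ↔ y ∉ A ∧ adj r y)
    (σ : Col adj k) : Lst A r σ = univ \ T.image σ.1 := by
  ext b
  simp only [mem_Lst, mem_sdiff, mem_univ, true_and, mem_image, not_exists, not_and, hT]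
  exact ⟨fun h y hy => h y hy.1 hy.2, fun h y hy hr => h y ⟨hy, hr⟩⟩

lemma le_card_Lst {A T : Finset E} {r : E} (hT : ∀ y, y ∉ A → adj r y → y ∈ T)
    (σ : Col adj k) : k ≤ (Lst A r σ).card + T.card := by
  have h : univ \ T.image σ.1 ⊆ Lst A r σ := by
    intro b hb
    simp only [mem_sdiff, mem_univ, true_and, mem_image, not_exists, not_and] at hb
    exact mem_Lst.2 fun y hy hr => hb y (hT y hy hr)
  have h1 := card_le_card h
  have h2 : (T.image σ.1).card ≤ T.card := card_image_le
  have h3 := card_sdiff_add_card_eq_card (subset_univ (T.image σ.1))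
  rw [card_univ, Fintype.card_fin] at h3
  omega

lemma card_Lst {A T : Finset E} {r : E} (hT : ∀ y, y ∈ T ↔ y ∉ A ∧ adj r y)
    (hp : ∀ x ∈ T, ∀ y ∈ T, x ≠ y → adj x y) (σ : Col adj k) :
    (Lst A r σ).card + T.card = k := by
  rw [Lst_eq_sdiff hT]
  have h2 : (T.image σ.1).card = T.card := by
    apply card_image_of_injOn
    intro x hx y hy hxy
    by_contra hne
    exact σ.2 x y (hp x hx y hy hne) hxy
  have h3 := card_sdiff_add_card_eq_card (subset_univ (T.image σ.1))
  rw [card_univ, Fintype.card_fin] at h3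
  omega

lemma swap_proper {A : Finset E} {r : E} {b : Fin k} {σ : Col adj k}
    (h : Anch adj A r ∧ b ∈ Lst A r σ) : ∀ e f : E, adj e f →
    (if e ∈ A then Equiv.swap (σ.1 r) b (σ.1 e) else σ.1 e) ≠
    (if f ∈ A then Equiv.swap (σ.1 r) b (σ.1 f) else σ.1 f) := by
  have key : ∀ e ∈ A, ∀ f, f ∉ A → adj e f → Equiv.swap (σ.1 r) b (σ.1 e) ≠ σ.1 f := by
    intro e he f hf hef heq
    have h1 := h.1.bd e he f hf hef
    have h2 : σ.1 f ≠ b := mem_Lst.1 h.2 f hf h1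
    have h3 : σ.1 f ≠ σ.1 r := (σ.2 r f h1).symm
    have h4 : Equiv.swap (σ.1 r) b (σ.1 f) = σ.1 f := Equiv.swap_apply_of_ne_of_ne h3 h2
    have h5 : σ.1 e = σ.1 f := (Equiv.swap (σ.1 r) b).injective (heq.trans h4.symm)
    exact σ.2 e f hef h5
  intro e f hef
  by_cases he : e ∈ A <;> by_cases hf : f ∈ A
  · simp only [he, hf, if_true]
    exact fun h' => σ.2 e f hef ((Equiv.swap (σ.1 r) b).injective h')
  · simp only [he, hf, if_true, if_false]; exact key e he f hf hef
  · simp only [he, hf, if_true, if_false]; exact (key f hf e he (hsy.symm _ _ hef)).symm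
  · simp only [he, hf, if_false]; exact σ.2 e f hef

/-- Give `r` the colour `b` by exchanging the colours `σ r` and `b` throughout the anchored
set `A`; nothing happens if `b` is not available at `r`. -/
noncomputable def sw (A : Finset E) (r : E) (b : Fin k) (σ : Col adj k) : Col adj k :=
  if h : Anch adj A r ∧ b ∈ Lst A r σ then
    ⟨fun x => if x ∈ A then Equiv.swap (σ.1 r) b (σ.1 x) else σ.1 x, swap_proper h⟩
  else σ

lemma sw_not_mem {A : Finset E} {r : E} {b : Fin k} {σ : Col adj k} {x : E} (hx : x ∉ A) :
    (sw A r b σ).1 x = σ.1 x := by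
  unfold sw; split_ifs <;> simp [hx]

lemma sw_agr (A : Finset E) (r : E) (b : Fin k) (σ : Col adj k) : Agr A σ (sw A r b σ) :=
  fun _ hx => (sw_not_mem hx).symm

lemma sw_mem {A : Finset E} {r : E} {b : Fin k} {σ : Col adj k} (hA : Anch adj A r)
    (hb : b ∈ Lst A r σ) {x : E} (hx : x ∈ A) :
    (sw A r b σ).1 x = Equiv.swap (σ.1 r) b (σ.1 x) := by
  unfold sw; rw [dif_pos ⟨hA, hb⟩]; simp [hx]

lemma sw_root {A : Finset E} {r : E} {b : Fin k} {σ : Col adj k} (hA : Anch adj A r)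
    (hb : b ∈ Lst A r σ) : (sw A r b σ).1 r = b := by
  rw [sw_mem hA hb hA.mem, Equiv.swap_apply_left]

lemma Lst_sw (A : Finset E) (r r' : E) (b : Fin k) (σ : Col adj k) :
    Lst A r' (sw A r b σ) = Lst A r' σ := (Lst_congr (sw_agr A r b σ)).symm

lemma sw_sw {A : Finset E} {r : E} {b : Fin k} {σ : Col adj k} (hA : Anch adj A r)
    (hb : b ∈ Lst A r σ) : sw A r (σ.1 r) (sw A r b σ) = σ := by
  apply Subtype.ext; funext x
  by_cases hx : x ∈ A
  · rw [sw_mem hA (by rw [Lst_sw]; exact root_mem_Lst A r σ) hx, sw_root hA hb, sw_mem hA hb hx,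
      Equiv.swap_comm, Equiv.swap_apply_self]
  · rw [sw_not_mem hx, sw_not_mem hx]

lemma sw_self {A : Finset E} {r : E} {σ : Col adj k} (hA : Anch adj A r) :
    sw A r (σ.1 r) σ = σ := by
  apply Subtype.ext; funext x
  by_cases hx : x ∈ A
  · rw [sw_mem hA (root_mem_Lst A r σ) hx, Equiv.swap_self]; rfl
  · rw [sw_not_mem hx]

/-- The pairs `(σ, b)` with `b` available at `r` are permuted by `(σ, b) ↦ (sw A r b σ, σ r)`. -/
lemma pair_reindex {A : Finset E} {r : E} (hA : Anch adj A r) (H : Col adj k → Fin k → ℝ) :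
    ∑ σ, ∑ b ∈ Lst A r σ, H σ b = ∑ σ, ∑ b ∈ Lst A r σ, H (sw A r b σ) (σ.1 r) := by
  rw [Finset.sum_sigma', Finset.sum_sigma']
  refine Finset.sum_bij' (fun p _ => ⟨sw A r p.2 p.1, p.1.1 r⟩)
    (fun p _ => ⟨sw A r p.2 p.1, p.1.1 r⟩) ?_ ?_ ?_ ?_ ?_
  · rintro ⟨σ, b⟩ h
    simp only [mem_sigma, mem_univ, true_and] at h ⊢
    rw [Lst_sw]; exact root_mem_Lst A r σ
  · rintro ⟨σ, b⟩ h
    simp only [mem_sigma, mem_univ, true_and] at h ⊢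
    rw [Lst_sw]; exact root_mem_Lst A r σ
  · rintro ⟨σ, b⟩ h
    simp only [mem_sigma, mem_univ, true_and] at h
    simp only [sw_sw hA h, sw_root hA h]
  · rintro ⟨σ, b⟩ h
    simp only [mem_sigma, mem_univ, true_and] at h
    simp only [sw_sw hA h, sw_root hA h]
  · rintro ⟨σ, b⟩ h
    simp only [mem_sigma, mem_univ, true_and] at h
    simp only [sw_sw hA h, sw_root hA h]

lemma sum_sw {A : Finset E} {r : E} (hA : Anch adj A r) {w : Col adj k → ℝ} (hw : Inv A w)
    (g : Col adj k → ℝ) :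
    ∑ σ, w σ * ((∑ b ∈ Lst A r σ, g (sw A r b σ)) / (Lst A r σ).card) = ∑ σ, w σ * g σ := by
  have h1 : ∀ σ : Col adj k, w σ * ((∑ b ∈ Lst A r σ, g (sw A r b σ)) / (Lst A r σ).card)
      = ∑ b ∈ Lst A r σ, w σ * (g (sw A r b σ) / (Lst A r σ).card) := by
    intro σ; rw [Finset.sum_div, Finset.mul_sum]
  simp_rw [h1]
  rw [pair_reindex hA (fun σ b => w σ * (g (sw A r b σ) / (Lst A r σ).card))]
  apply Finset.sum_congr rfl
  intro σ _
  have h2 : ∀ b ∈ Lst A r σ, w (sw A r b σ) * (g (sw A r (σ.1 r) (sw A r b σ)) /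
      (Lst A r (sw A r b σ)).card) = w σ * (g σ / (Lst A r σ).card) := by
    intro b hb
    rw [sw_sw hA hb, Lst_sw, hw _ _ (sw_agr A r b σ).symm]
  rw [Finset.sum_congr rfl h2, Finset.sum_const, nsmul_eq_mul]
  field_simp [(Lst_card_pos A r σ).ne']

/-- Resampling an anchored set, for a function that only sees the colour of the anchor: the new
colour of the anchor is uniform among the available ones. -/
lemma Pr_eq_sw {A : Finset E} {r : E} (hA : Anch adj A r) {g : Col adj k → ℝ}
    (hg : Inv (A.erase r) g) (σ : Col adj k) :
    Pr A g σ = (∑ b ∈ Lst A r σ, g (sw A r b σ)) / (Lst A r σ).card := by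
  have : Pr A g = fun σ => (∑ b ∈ Lst A r σ, g (sw A r b σ)) / (Lst A r σ).card := by
    apply Pr_unique
    · intro σ η h
      show (∑ b ∈ Lst A r σ, g (sw A r b σ)) / (Lst A r σ).card = _
      rw [Lst_congr h]
      congr 1
      apply Finset.sum_congr rfl
      intro b hb
      apply hg
      intro x hx
      by_cases hxr : x = r
      · subst hxr; rw [sw_root hA hb, sw_root hA (by rwa [Lst_congr h])]
      · have hxA : x ∉ A := fun h' => hx (mem_erase.2 ⟨hxr, h'⟩)
        rw [sw_not_mem hxA, sw_not_mem hxA, h x hxA]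
    · intro w hw; exact sum_sw hA hw g
  rw [this]

lemma sum_sw_sq_le {A : Finset E} {r : E} (hA : Anch adj A r) {w : Col adj k → ℝ} (hw : Inv A w)
    (hw0 : ∀ σ, 0 ≤ w σ) (F : Col adj k → ℝ) :
    ∑ σ, w σ * ((∑ b ∈ Lst A r σ, (F σ - F (sw A r b σ)) ^ 2) / (Lst A r σ).card)
      ≤ 4 * ∑ σ, w σ * (F σ - Pr A F σ) ^ 2 := by
  have h1 : ∀ σ : Col adj k,
      w σ * ((∑ b ∈ Lst A r σ, (F σ - F (sw A r b σ)) ^ 2) / (Lst A r σ).card)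
      ≤ 2 * (w σ * (F σ - Pr A F σ) ^ 2) + 2 * (w σ * ((∑ b ∈ Lst A r σ,
        (fun η => (F η - Pr A F η) ^ 2) (sw A r b σ)) / (Lst A r σ).card)) := by
    intro σ
    have hL := Lst_card_pos A r σ
    have h2 : ∑ b ∈ Lst A r σ, (F σ - F (sw A r b σ)) ^ 2 ≤ ∑ b ∈ Lst A r σ,
        (2 * (F σ - Pr A F σ) ^ 2 + 2 * (fun η => (F η - Pr A F η) ^ 2) (sw A r b σ)) := by
      apply Finset.sum_le_sum
      intro b _
      show _ ≤ 2 * (F σ - Pr A F σ) ^ 2 + 2 * (F (sw A r b σ) - Pr A F (sw A r b σ)) ^ 2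
      rw [← inv_Pr A F _ _ (sw_agr A r b σ)]
      nlinarith [sq_nonneg ((F σ - Pr A F σ) + (F (sw A r b σ) - Pr A F σ))]
    have h3 := mul_le_mul_of_nonneg_left (div_le_div_of_nonneg_right h2 hL.le) (hw0 σ)
    refine h3.trans (le_of_eq ?_)
    rw [Finset.sum_add_distrib, Finset.sum_const, nsmul_eq_mul, ← Finset.mul_sum]
    field_simp
  refine (Finset.sum_le_sum fun σ _ => h1 σ).trans (le_of_eq ?_)
  rw [Finset.sum_add_distrib, ← Finset.mul_sum, ← Finset.mul_sum, sum_sw hA hw (fun η => (F η - Pr A F η) ^ 2)]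
  ring

lemma sum_sw_sq_le_En {A : Finset E} {r : E} (hA : Anch adj A r) (F : Col adj k → ℝ) :
    ∑ σ : Col adj k, (∑ b ∈ Lst A r σ, (F σ - F (sw A r b σ)) ^ 2) / (Lst A r σ).card
      ≤ 4 * En A F := by
  have := sum_sw_sq_le hA (w := fun _ => 1) (fun _ _ _ => rfl) (fun _ => zero_le_one) F
  simpa [En] using this

end Swaps

end TreeCol

/-! ### Sibling subtrees: the star inequality -/

namespace TreeCol

section StarLemma

set_option linter.unusedSectionVars false

variable {E : Type} [Fintype E] {adj : E → E → Prop} [hsy : Std.Symm adj] {k : ℕ}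

/-- A star: a clique `S` of roots, each root `r` carrying a block `blk r` which is attached to the
other blocks through the roots only, and such that all blocks have the same neighbours outside
their union. In a tree, these are sibling edges together with the subtrees below them. -/
structure Star (adj : E → E → Prop) (S : Finset E) (blk : E → Finset E) : Prop where
  mem : ∀ r ∈ S, r ∈ blk r
  clq : ∀ r ∈ S, ∀ r' ∈ S, r ≠ r' → adj r r'
  disj : ∀ r ∈ S, ∀ r' ∈ S, r ≠ r' → ∀ x ∈ blk r, x ∉ blk r'
  cross : ∀ r ∈ S, ∀ r' ∈ S, r ≠ r' → ∀ x ∈ blk r, ∀ y ∈ blk r', adj x y → x = r ∧ y = r'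
  bd : ∀ r ∈ S, ∀ x ∈ blk r, ∀ y, y ∉ blk r → adj x y → ∀ s ∈ S, y ∉ blk s → adj s y

/-- The non-root elements of a star. -/
noncomputable def inner (blk : E → Finset E) (S : Finset E) : Finset E :=
  S.biUnion fun r => (blk r).erase r

variable {S : Finset E} {blk : E → Finset E}

lemma mem_inner {x : E} : x ∈ inner blk S ↔ ∃ r ∈ S, x ∈ blk r ∧ x ≠ r := by
  simp only [inner, mem_biUnion, mem_erase]
  exact exists_congr fun r => and_congr_right fun _ => and_comm

lemma Star.mono (h : Star adj S blk) {S' : Finset E} (hS : S' ⊆ S) : Star adj S' blk where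
  mem r hr := h.mem r (hS hr)
  clq r hr r' hr' := h.clq r (hS hr) r' (hS hr')
  disj r hr r' hr' := h.disj r (hS hr) r' (hS hr')
  cross r hr r' hr' := h.cross r (hS hr) r' (hS hr')
  bd r hr x hx y hy hxy r' hr' := h.bd r (hS hr) x hx y hy hxy r' (hS hr')

lemma Star.anch_blk (h : Star adj S blk) {r : E} (hr : r ∈ S) : Anch adj (blk r) r :=
  ⟨h.mem r hr, fun x hx y hy hxy => h.bd r hr x hx y hy hxy r hr hy⟩

lemma Star.anch (h : Star adj S blk) {j : E} (hj : j ∈ S) : Anch adj (S.biUnion blk) j := by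
  refine ⟨mem_biUnion.2 ⟨j, hj, h.mem j hj⟩, fun x hx y hy hxy => ?_⟩
  obtain ⟨r, hr, hxr⟩ := mem_biUnion.1 hx
  have hy' : ∀ r ∈ S, y ∉ blk r := fun r hr hyr => hy (mem_biUnion.2 ⟨r, hr, hyr⟩)
  exact h.bd r hr x hxr y (hy' r hr) hxy j hj (hy' j hj)

lemma Star.Lst_eq (h : Star adj S blk) {i j : E} (hi : i ∈ S) (hj : j ∈ S) (σ : Col adj k) :
    Lst (S.biUnion blk) i σ = Lst (S.biUnion blk) j σ :=
  Lst_root_congr (fun y hy => ⟨fun hiy => (h.anch hj).bd i (h.anch hi).mem y hy hiy,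
    fun hjy => (h.anch hi).bd j (h.anch hj).mem y hy hjy⟩) σ

lemma Star.notMem_erase (h : Star adj S blk) {i x : E} (hi : i ∈ S) (hx : x ∈ blk i) :
    x ∉ (S.erase i).biUnion blk := by
  intro hx'
  obtain ⟨r, hr, hxr⟩ := mem_biUnion.1 hx'
  exact h.disj i hi r (mem_of_mem_erase hr) (ne_of_mem_erase hr).symm x hx hxr

lemma mem_blk {i x : E} (hx : x ∈ S.biUnion blk)
    (hx' : x ∉ (S.erase i).biUnion blk) : x ∈ blk i := by
  obtain ⟨r, hr, hxr⟩ := mem_biUnion.1 hx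
  by_cases hri : r = i
  · exact hri ▸ hxr
  · exact absurd (mem_biUnion.2 ⟨r, mem_erase.2 ⟨hri, hr⟩, hxr⟩) hx'

lemma Star.Lst_erase (h : Star adj S blk) {i j : E} (hi : i ∈ S) (hj : j ∈ S) (hij : i ≠ j)
    (σ : Col adj k) :
    Lst ((S.erase i).biUnion blk) j σ = (Lst (S.biUnion blk) j σ).erase (σ.1 i) := by
  apply TreeCol.Lst_erase (biUnion_subset_biUnion_of_subset_left _ (erase_subset _ _))
    (h.notMem_erase hi (h.mem i hi)) (h.clq j hj i hi hij.symm)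
  intro y hy hy' hjy
  exact (h.cross j hj i hi hij.symm j (h.mem j hj) y (mem_blk hy hy') hjy).2

lemma Star.sep (h : Star adj S blk) {j : E} (hj : j ∈ S) :
    Sep adj ((S.erase j).biUnion blk) ((blk j).erase j) := by
  intro x hx y hy
  obtain ⟨r, hr, hxr⟩ := mem_biUnion.1 hx
  have hyj := mem_of_mem_erase hy
  have hr' := mem_of_mem_erase hr
  have hrj := ne_of_mem_erase hr
  refine ⟨fun hxy => h.disj r hr' j hj hrj x hxr (hxy ▸ hyj), fun hxy => ?_, fun hxy => ?_⟩
  · exact ne_of_mem_erase hy (h.cross r hr' j hj hrj x hxr y hyj hxy).2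
  · exact ne_of_mem_erase hy (h.cross j hj r hr' hrj.symm y hyj x hxr hxy).1

lemma Star.sep' (h : Star adj S blk) {j : E} (hj : j ∈ S) :
    Sep adj (inner blk (S.erase j)) (blk j) := by
  intro x hx y hyj
  obtain ⟨r, hr, hxr, hne⟩ := mem_inner.1 hx
  have hr' := mem_of_mem_erase hr
  have hrj := ne_of_mem_erase hr
  refine ⟨fun hxy => h.disj r hr' j hj hrj x hxr (hxy ▸ hyj), fun hxy => ?_, fun hxy => ?_⟩
  · exact hne (h.cross r hr' j hj hrj x hxr y hyj hxy).1
  · exact hne (h.cross j hj r hr' hrj.symm y hyj x hxr hxy).2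

lemma Star.inv_Pr_erase (h : Star adj S blk) {j : E} (hj : j ∈ S) {F : Col adj k → ℝ}
    (hF : Inv (inner blk S) F) :
    Inv ((S.biUnion blk).erase j) (Pr ((S.erase j).biUnion blk) F) := by
  have h1 : Inv ((blk j).erase j) F := hF.mono (subset_biUnion_of_mem (fun r => (blk r).erase r) hj)
  refine ((inv_Pr _ F).union (h.sep hj) (h1.Pr (h.sep hj))).mono ?_
  intro x hx
  rw [mem_union, mem_erase]
  by_cases hx' : x ∈ (S.erase j).biUnion blk
  · exact Or.inl hx'
  · exact Or.inr ⟨ne_of_mem_erase hx, mem_blk (mem_of_mem_erase hx) hx'⟩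

/-- The centred conditional expectation of `F` in which only the block of `j` is left exposed. -/
noncomputable def gh (blk : E → Finset E) (S : Finset E) (F : Col adj k → ℝ) (j : E)
    (σ : Col adj k) : ℝ :=
  Pr ((S.erase j).biUnion blk) F σ - Pr (S.biUnion blk) F σ

lemma erase_sub (j : E) : (S.erase j).biUnion blk ⊆ S.biUnion blk :=
  biUnion_subset_biUnion_of_subset_left _ (erase_subset _ _)

lemma gh_inv (j : E) (F : Col adj k → ℝ) : Inv ((S.erase j).biUnion blk) (gh blk S F j) :=
  (inv_Pr _ F).sub ((inv_Pr _ F).mono (erase_sub j))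

lemma Star.gh_inv' (h : Star adj S blk) {j : E} (hj : j ∈ S) {F : Col adj k → ℝ}
    (hF : Inv (inner blk S) F) : Inv ((S.biUnion blk).erase j) (gh blk S F j) :=
  (h.inv_Pr_erase hj hF).sub ((inv_Pr _ F).mono (erase_subset _ _))

lemma Pr_gh (j : E) (F : Col adj k → ℝ) (σ : Col adj k) :
    Pr (S.biUnion blk) (gh blk S F j) σ = 0 := by
  unfold gh
  rw [Pr_sub, Pr_Pr_of_subset (erase_sub j), Pr_Pr_of_superset (subset_refl _), sub_self]

lemma Star.sum_gh (h : Star adj S blk) {j : E} (hj : j ∈ S) {F : Col adj k → ℝ}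
    (hF : Inv (inner blk S) F) (σ : Col adj k) :
    ∑ b ∈ Lst (S.biUnion blk) j σ, gh blk S F j (sw (S.biUnion blk) j b σ) = 0 := by
  have h1 := Pr_eq_sw (h.anch hj) (h.gh_inv' hj hF) σ
  rw [Pr_gh] at h1
  have h2 := Lst_card_pos (S.biUnion blk) j σ
  rcases div_eq_zero_iff.1 h1.symm with h3 | h3
  · exact h3
  · exact absurd h3 h2.ne'

/-- For a function of the colour of `j` only, exposing `σ i` and averaging over the rest means
averaging over all available colours but `σ i`. -/
lemma Star.Pr_gh_erase (h : Star adj S blk) {i j : E} (hi : i ∈ S) (hj : j ∈ S) (hij : i ≠ j)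
    {F : Col adj k → ℝ} (hF : Inv (inner blk S) F) (σ : Col adj k) :
    Pr ((S.erase i).biUnion blk) (gh blk S F j) σ =
      - gh blk S F j (sw (S.biUnion blk) j (σ.1 i) σ) / ((Lst (S.biUnion blk) j σ).card - 1) := by
  have h' := h.mono (erase_subset i S)
  have hj' : j ∈ S.erase i := mem_erase.2 ⟨hij.symm, hj⟩
  have hin : σ.1 i ∈ Lst (S.biUnion blk) j σ := by
    rw [← h.Lst_eq hi hj]; exact root_mem_Lst _ _ _
  rw [Pr_eq_sw (h'.anch hj') ((h.gh_inv' hj hF).mono (erase_subset_erase j (erase_sub i))),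
    h.Lst_erase hi hj hij]
  have h1 : ∀ b ∈ (Lst (S.biUnion blk) j σ).erase (σ.1 i),
      gh blk S F j (sw ((S.erase i).biUnion blk) j b σ)
        = gh blk S F j (sw (S.biUnion blk) j b σ) := by
    intro b hb
    apply h.gh_inv' hj hF
    intro x hx
    by_cases hxj : x = j
    · subst hxj
      rw [sw_root (h.anch hj) (mem_of_mem_erase hb), sw_root (h'.anch hj')]
      rwa [h.Lst_erase hi hj hij]
    · have hxA : x ∉ S.biUnion blk := fun h' => hx (mem_erase.2 ⟨hxj, h'⟩)
      rw [sw_not_mem hxA, sw_not_mem (fun h' => hxA (erase_sub i h'))]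
  rw [Finset.sum_congr rfl h1]
  have h2 := h.sum_gh hj hF σ
  rw [← Finset.add_sum_erase _ _ hin] at h2
  rw [eq_neg_of_add_eq_zero_right h2, card_erase_of_mem hin, Nat.cast_sub (card_pos.2 ⟨_, hin⟩),
    Nat.cast_one]

lemma Star.gh_sw_sw (h : Star adj S blk) {i j : E} (hj : j ∈ S)
    {F : Col adj k → ℝ} (hF : Inv (inner blk S) F) (σ : Col adj k) {b c : Fin k}
    (hb : b ∈ Lst (S.biUnion blk) j σ) :
    gh blk S F j (sw (S.biUnion blk) j b (sw (S.biUnion blk) i c σ))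
      = gh blk S F j (sw (S.biUnion blk) j b σ) := by
  apply h.gh_inv' hj hF
  intro x hx
  by_cases hxj : x = j
  · subst hxj
    rw [sw_root (h.anch hj) hb, sw_root (h.anch hj) (by rwa [Lst_sw])]
  · have hxA : x ∉ S.biUnion blk := fun h' => hx (mem_erase.2 ⟨hxj, h'⟩)
    rw [sw_not_mem hxA, sw_not_mem hxA, sw_not_mem hxA]

/-- For distinct `i, j ∈ S`, minus the inner product of `gh i` and `gh j` (see `Star.inner_gh`).
The double sum over `i` and `j` is a nonnegative quadratic form. -/
noncomputable def Zij (blk : E → Finset E) (S : Finset E) (F : Col adj k → ℝ) (L : Col adj k →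
    Finset (Fin k)) (i j : E) : ℝ :=
  ∑ σ : Col adj k, 1 / (((L σ).card : ℝ) * ((L σ).card - 1)) * ∑ b ∈ L σ,
    gh blk S F i (sw (S.biUnion blk) i b σ) * gh blk S F j (sw (S.biUnion blk) j b σ)

lemma Star.inner_gh (h : Star adj S blk) {i j : E} (hi : i ∈ S) (hj : j ∈ S) (hij : i ≠ j)
    {F : Col adj k → ℝ} (hF : Inv (inner blk S) F) {L : Col adj k → Finset (Fin k)}
    (hL : ∀ σ, ∀ i ∈ S, Lst (S.biUnion blk) i σ = L σ) :
    ∑ σ, gh blk S F i σ * gh blk S F j σ = - Zij blk S F L i j := by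
  rw [← sum_mul_Pr (gh_inv i F) (gh blk S F j)]
  have hw : Inv (S.biUnion blk) (fun σ : Col adj k => 1 / (((L σ).card : ℝ) - 1)) := by
    intro σ η hs
    show 1 / (((L σ).card : ℝ) - 1) = 1 / (((L η).card : ℝ) - 1)
    rw [← hL σ i hi, ← hL η i hi, Lst_congr hs]
  have h1 := sum_sw (h.anch hi) hw
    (fun σ => gh blk S F i σ * gh blk S F j (sw (S.biUnion blk) j (σ.1 i) σ))
  have h2 : ∑ σ, gh blk S F i σ * Pr ((S.erase i).biUnion blk) (gh blk S F j) σ =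
      - ∑ σ : Col adj k, 1 / (((L σ).card : ℝ) - 1) *
        (gh blk S F i σ * gh blk S F j (sw (S.biUnion blk) j (σ.1 i) σ)) := by
    rw [← Finset.sum_neg_distrib]
    apply Finset.sum_congr rfl
    intro σ _
    rw [h.Pr_gh_erase hi hj hij hF, hL σ j hj]
    ring
  rw [h2, ← h1]
  unfold Zij
  congr 1
  apply Finset.sum_congr rfl
  intro σ _
  rw [hL σ i hi]
  have h3 : ∀ b ∈ L σ, gh blk S F i (sw (S.biUnion blk) i b σ) *
      gh blk S F j (sw (S.biUnion blk) j ((sw (S.biUnion blk) i b σ).1 i)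
        (sw (S.biUnion blk) i b σ)) = gh blk S F i (sw (S.biUnion blk) i b σ) *
          gh blk S F j (sw (S.biUnion blk) j b σ) := by
    intro b hb
    rw [sw_root (h.anch hi) (by rwa [hL σ i hi]), h.gh_sw_sw hj hF σ (by rwa [hL σ j hj])]
  rw [Finset.sum_congr rfl h3, one_div, one_div, mul_inv, div_eq_mul_inv]
  ring

lemma Star.norm_gh (h : Star adj S blk) {i : E} (hi : i ∈ S)
    {F : Col adj k → ℝ} {L : Col adj k → Finset (Fin k)}
    (hL : ∀ σ, ∀ i ∈ S, Lst (S.biUnion blk) i σ = L σ)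
    (hc : ∀ σ, S.card + 1 ≤ (L σ).card) :
    S.card * Zij blk S F L i i ≤ ∑ σ, gh blk S F i σ ^ 2 := by
  have h1 := sum_sw (h.anch hi) (w := fun _ => 1) (fun _ _ _ => rfl)
    (fun σ => gh blk S F i σ ^ 2)
  simp only [one_mul] at h1
  rw [← h1]
  unfold Zij
  rw [Finset.mul_sum]
  apply Finset.sum_le_sum
  intro σ _
  rw [hL σ i hi]
  have h2 : ((S.card : ℝ) + 1) ≤ (L σ).card := by exact_mod_cast hc σ
  have h3 : (0 : ℝ) < S.card := by exact_mod_cast card_pos.2 ⟨i, hi⟩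
  have h4 : (0 : ℝ) ≤ ∑ b ∈ L σ, gh blk S F i (sw (S.biUnion blk) i b σ) ^ 2 :=
    Finset.sum_nonneg fun _ _ => sq_nonneg _
  simp_rw [← pow_two]
  rw [← mul_assoc, div_eq_mul_inv _ ((L σ).card : ℝ), mul_comm _ ((L σ).card : ℝ)⁻¹]
  apply mul_le_mul_of_nonneg_right _ h4
  have h5 : (0 : ℝ) < (L σ).card := by linarith
  have h6 : (0 : ℝ) < (L σ).card - 1 := by linarith
  rw [mul_one_div, inv_eq_one_div, div_le_div_iff₀ (by positivity) h5]
  nlinarith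

lemma Zsum_nonneg (F : Col adj k → ℝ) {L : Col adj k → Finset (Fin k)}
    (hc : ∀ σ, 1 ≤ (L σ).card) : 0 ≤ ∑ i ∈ S, ∑ j ∈ S, Zij blk S F L i j := by
  have : ∑ i ∈ S, ∑ j ∈ S, Zij blk S F L i j = ∑ σ : Col adj k,
      1 / (((L σ).card : ℝ) * ((L σ).card - 1)) * ∑ b ∈ L σ,
        (∑ i ∈ S, gh blk S F i (sw (S.biUnion blk) i b σ)) ^ 2 := by
    unfold Zij
    have h1 : ∀ i ∈ S, ∑ j ∈ S, ∑ σ : Col adj k, 1 / (((L σ).card : ℝ) * ((L σ).card - 1)) *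
        ∑ b ∈ L σ, gh blk S F i (sw (S.biUnion blk) i b σ) *
          gh blk S F j (sw (S.biUnion blk) j b σ) = ∑ σ : Col adj k, ∑ j ∈ S,
          1 / (((L σ).card : ℝ) * ((L σ).card - 1)) *
        ∑ b ∈ L σ, gh blk S F i (sw (S.biUnion blk) i b σ) *
          gh blk S F j (sw (S.biUnion blk) j b σ) := fun i _ => Finset.sum_comm
    rw [Finset.sum_congr rfl h1, Finset.sum_comm]
    apply Finset.sum_congr rfl
    intro σ _
    simp_rw [← Finset.mul_sum]
    congr 1
    simp_rw [pow_two, Finset.sum_mul_sum]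
    rw [Finset.sum_comm (s := L σ)]
    apply Finset.sum_congr rfl
    intro i _
    exact Finset.sum_comm
  rw [this]
  refine Finset.sum_nonneg fun σ _ => mul_nonneg ?_ (Finset.sum_nonneg fun _ _ => sq_nonneg _)
  have : (1 : ℝ) ≤ (L σ).card := by exact_mod_cast hc σ
  exact one_div_nonneg.2 (mul_nonneg (by linarith) (by linarith))

/-- Near-orthogonality of the first-order components of `F`. -/
lemma Star.sum_norm_gh_le (h : Star adj S blk) (hne : S.Nonempty) {F : Col adj k → ℝ}
    (hF : Inv (inner blk S) F)
    (hc : ∀ σ : Col adj k, ∀ i ∈ S, S.card + 1 ≤ (Lst (S.biUnion blk) i σ).card) :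
    S.card * ∑ i ∈ S, ∑ σ, gh blk S F i σ ^ 2 ≤ (S.card + 1) * En (S.biUnion blk) F := by
  obtain ⟨r, hr⟩ := hne
  set L : Col adj k → Finset (Fin k) := Lst (S.biUnion blk) r with hLdef
  have hL : ∀ σ, ∀ i ∈ S, Lst (S.biUnion blk) i σ = L σ := fun σ i hi => h.Lst_eq hi hr σ
  have hcL : ∀ σ, S.card + 1 ≤ (L σ).card := fun σ => hc σ r hr
  set s : ℝ := (S.card : ℝ) with hs
  have hs0 : 0 < s := by rw [hs]; exact_mod_cast card_pos.2 ⟨r, hr⟩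
  set N : E → ℝ := fun i => ∑ σ, gh blk S F i σ ^ 2 with hN
  have hN2 : ∑ σ, (∑ i ∈ S, gh blk S F i σ) ^ 2 ≤ ∑ i ∈ S, (N i + Zij blk S F L i i) := by
    have h1 : ∑ σ, (∑ i ∈ S, gh blk S F i σ) ^ 2
        = ∑ i ∈ S, ∑ j ∈ S, ∑ σ, gh blk S F i σ * gh blk S F j σ := by
      simp_rw [pow_two, Finset.sum_mul_sum]
      rw [Finset.sum_comm]
      apply Finset.sum_congr rfl
      intro i _
      exact Finset.sum_comm
    have h2 : ∀ i ∈ S, ∀ j ∈ S, ∑ σ, gh blk S F i σ * gh blk S F j σ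
        = - Zij blk S F L i j + if i = j then N i + Zij blk S F L i i else 0 := by
      intro i hi j hj
      split_ifs with hij
      · subst hij
        simp only [hN, pow_two]; ring
      · rw [h.inner_gh hi hj hij hF hL, add_zero]
    rw [h1, Finset.sum_congr rfl fun i hi => Finset.sum_congr rfl (h2 i hi)]
    simp_rw [Finset.sum_add_distrib, Finset.sum_neg_distrib]
    have h3 := Zsum_nonneg (S := S) (blk := blk) F (L := L) (fun σ => by have := hcL σ; omega)
    have h4 : ∑ i ∈ S, ∑ j ∈ S, (if i = j then N i + Zij blk S F L i i else 0)
        = ∑ i ∈ S, (N i + Zij blk S F L i i) := by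
      apply Finset.sum_congr rfl
      intro i hi
      rw [Finset.sum_ite_eq S i, if_pos hi]
    rw [h4, Finset.sum_add_distrib]
    linarith
  have hZ : s * ∑ i ∈ S, Zij blk S F L i i ≤ ∑ i ∈ S, N i := by
    rw [Finset.mul_sum]
    exact Finset.sum_le_sum fun i hi => h.norm_gh hi hL hcL
  have hcross : ∑ σ, (F σ - Pr (S.biUnion blk) F σ) * (∑ i ∈ S, gh blk S F i σ) = ∑ i ∈ S, N i := by
    simp_rw [Finset.mul_sum]
    rw [Finset.sum_comm]
    apply Finset.sum_congr rfl
    intro i hi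
    have h1 := sum_mul_Pr (gh_inv (S := S) (blk := blk) i F)
      (fun σ => F σ - Pr (S.biUnion blk) F σ)
    simp only [hN]
    rw [Finset.sum_congr rfl fun σ _ => mul_comm _ _, ← h1]
    apply Finset.sum_congr rfl
    intro σ _
    rw [Pr_sub, Pr_Pr_of_superset (erase_sub i), pow_two]
    rfl
  have hsq : 0 ≤ ∑ σ, ((s + 1) * (F σ - Pr (S.biUnion blk) F σ) -
      s * ∑ i ∈ S, gh blk S F i σ) ^ 2 := Finset.sum_nonneg fun _ _ => sq_nonneg _
  have hex : ∑ σ, ((s + 1) * (F σ - Pr (S.biUnion blk) F σ) -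
      s * ∑ i ∈ S, gh blk S F i σ) ^ 2 = (s + 1) ^ 2 * En (S.biUnion blk) F
        - 2 * s * (s + 1) * ∑ i ∈ S, N i + s ^ 2 * ∑ σ, (∑ i ∈ S, gh blk S F i σ) ^ 2 := by
    rw [← hcross]
    unfold En
    rw [Finset.mul_sum, Finset.mul_sum, Finset.mul_sum, ← Finset.sum_sub_distrib,
      ← Finset.sum_add_distrib]
    apply Finset.sum_congr rfl
    intro σ _
    ring
  rw [hex] at hsq
  rw [Finset.sum_add_distrib] at hN2
  have h5 := mul_le_mul_of_nonneg_left hN2 (sq_nonneg s)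
  have h6 := mul_le_mul_of_nonneg_left hZ hs0.le
  have h7 : (s + 1) * (s * ∑ i ∈ S, N i) ≤ (s + 1) * ((s + 1) * En (S.biUnion blk) F) := by
    nlinarith
  exact le_of_mul_le_mul_left h7 (by linarith)

/-- The star inequality for functions of the colours of the roots, by induction on the number of
blocks: removing one block at a time and averaging over the removed block, with the loss controlled
by the near-orthogonality of the first-order components. -/
lemma Star.En_le_aux (F : Col adj k → ℝ) : ∀ (n : ℕ) (S : Finset E), S.card = n →
    Star adj S blk → Inv (inner blk S) F →
    (∀ σ : Col adj k, ∀ i ∈ S, S.card + 1 ≤ (Lst (S.biUnion blk) i σ).card) →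
    n * En (S.biUnion blk) F ≤ (if n ≤ 1 then 1 else 4 * ((n : ℝ) - 1)) * ∑ i ∈ S, En (blk i) F := by
  intro n
  induction n with
  | zero =>
    intro S hS _ _ _
    rw [card_eq_zero] at hS
    subst hS
    simp
  | succ n ih =>
    intro S hS h hF hc
    rcases Nat.eq_zero_or_pos n with hn | hn
    · subst hn
      obtain ⟨r, rfl⟩ := card_eq_one.1 hS
      simp
    have hne : S.Nonempty := card_pos.1 (by omega)
    have h1 := h.sum_norm_gh_le hne hF hc
    have hsplit : ∀ i ∈ S, En (S.biUnion blk) F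
        = En ((S.erase i).biUnion blk) F + ∑ σ, gh blk S F i σ ^ 2 := by
      intro i _
      rw [En_split (erase_sub i) F, En_Pr (erase_sub i)]
      rfl
    have hih : ∀ i ∈ S, n * En ((S.erase i).biUnion blk) F
        ≤ (if n ≤ 1 then 1 else 4 * ((n : ℝ) - 1)) * (∑ j ∈ S, En (blk j) F - En (blk i) F) := by
      intro i hi
      have hcard : (S.erase i).card = n := by rw [card_erase_of_mem hi, hS]; omega
      have h2 := ih (S.erase i) hcard (h.mono (erase_subset _ _))
        (hF.mono (biUnion_subset_biUnion_of_subset_left _ (erase_subset _ _))) ?_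
      · rwa [Finset.sum_erase_eq_sub hi] at h2
      · intro σ j hj
        have hj' := mem_of_mem_erase hj
        have hin : σ.1 i ∈ Lst (S.biUnion blk) j σ := by
          rw [← h.Lst_eq hi hj']; exact root_mem_Lst _ _ _
        rw [h.Lst_erase hi hj' (ne_of_mem_erase hj).symm, card_erase_of_mem hin]
        have := hc σ j hj'
        omega
    have hsum1 := Finset.sum_congr rfl hsplit
    rw [Finset.sum_const, nsmul_eq_mul, Finset.sum_add_distrib] at hsum1
    have hsum2 := Finset.sum_le_sum hih
    rw [← Finset.mul_sum, ← Finset.mul_sum, Finset.sum_sub_distrib, Finset.sum_const,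
      nsmul_eq_mul] at hsum2
    rw [hS] at h1 hsum1 hsum2
    set X := ∑ i ∈ S, En ((S.erase i).biUnion blk) F
    set Y := ∑ i ∈ S, ∑ σ, gh blk S F i σ ^ 2
    set e := En (S.biUnion blk) F with he
    set T := ∑ i ∈ S, En (blk i) F with hT
    have hT0 : 0 ≤ T := Finset.sum_nonneg fun _ _ => En_nonneg _ _
    have he0 : 0 ≤ e := En_nonneg _ _
    rw [if_neg (by omega)]
    have hn' : (1 : ℝ) ≤ n := by exact_mod_cast hn
    push_cast at *
    by_cases hn1 : n ≤ 1
    · have : n = 1 := by omega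
      subst this
      simp only [le_refl, if_true] at hsum2
      push_cast at *
      linarith
    · rw [if_neg hn1] at hsum2
      have hn2 : (2 : ℝ) ≤ n := by exact_mod_cast (by omega : 2 ≤ n)
      have hX : X ≤ 4 * ((n : ℝ) - 1) * T := by
        have : (n : ℝ) * X ≤ n * (4 * ((n : ℝ) - 1) * T) := by linarith
        exact le_of_mul_le_mul_left this (by linarith)
      set m : ℝ := (n : ℝ)
      have hkey : ((m + 1) * (m + 1) - (m + 2)) * e ≤ (m + 1) * (4 * (m - 1) * T) := by
        have := mul_le_mul_of_nonneg_left hX (by linarith : (0 : ℝ) ≤ m + 1)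
        have h4 := congrArg (fun z => (m + 1) * z) hsum1
        clear_value m
        nlinarith
      have hpos : 0 < (m + 1) * (m + 1) - (m + 2) := by nlinarith
      have h8 : ((m + 1) * (m + 1) - (m + 2)) * ((m + 1) * e) ≤
          ((m + 1) * (m + 1) - (m + 2)) * (4 * (m + 1 - 1) * T) := by
        have h9 := mul_le_mul_of_nonneg_left hkey (by linarith : (0 : ℝ) ≤ m + 1)
        have h10 : (m + 1) * ((m + 1) * (4 * (m - 1) * T)) ≤
            ((m + 1) * (m + 1) - (m + 2)) * (4 * (m + 1 - 1) * T) := by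
          have : (m + 1) * ((m + 1) * (4 * (m - 1))) ≤
            ((m + 1) * (m + 1) - (m + 2)) * (4 * (m + 1 - 1)) := by nlinarith
          nlinarith [mul_le_mul_of_nonneg_right this hT0]
        linarith
      exact le_of_mul_le_mul_left h8 hpos

lemma Star.En_le_of_inv (h : Star adj S blk) {F : Col adj k → ℝ} (hF : Inv (inner blk S) F)
    (hc : ∀ σ : Col adj k, ∀ i ∈ S, S.card + 1 ≤ (Lst (S.biUnion blk) i σ).card) :
    En (S.biUnion blk) F ≤ 4 * ∑ i ∈ S, En (blk i) F := by
  have h1 := Star.En_le_aux F S.card S rfl h hF hc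
  have hT0 : 0 ≤ ∑ i ∈ S, En (blk i) F := Finset.sum_nonneg fun _ _ => En_nonneg _ _
  rcases S.eq_empty_or_nonempty with hS | hS
  · subst hS; simp [En_empty]
  have hs : (1 : ℝ) ≤ S.card := by exact_mod_cast card_pos.2 hS
  have h2 : (S.card : ℝ) * En (S.biUnion blk) F ≤ S.card * (4 * ∑ i ∈ S, En (blk i) F) := by
    refine h1.trans ?_
    split_ifs <;> nlinarith
  exact le_of_mul_le_mul_left h2 (by linarith)

lemma Star.En_blk_Pr_inner (h : Star adj S blk) (f : Col adj k → ℝ) {i : E} (hi : i ∈ S) :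
    En (blk i) (Pr (inner blk S) f) ≤ En (blk i) f := by
  refine En_Pr_le' (D₁ := (blk i).erase i) (D₂ := inner blk (S.erase i)) ?_ (erase_subset _ _)
    (h.sep' hi) f
  unfold inner
  conv_lhs => rw [← insert_erase hi]
  rw [biUnion_insert, union_comm]

lemma Star.En_inner_le (h : Star adj S blk) (f : Col adj k → ℝ) :
    En (inner blk S) f ≤ ∑ i ∈ S, En (blk i) f := by
  refine (En_biUnion_le S (fun r => (blk r).erase r) ?_ f).trans
    (Finset.sum_le_sum fun i _ => En_mono (erase_subset _ _) f)
  intro i hi j hj hij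
  exact (h.sep hj).mono (fun x hx => mem_biUnion.2 ⟨i, mem_erase.2 ⟨hij, hi⟩, mem_of_mem_erase hx⟩)
    (subset_refl _)

lemma inner_subset : inner blk S ⊆ S.biUnion blk :=
  biUnion_mono fun _ _ => erase_subset _ _

/-- Approximate tensorization over the blocks of a star with at least one spare colour. -/
lemma Star.En_le (h : Star adj S blk) (f : Col adj k → ℝ)
    (hc : ∀ σ : Col adj k, ∀ i ∈ S, S.card + 1 ≤ (Lst (S.biUnion blk) i σ).card) :
    En (S.biUnion blk) f ≤ 5 * ∑ i ∈ S, En (blk i) f := by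
  rw [En_split inner_subset f]
  have h1 := h.En_le_of_inv (inv_Pr (inner blk S) f) hc
  have h2 := Finset.sum_le_sum fun i hi => h.En_blk_Pr_inner f (i := i) hi
  have h3 := h.En_inner_le f
  linarith

end StarLemma

end TreeCol

/-! ### An edge and its neighbouring subtrees: the fan inequality -/

namespace TreeCol

section FanLemma

set_option linter.unusedSectionVars false

variable {E : Type} [Fintype E] {adj : E → E → Prop} [hsy : Std.Symm adj] {k : ℕ}

/-- A star `I` together with one more root `p`, adjacent to all roots of the star, and its block
`P`. In contrast to a star, the root `p` may have outside neighbours which the roots in `I` do not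
see. -/
structure Fan (adj : E → E → Prop) (I : Finset E) (blk : E → Finset E) (p : E) (P : Finset E) :
    Prop where
  star : Star adj I blk
  disjP : ∀ i ∈ I, ∀ x ∈ blk i, x ∉ P
  adjp : ∀ i ∈ I, adj p i
  crossP : ∀ i ∈ I, ∀ x ∈ P, ∀ y ∈ blk i, adj x y → x = p ∧ y = i
  anchP : Anch adj P p
  anchU : Anch adj (I.biUnion blk ∪ P) p
  nb : ∀ i ∈ I, ∀ y, y ∉ blk i → adj i y → y = p ∨ adj p y

variable {I : Finset E} {blk : E → Finset E} {p : E} {P : Finset E}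

lemma jensen_avg {ι : Type} (s : Finset ι) (f : ι → ℝ) :
    ((∑ i ∈ s, f i) / s.card) ^ 2 ≤ (∑ i ∈ s, f i ^ 2) / s.card := by
  rcases s.eq_empty_or_nonempty with hs | hs
  · subst hs; simp
  have h : (0 : ℝ) < s.card := by exact_mod_cast card_pos.2 hs
  rw [div_pow, div_le_div_iff₀ (by positivity) h]
  nlinarith [sq_sum_le_card_mul_sum_sq (s := s) (f := f)]

lemma Pr_sq_le (A : Finset E) (g : Col adj k → ℝ) (σ : Col adj k) :
    Pr A g σ ^ 2 ≤ Pr A (fun η => g η ^ 2) σ := jensen_avg _ _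

lemma Fan.pU (h : Fan adj I blk p P) : p ∈ I.biUnion blk ∪ P := h.anchU.mem

lemma Fan.p_notMem (h : Fan adj I blk p P) {i : E} (hi : i ∈ I) : p ∉ blk i :=
  fun hp => h.disjP i hi p hp h.anchP.mem

lemma Fan.blk_sub {i : E} (hi : i ∈ I) : blk i ⊆ I.biUnion blk ∪ P :=
  (subset_biUnion_of_mem blk hi).trans subset_union_left

/-- A swap on the whole fan maps resampling classes of the star to resampling classes. -/
lemma Fan.Pr_comp (h : Fan adj I blk p P) (F : Col adj k → ℝ) {b : Fin k} {σ : Col adj k}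
    (hb : b ∈ Lst (I.biUnion blk ∪ P) p σ) :
    Pr (I.biUnion blk) F (sw (I.biUnion blk ∪ P) p b σ)
      = Pr (I.biUnion blk) (fun η => F (sw (I.biUnion blk ∪ P) p b η)) σ := by
  have hpI : p ∉ I.biUnion blk := by
    intro hp
    obtain ⟨i, hi, hpi⟩ := mem_biUnion.1 hp
    exact h.p_notMem hi hpi
  have key : ∀ (τ η : Col adj k) (c : Fin k), c ∈ Lst (I.biUnion blk ∪ P) p τ →
      Agr (I.biUnion blk) τ η → Agr (I.biUnion blk) (sw (I.biUnion blk ∪ P) p c τ)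
        (sw (I.biUnion blk ∪ P) p c η) := by
    intro τ η c hc hs x hx
    have hc' : c ∈ Lst (I.biUnion blk ∪ P) p η := by
      rwa [← Lst_congr (hs.mono subset_union_left)]
    by_cases hxU : x ∈ I.biUnion blk ∪ P
    · rw [sw_mem h.anchU hc hxU, sw_mem h.anchU hc' hxU, hs x hx, hs p hpI]
    · rw [sw_not_mem hxU, sw_not_mem hxU, hs x hx]
  have hL : ∀ η, Agr (I.biUnion blk) σ η → b ∈ Lst (I.biUnion blk ∪ P) p η := fun η hs => by
    rwa [← Lst_congr (hs.mono subset_union_left)]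
  have hσ := sw_sw h.anchU hb
  have hbij : ∀ G : Col adj k → ℝ, ∑ η ∈ cls (I.biUnion blk) (sw (I.biUnion blk ∪ P) p b σ), G η
      = ∑ η ∈ cls (I.biUnion blk) σ, G (sw (I.biUnion blk ∪ P) p b η) := by
    intro G
    symm
    refine Finset.sum_bij' (fun η _ => sw (I.biUnion blk ∪ P) p b η)
      (fun η _ => sw (I.biUnion blk ∪ P) p (σ.1 p) η) ?_ ?_ ?_ ?_ ?_
    · intro η hη
      exact mem_cls.2 (key σ η b hb (mem_cls.1 hη))
    · intro η hη
      have h1 := key _ η (σ.1 p) (by rw [Lst_sw]; exact root_mem_Lst _ _ _) (mem_cls.1 hη)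
      rw [hσ] at h1
      exact mem_cls.2 h1
    · intro η hη
      have h1 := sw_sw h.anchU (hL η (mem_cls.1 hη))
      rwa [← mem_cls.1 hη p hpI] at h1
    · intro η hη
      have h1 : σ.1 p ∈ Lst (I.biUnion blk ∪ P) p η := by
        rw [← Lst_congr ((mem_cls.1 hη).mono subset_union_left), Lst_sw]
        exact root_mem_Lst _ _ _
      have h2 := sw_sw h.anchU h1
      rwa [← mem_cls.1 hη p hpI, sw_root h.anchU hb] at h2
    · intro η _; rfl
  have hcard := hbij (fun _ => 1)
  simp only [sum_const, nsmul_eq_mul, mul_one] at hcard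
  unfold Pr
  rw [hbij F, hcard]

lemma Fan.sepI (h : Fan adj I blk p P) : Sep adj (I.biUnion blk) (P.erase p) := by
  intro x hx y hy
  obtain ⟨i, hi, hxi⟩ := mem_biUnion.1 hx
  refine ⟨fun hxy => h.disjP i hi x hxi (hxy ▸ mem_of_mem_erase hy), fun hxy => ?_, fun hxy => ?_⟩
  · exact ne_of_mem_erase hy (h.crossP i hi y (mem_of_mem_erase hy) x hxi (hsy.symm _ _ hxy)).1
  · exact ne_of_mem_erase hy (h.crossP i hi y (mem_of_mem_erase hy) x hxi hxy).1

lemma Fan.sepP (h : Fan adj I blk p P) : Sep adj (inner blk I) P := by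
  intro x hx y hy
  obtain ⟨i, hi, hxi, hne⟩ := mem_inner.1 hx
  refine ⟨fun hxy => h.disjP i hi x hxi (hxy ▸ hy), fun hxy => ?_, fun hxy => ?_⟩
  · exact hne (h.crossP i hi y hy x hxi (hsy.symm _ _ hxy)).2
  · exact hne (h.crossP i hi y hy x hxi hxy).2

/-- The variance of the star average is bounded by the effect of recolouring `p` by swaps. -/
lemma Fan.u_le (h : Fan adj I blk p P) {F : Col adj k → ℝ}
    (hF : Inv (inner blk I ∪ P.erase p) F) :
    En (I.biUnion blk ∪ P) (Pr (I.biUnion blk) F) ≤ ∑ σ : Col adj k,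
      (∑ b ∈ Lst (I.biUnion blk ∪ P) p σ, (F σ - F (sw (I.biUnion blk ∪ P) p b σ)) ^ 2)
        / (Lst (I.biUnion blk ∪ P) p σ).card := by
  set U := I.biUnion blk ∪ P with hU
  set u := Pr (I.biUnion blk) F with hu
  have hinv : Inv (U.erase p) u := by
    refine ((inv_Pr _ F).union h.sepI ((hF.mono subset_union_right).Pr h.sepI)).mono ?_
    intro x hx
    have hx1 := mem_of_mem_erase hx
    rw [hU, mem_union] at hx1
    rcases hx1 with hx1 | hx1
    · exact mem_union_left _ hx1
    · exact mem_union_right _ (mem_erase.2 ⟨ne_of_mem_erase hx, hx1⟩)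
  have h1 : En U u ≤ ∑ σ : Col adj k, (∑ b ∈ Lst U p σ, (u σ - u (sw U p b σ)) ^ 2)
        / (Lst U p σ).card := by
    unfold En
    apply Finset.sum_le_sum
    intro σ _
    rw [Pr_eq_sw h.anchU hinv σ]
    refine le_trans (le_of_eq ?_) (jensen_avg _ _)
    rw [Finset.sum_sub_distrib, Finset.sum_const, nsmul_eq_mul, sub_div,
      mul_div_cancel_left₀ _ (Lst_card_pos U p σ).ne']
  refine h1.trans ?_
  have h2 : ∀ G : Col adj k → Fin k → ℝ, ∑ σ : Col adj k, (∑ b ∈ Lst U p σ, G σ b)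
        / (Lst U p σ).card = ∑ b : Fin k, ∑ σ : Col adj k,
          (if b ∈ Lst U p σ then 1 / ((Lst U p σ).card : ℝ) else 0) * G σ b := by
    intro G
    rw [Finset.sum_comm]
    apply Finset.sum_congr rfl
    intro σ _
    rw [Finset.sum_div]
    simp_rw [ite_mul, zero_mul]
    rw [← Finset.sum_filter, Finset.filter_mem_eq_inter, Finset.univ_inter]
    exact Finset.sum_congr rfl fun b _ => by ring
  rw [h2, h2]
  apply Finset.sum_le_sum
  intro b _
  have hw : Inv (I.biUnion blk)
      (fun σ : Col adj k => if b ∈ Lst U p σ then 1 / ((Lst U p σ).card : ℝ) else 0) := by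
    intro σ η hs
    show (if b ∈ Lst U p σ then 1 / ((Lst U p σ).card : ℝ) else 0) = _
    rw [Lst_congr (hs.mono subset_union_left)]
  rw [← sum_mul_Pr hw (fun σ => (F σ - F (sw U p b σ)) ^ 2)]
  apply Finset.sum_le_sum
  intro σ _
  by_cases hb : b ∈ Lst U p σ
  · rw [if_pos hb]
    apply mul_le_mul_of_nonneg_left _ (one_div_nonneg.2 (Nat.cast_nonneg _))
    rw [hu, h.Pr_comp F hb, ← Pr_sub]
    exact Pr_sq_le _ _ _
  · rw [if_neg hb, zero_mul, zero_mul]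

section Moves

variable {F : Col adj k → ℝ}

/-- Two colourings with the same colours outside the fan and at its roots have the same value. -/
lemma Fan.F_eq (_h : Fan adj I blk p P) (hF : Inv (inner blk I ∪ P.erase p) F) {σ η : Col adj k}
    (h0 : ∀ x, x ∉ I.biUnion blk ∪ P → σ.1 x = η.1 x) (hp : σ.1 p = η.1 p)
    (hI : ∀ i ∈ I, σ.1 i = η.1 i) : F σ = F η := by
  apply hF
  intro x hx
  by_cases hxU : x ∈ I.biUnion blk ∪ P
  · rw [mem_union, not_or] at hx
    rcases mem_union.1 hxU with hx1 | hx1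
    · obtain ⟨i, hi, hxi⟩ := mem_biUnion.1 hx1
      have : x = i := by
        by_contra hne
        exact hx.1 (mem_inner.2 ⟨i, hi, hxi, hne⟩)
      rw [this]; exact hI i hi
    · have : x = p := by
        by_contra hne
        exact hx.2 (mem_erase.2 ⟨hne, hx1⟩)
      rw [this]; exact hp
  · exact h0 x hxU

lemma Fan.i_notP (h : Fan adj I blk p P) {i : E} (hi : i ∈ I) : i ∉ P :=
  h.disjP i hi i (h.star.mem i hi)

lemma Fan.i_mem (h : Fan adj I blk p P) {i : E} (hi : i ∈ I) : i ∈ I.biUnion blk ∪ P :=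
  mem_union_left _ (mem_biUnion.2 ⟨i, hi, h.star.mem i hi⟩)

/-- `b` is available at `p` for the block `P` as soon as it is available for the whole fan and not
used on the roots of the star. -/
lemma Fan.mem_LP (h : Fan adj I blk p P) {σ : Col adj k} {b : Fin k}
    (hb : ∀ y, y ∉ I.biUnion blk ∪ P → adj p y → σ.1 y ≠ b)
    (hI : ∀ i ∈ I, σ.1 i ≠ b) : b ∈ Lst P p σ := by
  rw [mem_Lst]
  intro y hy hpy
  by_cases hyU : y ∈ I.biUnion blk
  · obtain ⟨i, hi, hyi⟩ := mem_biUnion.1 hyU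
    rw [(h.crossP i hi p h.anchP.mem y hyi hpy).2]
    exact hI i hi
  · exact hb y (by simp only [mem_union, not_or]; exact ⟨hyU, hy⟩) hpy

lemma Fan.LP_sub (_h : Fan adj I blk p P) (σ : Col adj k) :
    Lst P p σ ⊆ Lst (I.biUnion blk ∪ P) p σ := by
  intro b hb
  rw [mem_Lst] at hb ⊢
  exact fun y hy => hb y (fun h' => hy (mem_union_right _ h'))

lemma Fan.LP_sub_M (h : Fan adj I blk p P) (σ : Col adj k) {i : E} (hi : i ∈ I) :
    (Lst P p σ).erase (σ.1 p) ⊆ (Lst (blk i) i σ).erase (σ.1 i) := by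
  intro b hb
  rw [mem_erase, mem_Lst] at hb
  rw [mem_erase, mem_Lst]
  refine ⟨(hb.2 i (h.i_notP hi) (h.adjp i hi)).symm, fun y hy hiy => ?_⟩
  rcases h.nb i hi y hy hiy with rfl | hpy
  · exact hb.1.symm
  · by_cases hyP : y ∈ P
    · rw [(h.crossP i hi y hyP i (h.star.mem i hi) (hsy.symm _ _ hiy)).1]
      exact hb.1.symm
    · exact hb.2 y hyP hpy

lemma Fan.LP_card_le (h : Fan adj I blk p P) (σ : Col adj k) {i : E} (hi : i ∈ I) :
    (Lst P p σ).card ≤ (Lst (blk i) i σ).card := by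
  have h1 := card_le_card (h.LP_sub_M σ hi)
  rw [card_erase_of_mem (root_mem_Lst _ _ _), card_erase_of_mem (root_mem_Lst _ _ _)] at h1
  have h2 : 0 < (Lst (blk i) i σ).card := card_pos.2 ⟨_, root_mem_Lst _ _ _⟩
  omega

lemma Fan.T_other (h : Fan adj I blk p P) {σ : Col adj k} {b : Fin k}
    (hb : b ∈ Lst (I.biUnion blk ∪ P) p σ) {j : E} (hj : j ∈ I) (hjb : σ.1 j ≠ b) :
    (sw (I.biUnion blk ∪ P) p b σ).1 j = σ.1 j := by
  rw [sw_mem h.anchU hb (h.i_mem hj), Equiv.swap_apply_of_ne_of_ne _ hjb]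
  exact (σ.2 p j (h.adjp j hj)).symm

lemma Fan.T_i (h : Fan adj I blk p P) {σ : Col adj k} {i : E} (hi : i ∈ I)
    (hb : σ.1 i ∈ Lst (I.biUnion blk ∪ P) p σ) :
    (sw (I.biUnion blk ∪ P) p (σ.1 i) σ).1 i = σ.1 p := by
  rw [sw_mem h.anchU hb (h.i_mem hi), Equiv.swap_apply_right]

/-- If no root of the star has colour `b`, the swap on the fan is a swap on `P`. -/
lemma Fan.move_free (h : Fan adj I blk p P) (hF : Inv (inner blk I ∪ P.erase p) F)
    {σ : Col adj k} {b : Fin k} (hb : b ∈ Lst P p σ) :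
    F (sw (I.biUnion blk ∪ P) p b σ) = F (sw P p b σ) := by
  have hb' := h.LP_sub σ hb
  apply h.F_eq hF
  · intro x hx
    rw [sw_not_mem hx, sw_not_mem (fun h' => hx (mem_union_right _ h'))]
  · rw [sw_root h.anchU hb', sw_root h.anchP hb]
  · intro i hi
    rw [h.T_other hb' hi (mem_Lst.1 hb i (h.i_notP hi) (h.adjp i hi)), sw_not_mem (h.i_notP hi)]

lemma Fan.M_sub (h : Fan adj I blk p P) {σ : Col adj k} {i : E} (hi : i ∈ I)
    (hb : σ.1 i ∈ Lst (I.biUnion blk ∪ P) p σ) {m : Fin k}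
    (hm : m ∈ (Lst (blk i) i σ).erase (σ.1 i)) :
    m ∈ (Lst (blk i) i (sw (I.biUnion blk ∪ P) p (σ.1 i) σ)).erase (σ.1 p) := by
  rw [mem_erase, mem_Lst] at hm
  rw [mem_erase, mem_Lst]
  refine ⟨(hm.2 p (h.p_notMem hi) (hsy.symm _ _ (h.adjp i hi))).symm, fun y hy hiy => ?_⟩
  by_cases hyp : y = p
  · subst hyp
    rw [sw_root h.anchU hb]
    exact hm.1.symm
  by_cases hyP : y ∈ P
  · exact absurd (h.crossP i hi y hyP i (h.star.mem i hi) (hsy.symm _ _ hiy)).1 hyp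
  by_cases hyU : y ∈ I.biUnion blk
  · obtain ⟨j, hj, hyj⟩ := mem_biUnion.1 hyU
    have hij : i ≠ j := fun h' => hy (h' ▸ hyj)
    have := (h.star.cross i hi j hj hij i (h.star.mem i hi) y hyj hiy).2
    subst this
    rw [h.T_other hb hj (σ.2 y i (hsy.symm _ _ hiy))]
    exact hm.2 y hy hiy
  · rw [sw_not_mem (by simp only [mem_union, not_or]; exact ⟨hyU, hyP⟩)]
    exact hm.2 y hy hiy

lemma Fan.b_mem_LP (h : Fan adj I blk p P) {σ : Col adj k} {i : E} (hi : i ∈ I)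
    (hb : σ.1 i ∈ Lst (I.biUnion blk ∪ P) p σ) {m : Fin k}
    (hm : m ∈ (Lst (blk i) i σ).erase (σ.1 i)) :
    σ.1 i ∈ Lst P p (sw (blk i) i m σ) := by
  apply h.mem_LP
  · intro y hy hpy
    rw [sw_not_mem (fun h' => hy (Fan.blk_sub hi h'))]
    exact mem_Lst.1 hb y hy hpy
  · intro j hj
    by_cases hij : i = j
    · subst hij
      rw [sw_root (h.star.anch_blk hi) (mem_of_mem_erase hm)]
      exact ne_of_mem_erase hm
    · rw [sw_not_mem (fun h' => h.star.disj j hj i hi (Ne.symm hij) j (h.star.mem j hj) h')]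
      exact σ.2 j i (h.star.clq j hj i hi (Ne.symm hij))

/-- If the root `i` has colour `b`, the swap is realised by three moves: recolour the block of `i`
with `m`, then `P` with `b`, then the block of `i` with `σ p`. -/
lemma Fan.move_three (h : Fan adj I blk p P) (hF : Inv (inner blk I ∪ P.erase p) F)
    {σ : Col adj k} {i : E} (hi : i ∈ I)
    (hb : σ.1 i ∈ Lst (I.biUnion blk ∪ P) p σ) {m : Fin k}
    (hm : m ∈ (Lst (blk i) i σ).erase (σ.1 i)) :
    F (sw P p (σ.1 i) (sw (blk i) i m σ)) =
      F (sw (blk i) i m (sw (I.biUnion blk ∪ P) p (σ.1 i) σ)) := by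
  have h1 := h.b_mem_LP hi hb hm
  have h2 := mem_of_mem_erase (h.M_sub hi hb hm)
  have h3 := mem_of_mem_erase hm
  apply h.F_eq hF
  · intro x hx
    have hxi : x ∉ blk i := fun h' => hx (Fan.blk_sub hi h')
    rw [sw_not_mem (fun h' => hx (mem_union_right _ h')), sw_not_mem hxi, sw_not_mem hxi,
      sw_not_mem hx]
  · rw [sw_root h.anchP h1, sw_not_mem (h.p_notMem hi), sw_root h.anchU hb]
  · intro j hj
    rw [sw_not_mem (h.i_notP hj)]
    by_cases hij : i = j
    · subst hij
      rw [sw_root (h.star.anch_blk hi) h3, sw_root (h.star.anch_blk hi) h2]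
    · have hjb : j ∉ blk i :=
        fun h' => h.star.disj j hj i hi (Ne.symm hij) j (h.star.mem j hj) h'
      rw [sw_not_mem hjb, sw_not_mem hjb, h.T_other hb hj]
      exact σ.2 j i (h.star.clq j hj i hi (Ne.symm hij))

lemma sum_ite_le {ι : Type} [DecidableEq ι] (s : Finset ι) (a : ι) {x : ℝ} (hx : 0 ≤ x) :
    ∑ b ∈ s, (if a = b then x else 0) ≤ x := by
  rw [Finset.sum_ite_eq]; split_ifs <;> linarith

/-- The cost of the first of the three moves that recolour `p` with `b` when `σ i = b`: recolouring
the block of `i` with an intermediate colour `m`, averaged over `m`. It is zero if `σ i ≠ b`. Seen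
from the final colouring, the third move has the same form. -/
noncomputable def Kt (blk : E → Finset E) (L : Col adj k → Finset (Fin k)) (F : Col adj k → ℝ)
    (l : ℝ) (i : E) (σ : Col adj k) (b : Fin k) : ℝ :=
  if σ.1 i = b then
    (∑ m ∈ (Lst (blk i) i σ).erase (σ.1 i), (F σ - F (sw (blk i) i m σ)) ^ 2)
      / ((L σ).card * (l - 1)) else 0

/-- The cost of the second of the three moves, recolouring `P` with `b` after the block of `i` has
received the intermediate colour `m`, averaged over `m`. It is zero if `σ i ≠ b`. -/
noncomputable def Jt (blk : E → Finset E) (P : Finset E) (p : E) (L : Col adj k → Finset (Fin k))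
    (F : Col adj k → ℝ) (l : ℝ) (i : E) (σ : Col adj k) (b : Fin k) : ℝ :=
  if σ.1 i = b then
    (∑ m ∈ (Lst (blk i) i σ).erase (σ.1 i),
      (F (sw (blk i) i m σ) - F (sw P p b (sw (blk i) i m σ))) ^ 2)
      / ((L σ).card * (l - 1)) else 0

lemma Fan.sum_K (h : Fan adj I blk p P) {i : E} (hi : i ∈ I) {l : ℝ} (hl2 : 2 ≤ l)
    (hl : ∀ σ : Col adj k, ((Lst (blk i) i σ).card : ℝ) = l) (L : Col adj k → Finset (Fin k))
    (hL : ∀ σ, 1 ≤ (L σ).card) :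
    ∑ σ, ∑ b ∈ L σ, Kt blk L F l i σ b ≤ 8 * En (blk i) F := by
  have h1 := sum_sw_sq_le_En (h.star.anch_blk hi) F
  refine le_trans (b := ∑ σ, 2 * ((∑ b ∈ Lst (blk i) i σ, (F σ - F (sw (blk i) i b σ)) ^ 2) /
    (Lst (blk i) i σ).card)) ?_ (by rw [← Finset.mul_sum]; linarith)
  apply Finset.sum_le_sum
  intro σ _
  have hLs : (1 : ℝ) ≤ (L σ).card := by exact_mod_cast hL σ
  have hm0 : ∀ s : Finset (Fin k), 0 ≤ ∑ m ∈ s, (F σ - F (sw (blk i) i m σ)) ^ 2 :=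
    fun s => Finset.sum_nonneg fun _ _ => sq_nonneg _
  have hpos : 0 < ((L σ).card : ℝ) * (l - 1) := mul_pos (by linarith) (by linarith)
  unfold Kt
  refine (sum_ite_le _ _ (div_nonneg (hm0 _) hpos.le)).trans ?_
  have hle : ∑ m ∈ (Lst (blk i) i σ).erase (σ.1 i), (F σ - F (sw (blk i) i m σ)) ^ 2
      ≤ ∑ m ∈ Lst (blk i) i σ, (F σ - F (sw (blk i) i m σ)) ^ 2 :=
    Finset.sum_le_sum_of_subset_of_nonneg (erase_subset _ _) fun _ _ _ => sq_nonneg _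
  rw [hl σ, mul_div_assoc', div_le_div_iff₀ hpos (by linarith)]
  have h5 := hm0 (Lst (blk i) i σ)
  calc _ ≤ (∑ m ∈ Lst (blk i) i σ, (F σ - F (sw (blk i) i m σ)) ^ 2) * l :=
        mul_le_mul_of_nonneg_right hle (by linarith)
    _ ≤ (∑ m ∈ Lst (blk i) i σ, (F σ - F (sw (blk i) i m σ)) ^ 2) *
        (2 * ((L σ).card * (l - 1))) := mul_le_mul_of_nonneg_left (by nlinarith) h5
    _ = _ := by ring

lemma Fan.sum_J (h : Fan adj I blk p P) {i : E} (hi : i ∈ I) {l : ℝ} (hl2 : 2 ≤ l)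
    (hl : ∀ σ : Col adj k, ((Lst (blk i) i σ).card : ℝ) = l) :
    ∑ σ, ∑ b ∈ Lst (I.biUnion blk ∪ P) p σ,
      Jt blk P p (Lst (I.biUnion blk ∪ P) p) F l i σ b ≤
    ∑ σ : Col adj k, 2 / ((Lst (I.biUnion blk ∪ P) p σ).card : ℝ) *
      ((∑ b ∈ Lst P p σ, (F σ - F (sw P p b σ)) ^ 2) / (Lst P p σ).card) := by
  set U := I.biUnion blk ∪ P with hU
  set H : Col adj k → Fin k → ℝ := fun τ b =>
    (if b ∈ Lst P p τ then (F τ - F (sw P p b τ)) ^ 2 else 0) / ((Lst U p τ).card * (l - 1))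
    with hH
  have hpos : ∀ σ : Col adj k, 0 < ((Lst U p σ).card : ℝ) * (l - 1) :=
    fun σ => mul_pos (Lst_card_pos _ _ _) (by linarith)
  have hH0 : ∀ τ b, 0 ≤ H τ b := by
    intro τ b
    apply div_nonneg _ (hpos τ).le
    split_ifs
    · exact sq_nonneg _
    · exact le_refl _
  have h1 : ∀ σ : Col adj k, ∑ b ∈ Lst U p σ, Jt blk P p (Lst U p) F l i σ b ≤
      ∑ m ∈ Lst (blk i) i σ, H (sw (blk i) i m σ) (σ.1 i) := by
    intro σ
    unfold Jt
    by_cases hb : σ.1 i ∈ Lst U p σ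
    · have h2 : ∀ b ∈ Lst U p σ, (if σ.1 i = b then
          (∑ m ∈ (Lst (blk i) i σ).erase (σ.1 i),
            (F (sw (blk i) i m σ) - F (sw P p b (sw (blk i) i m σ))) ^ 2)
            / ((Lst U p σ).card * (l - 1)) else 0) = if σ.1 i = b then
          (∑ m ∈ (Lst (blk i) i σ).erase (σ.1 i),
            (F (sw (blk i) i m σ) - F (sw P p (σ.1 i) (sw (blk i) i m σ))) ^ 2)
            / ((Lst U p σ).card * (l - 1)) else 0 := by
        intro b _
        split_ifs with hib
        · rw [← hib]
        · rfl
      rw [Finset.sum_congr rfl h2]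
      refine (sum_ite_le _ _ (div_nonneg (Finset.sum_nonneg fun _ _ => sq_nonneg _)
        (hpos σ).le)).trans ?_
      refine le_trans (le_of_eq ?_) (Finset.sum_le_sum_of_subset_of_nonneg
        (erase_subset (σ.1 i) (Lst (blk i) i σ)) fun _ _ _ => hH0 _ _)
      rw [Finset.sum_div]
      apply Finset.sum_congr rfl
      intro m hm
      simp only [hH]
      rw [if_pos (h.b_mem_LP hi hb hm), ← Lst_congr ((sw_agr (blk i) i m σ).mono (Fan.blk_sub hi))]
    · refine le_trans (le_of_eq ?_) (Finset.sum_nonneg fun _ _ => hH0 _ _)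
      apply Finset.sum_eq_zero
      intro b hb'
      rw [if_neg]
      rintro rfl
      exact hb hb'
  refine (Finset.sum_le_sum fun σ _ => h1 σ).trans ?_
  rw [← pair_reindex (h.star.anch_blk hi) H]
  apply Finset.sum_le_sum
  intro σ _
  have hLP := Lst_card_pos P p σ
  have hLU := Lst_card_pos U p σ
  have hcard : ((Lst P p σ).card : ℝ) ≤ l := by
    rw [← hl σ]; exact_mod_cast h.LP_card_le σ hi
  have h3 : ∑ b ∈ Lst (blk i) i σ, H σ b ≤
      (∑ b ∈ Lst P p σ, (F σ - F (sw P p b σ)) ^ 2) / ((Lst U p σ).card * (l - 1)) := by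
    simp only [hH]
    rw [← Finset.sum_div]
    apply div_le_div_of_nonneg_right _ (hpos σ).le
    rw [← Finset.sum_filter]
    apply Finset.sum_le_sum_of_subset_of_nonneg _ fun _ _ _ => sq_nonneg _
    intro b hb
    exact (mem_filter.1 hb).2
  refine h3.trans ?_
  have h5 : 0 ≤ ∑ b ∈ Lst P p σ, (F σ - F (sw P p b σ)) ^ 2 :=
    Finset.sum_nonneg fun _ _ => sq_nonneg _
  rw [div_mul_div_comm, div_le_div_iff₀ (hpos σ) (by positivity)]
  calc _ ≤ (∑ b ∈ Lst P p σ, (F σ - F (sw P p b σ)) ^ 2) *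
        (2 * ((Lst U p σ).card * (l - 1))) := by
        apply mul_le_mul_of_nonneg_left _ h5
        nlinarith
    _ = _ := by ring

/-- A recolouring of `p` within the fan costs at most the direct swap on `P`, or the three moves
through the root `i` of colour `b`; the factor `3` is Cauchy–Schwarz. -/
lemma Fan.pointwise (h : Fan adj I blk p P) (hF : Inv (inner blk I ∪ P.erase p) F)
    {ℓ : E → ℝ} (hl2 : ∀ i ∈ I, 2 ≤ ℓ i)
    (hl : ∀ i ∈ I, ∀ σ : Col adj k, ((Lst (blk i) i σ).card : ℝ) = ℓ i)
    {L : Col adj k → Finset (Fin k)} (hL : ∀ σ, Lst (I.biUnion blk ∪ P) p σ = L σ)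
    (σ : Col adj k) {b : Fin k} (hb : b ∈ L σ) :
    (F σ - F (sw (I.biUnion blk ∪ P) p b σ)) ^ 2 / (L σ).card ≤
      (if b ∈ Lst P p σ then (F σ - F (sw P p b σ)) ^ 2 else 0) / (L σ).card +
      3 * ∑ i ∈ I, (Kt blk L F (ℓ i) i σ b + Jt blk P p L F (ℓ i) i σ b +
        Kt blk L F (ℓ i) i (sw (I.biUnion blk ∪ P) p b σ) (σ.1 p)) := by
  set U := I.biUnion blk ∪ P with hU
  have hLpos : ∀ σ, 0 < ((L σ).card : ℝ) := fun σ => by rw [← hL]; exact Lst_card_pos _ _ _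
  have hb' : b ∈ Lst U p σ := by rwa [hL]
  have hK0 : ∀ i ∈ I, ∀ τ c, 0 ≤ Kt blk L F (ℓ i) i τ c := by
    intro i hi τ c
    unfold Kt
    split_ifs
    · exact div_nonneg (Finset.sum_nonneg fun _ _ => sq_nonneg _)
        (mul_nonneg (hLpos τ).le (by linarith [hl2 i hi]))
    · exact le_refl _
  have hJ0 : ∀ i ∈ I, ∀ τ c, 0 ≤ Jt blk P p L F (ℓ i) i τ c := by
    intro i hi τ c
    unfold Jt
    split_ifs
    · exact div_nonneg (Finset.sum_nonneg fun _ _ => sq_nonneg _)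
        (mul_nonneg (hLpos τ).le (by linarith [hl2 i hi]))
    · exact le_refl _
  have hs0 : ∀ i ∈ I, 0 ≤ Kt blk L F (ℓ i) i σ b + Jt blk P p L F (ℓ i) i σ b +
        Kt blk L F (ℓ i) i (sw U p b σ) (σ.1 p) := fun i hi => by
    linarith [hK0 i hi σ b, hJ0 i hi σ b, hK0 i hi (sw U p b σ) (σ.1 p)]
  by_cases hbP : b ∈ Lst P p σ
  · rw [if_pos hbP, h.move_free hF hbP]
    have := Finset.sum_nonneg hs0
    linarith
  · rw [if_neg hbP, zero_div, zero_add]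
    have hex : ∃ i ∈ I, σ.1 i = b := by
      by_contra hno
      push Not at hno
      exact hbP (h.mem_LP (mem_Lst.1 hb') hno)
    obtain ⟨i, hi, rfl⟩ := hex
    refine le_trans ?_ (mul_le_mul_of_nonneg_left (Finset.single_le_sum hs0 hi)
      (by norm_num : (0 : ℝ) ≤ 3))
    have hTi := h.T_i hi hb'
    have hLT : L (sw U p (σ.1 i) σ) = L σ := by rw [← hL, ← hL, Lst_sw]
    unfold Kt Jt
    rw [if_pos rfl, if_pos rfl, if_pos hTi, hLT, hTi, ← add_div, ← add_div, mul_div_assoc']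
    set M := (Lst (blk i) i σ).erase (σ.1 i) with hM
    have hl1 : (0 : ℝ) < ℓ i - 1 := by linarith [hl2 i hi]
    have hMcard : (M.card : ℝ) = ℓ i - 1 := by
      rw [hM, card_erase_of_mem (root_mem_Lst _ _ _), Nat.cast_sub
        (card_pos.2 ⟨_, root_mem_Lst _ _ _⟩), hl i hi, Nat.cast_one]
    have hsub : ∑ m ∈ M, (F (sw U p (σ.1 i) σ) - F (sw (blk i) i m (sw U p (σ.1 i) σ))) ^ 2 ≤
        ∑ m ∈ (Lst (blk i) i (sw U p (σ.1 i) σ)).erase (σ.1 p),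
          (F (sw U p (σ.1 i) σ) - F (sw (blk i) i m (sw U p (σ.1 i) σ))) ^ 2 :=
      Finset.sum_le_sum_of_subset_of_nonneg (fun m hm => h.M_sub hi hb' hm)
        fun _ _ _ => sq_nonneg _
    have hmain : (ℓ i - 1) * (F σ - F (sw U p (σ.1 i) σ)) ^ 2 ≤
        3 * (∑ m ∈ M, (F σ - F (sw (blk i) i m σ)) ^ 2 +
          ∑ m ∈ M, (F (sw (blk i) i m σ) - F (sw P p (σ.1 i) (sw (blk i) i m σ))) ^ 2 +
          ∑ m ∈ M, (F (sw U p (σ.1 i) σ) - F (sw (blk i) i m (sw U p (σ.1 i) σ))) ^ 2) := by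
      rw [← hMcard, ← nsmul_eq_mul, ← Finset.sum_const, ← Finset.sum_add_distrib,
        ← Finset.sum_add_distrib, Finset.mul_sum]
      apply Finset.sum_le_sum
      intro m hm
      rw [h.move_three hF hi hb' hm]
      set x := F σ
      set y := F (sw (blk i) i m σ)
      set z := F (sw (blk i) i m (sw U p (σ.1 i) σ))
      set w := F (sw U p (σ.1 i) σ)
      nlinarith [sq_nonneg ((x - y) - (y - z)), sq_nonneg ((y - z) - (z - w)),
        sq_nonneg ((x - y) - (z - w))]
    rw [div_le_div_iff₀ (hLpos σ) (mul_pos (hLpos σ) hl1)]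
    have := hLpos σ
    calc (F σ - F (sw U p (σ.1 i) σ)) ^ 2 * ((L σ).card * (ℓ i - 1))
        = ((ℓ i - 1) * (F σ - F (sw U p (σ.1 i) σ)) ^ 2) * (L σ).card := by ring
      _ ≤ _ := by
        apply mul_le_mul_of_nonneg_right _ this.le
        refine hmain.trans ?_
        linarith

end Moves

/-- The sum of `Fan.pointwise` over all colourings. Each of the at most `|I|` roots may force a move
of `P`, with weight `1 / |L σ|`; this is where the ratio `ρ` of these two numbers enters. -/
lemma Fan.sum_le (h : Fan adj I blk p P) {F : Col adj k → ℝ}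
    (hF : Inv (inner blk I ∪ P.erase p) F)
    {ℓ : E → ℝ} (hl2 : ∀ i ∈ I, 2 ≤ ℓ i)
    (hl : ∀ i ∈ I, ∀ σ : Col adj k, ((Lst (blk i) i σ).card : ℝ) = ℓ i) {ρ : ℝ}
    (hρ : ∀ σ : Col adj k, (I.card : ℝ) ≤ ρ * (Lst (I.biUnion blk ∪ P) p σ).card) :
    ∑ σ : Col adj k,
      (∑ b ∈ Lst (I.biUnion blk ∪ P) p σ, (F σ - F (sw (I.biUnion blk ∪ P) p b σ)) ^ 2)
        / (Lst (I.biUnion blk ∪ P) p σ).card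
      ≤ 48 * ∑ i ∈ I, En (blk i) F + (24 * ρ + 4) * En P F := by
  set U := I.biUnion blk ∪ P with hU
  set L : Col adj k → Finset (Fin k) := Lst U p with hLdef
  have hLpos : ∀ σ, 0 < ((L σ).card : ℝ) := fun σ => Lst_card_pos _ _ _
  have hA := sum_sw_sq_le_En h.anchP F
  have h1 : ∀ σ, (∑ b ∈ L σ, (F σ - F (sw U p b σ)) ^ 2) / (L σ).card ≤
      (∑ b ∈ Lst P p σ, (F σ - F (sw P p b σ)) ^ 2) / (Lst P p σ).card +
      3 * ∑ i ∈ I, (∑ b ∈ L σ, Kt blk L F (ℓ i) i σ b + ∑ b ∈ L σ, Jt blk P p L F (ℓ i) i σ b +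
        ∑ b ∈ L σ, Kt blk L F (ℓ i) i (sw U p b σ) (σ.1 p)) := by
    intro σ
    rw [Finset.sum_div]
    refine (Finset.sum_le_sum fun b hb => h.pointwise hF hl2 hl (L := L) (fun _ => rfl) σ hb).trans ?_
    rw [Finset.sum_add_distrib, ← Finset.mul_sum, Finset.sum_comm, ← Finset.sum_div]
    simp_rw [Finset.sum_add_distrib]
    gcongr ?_ + _
    rw [← Finset.sum_filter]
    have hset : (L σ).filter (fun b => b ∈ Lst P p σ) = Lst P p σ := by
      ext b
      rw [mem_filter]
      exact ⟨fun h' => h'.2, fun h' => ⟨h.LP_sub σ h', h'⟩⟩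
    rw [hset]
    apply div_le_div_of_nonneg_left (Finset.sum_nonneg fun _ _ => sq_nonneg _)
      (Lst_card_pos _ _ _)
    exact_mod_cast card_le_card (h.LP_sub σ)
  refine (Finset.sum_le_sum fun σ _ => h1 σ).trans ?_
  rw [Finset.sum_add_distrib, ← Finset.mul_sum, Finset.sum_comm]
  have h2 : ∀ i ∈ I, ∑ σ, (∑ b ∈ L σ, Kt blk L F (ℓ i) i σ b +
      ∑ b ∈ L σ, Jt blk P p L F (ℓ i) i σ b + ∑ b ∈ L σ, Kt blk L F (ℓ i) i (sw U p b σ) (σ.1 p))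
      ≤ 16 * En (blk i) F + ∑ σ : Col adj k, 2 / ((L σ).card : ℝ) *
      ((∑ b ∈ Lst P p σ, (F σ - F (sw P p b σ)) ^ 2) / (Lst P p σ).card) := by
    intro i hi
    rw [Finset.sum_add_distrib, Finset.sum_add_distrib,
      ← pair_reindex h.anchU (Kt blk L F (ℓ i) i)]
    have hK := h.sum_K (F := F) hi (hl2 i hi) (hl i hi) L
      (fun σ => card_pos.2 ⟨_, root_mem_Lst U p σ⟩)
    have hJ := h.sum_J (F := F) hi (hl2 i hi) (hl i hi)
    linarith
  have h3 := Finset.sum_le_sum h2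
  have h4 : ∑ i ∈ I, ∑ σ : Col adj k, 2 / ((L σ).card : ℝ) *
      ((∑ b ∈ Lst P p σ, (F σ - F (sw P p b σ)) ^ 2) / (Lst P p σ).card) ≤ 8 * ρ * En P F := by
    rw [Finset.sum_const, nsmul_eq_mul, Finset.mul_sum]
    refine le_trans (Finset.sum_le_sum (g := fun σ => 2 * ρ *
      ((∑ b ∈ Lst P p σ, (F σ - F (sw P p b σ)) ^ 2) / (Lst P p σ).card)) fun σ _ => ?_) ?_
    · rw [← mul_assoc]
      apply mul_le_mul_of_nonneg_right _ (div_nonneg (Finset.sum_nonneg fun _ _ => sq_nonneg _)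
        (Nat.cast_nonneg _))
      rw [mul_div_assoc', div_le_iff₀ (hLpos σ)]
      linarith [hρ σ]
    · rw [← Finset.mul_sum]
      rcases isEmpty_or_nonempty (Col adj k) with he | ⟨⟨σ⟩⟩
      · simp [En]
      have hρ0 : 0 ≤ ρ := by
        by_contra hneg
        have := hρ σ
        have hc : (0 : ℝ) ≤ I.card := Nat.cast_nonneg _
        nlinarith [hLpos σ]
      have := mul_le_mul_of_nonneg_left hA (by linarith : 0 ≤ 2 * ρ)
      linarith
  rw [Finset.sum_add_distrib, ← Finset.mul_sum] at h3
  linarith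

/-- Approximate tensorization for a fan. -/
lemma Fan.En_le (h : Fan adj I blk p P) (f : Col adj k → ℝ)
    (hc : ∀ σ : Col adj k, ∀ i ∈ I, I.card + 1 ≤ (Lst (I.biUnion blk) i σ).card)
    {ℓ : E → ℝ} (hl2 : ∀ i ∈ I, 2 ≤ ℓ i)
    (hl : ∀ i ∈ I, ∀ σ : Col adj k, ((Lst (blk i) i σ).card : ℝ) = ℓ i) {ρ : ℝ} (hρ0 : 0 ≤ ρ)
    (hρ : ∀ σ : Col adj k, (I.card : ℝ) ≤ ρ * (Lst (I.biUnion blk ∪ P) p σ).card) :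
    En (I.biUnion blk ∪ P) f ≤ 53 * ∑ i ∈ I, En (blk i) f + (24 * ρ + 5) * En P f := by
  have hsub : inner blk I ∪ P.erase p ⊆ I.biUnion blk ∪ P :=
    union_subset_union inner_subset (erase_subset _ _)
  have hF := inv_Pr (inner blk I ∪ P.erase p) f
  set F := Pr (inner blk I ∪ P.erase p) f with hFdef
  have h1 := En_split hsub f
  have h2 := En_split (subset_union_left : I.biUnion blk ⊆ I.biUnion blk ∪ P) F
  have h3 := h.star.En_le_of_inv (hF.mono subset_union_left) hc
  have h4 := (h.u_le hF).trans (h.sum_le hF hl2 hl hρ)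
  have hsep : Sep adj (inner blk I) (P.erase p) := h.sepI.mono inner_subset (subset_refl _)
  have h5 := En_union_le hsep f
  have h6 := h.star.En_inner_le f
  have h7 := En_mono (erase_subset p P) f
  have h8 : En P F ≤ En P f := En_Pr_le' rfl (erase_subset _ _) h.sepP f
  have h9 : ∀ i ∈ I, En (blk i) F ≤ En (blk i) f := by
    intro i hi
    refine En_Pr_le' (D₁ := (blk i).erase i) (D₂ := inner blk (I.erase i) ∪ P.erase p) ?_
      (erase_subset _ _) ?_ f
    · have : inner blk I = (blk i).erase i ∪ inner blk (I.erase i) := by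
        unfold inner
        conv_lhs => rw [← insert_erase hi]
        rw [biUnion_insert]
      rw [this]
      ext x; simp only [mem_union]; tauto
    · intro x hx y hy
      rcases mem_union.1 hx with hx | hx
      · exact h.star.sep' hi x hx y hy
      · exact h.sepI.symm x hx y (mem_biUnion.2 ⟨i, hi, hy⟩)
  have h10 := Finset.sum_le_sum h9
  have h11 : (24 * ρ + 4) * En P F ≤ (24 * ρ + 4) * En P f :=
    mul_le_mul_of_nonneg_left h8 (by linarith)
  linarith

end FanLemma

end TreeCol

/-! ### Rooted trees -/

namespace TreeCol

/-- A rooted-tree structure on the set `E` of edges: `up e` and `low e` are the endpoints of `e`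
closer to and further from the root, `dep` is the depth of a vertex, and the root is incident to
the single edge `e0`. Adjacency of edges means sharing an endpoint. -/
structure Rooted {E : Type} (adj : E → E → Prop) (V : Type) where
  up : E → V
  low : E → V
  dep : V → ℕ
  e0 : E
  low_inj : ∀ e f, low e = low f → e = f
  dep_low : ∀ e, dep (low e) = dep (up e) + 1
  root_unique : ∀ e, up e = up e0 → e = e0
  parent : ∀ e, up e = up e0 ∨ ∃ f, low f = up e
  adj_iff : ∀ e f, adj e f ↔ e ≠ f ∧ (up e = up f ∨ up e = low f ∨ low e = up f)

section RootedTree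

set_option linter.unusedSectionVars false

variable {E V : Type} [Fintype E] {adj : E → E → Prop} [hsy : Std.Symm adj] {k : ℕ}

namespace Rooted

variable (R : Rooted adj V)

/-- The child edges of `e`. -/
noncomputable def Ch (e : E) : Finset E := univ.filter fun c => R.up c = R.low e

/-- The edge `e` and all edges below it. -/
noncomputable def sub (e : E) : Finset E :=
  univ.filter fun x => Relation.ReflTransGen (fun a b => R.up b = R.low a) e x

/-- The edges strictly below `e`. -/
noncomputable def Bl (e : E) : Finset E := (R.Ch e).biUnion R.sub

/-- The edges strictly below `e`, except those in the subtree of `h`. -/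
noncomputable def Nl (e h : E) : Finset E := ((R.Ch e).erase h).biUnion R.sub

variable {R}

lemma mem_Ch {e c : E} : c ∈ R.Ch e ↔ R.up c = R.low e := by simp [Ch]

lemma mem_sub {e x : E} :
    x ∈ R.sub e ↔ Relation.ReflTransGen (fun a b => R.up b = R.low a) e x := by simp [sub]

lemma self_mem (e : E) : e ∈ R.sub e := mem_sub.2 Relation.ReflTransGen.refl

lemma child_mem {c z y : E} (hz : z ∈ R.sub c) (hy : R.up y = R.low z) : y ∈ R.sub c :=
  mem_sub.2 ((mem_sub.1 hz).tail hy)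

lemma parent_mem {c x z : E} (hx : x ∈ R.sub c) (hne : x ≠ c) (hz : R.up x = R.low z) :
    z ∈ R.sub c := by
  rcases Relation.ReflTransGen.cases_tail (mem_sub.1 hx) with h | ⟨w, hw, hwx⟩
  · exact absurd h hne
  · rw [R.low_inj z w (hz.symm.trans hwx)]
    exact mem_sub.2 hw

lemma mem_Bl {e x : E} : x ∈ R.Bl e ↔ ∃ c ∈ R.Ch e, x ∈ R.sub c := by
  simp [Bl]

lemma mem_Nl {e h x : E} : x ∈ R.Nl e h ↔ ∃ c, c ≠ h ∧ c ∈ R.Ch e ∧ x ∈ R.sub c := by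
  simp only [Nl, mem_biUnion, mem_erase, and_assoc]

lemma mem_sub_iff {e x : E} : x ∈ R.sub e ↔ x = e ∨ x ∈ R.Bl e := by
  rw [mem_sub, Relation.ReflTransGen.cases_head_iff, mem_Bl]
  constructor
  · rintro (h | ⟨c, hc, hcx⟩)
    · exact Or.inl h.symm
    · exact Or.inr ⟨c, mem_Ch.2 hc, mem_sub.2 hcx⟩
  · rintro (h | ⟨c, hc, hcx⟩)
    · exact Or.inl h.symm
    · exact Or.inr ⟨c, mem_Ch.1 hc, mem_sub.1 hcx⟩

lemma dep_le {e x : E} (hx : x ∈ R.sub e) : R.dep (R.up e) ≤ R.dep (R.up x) := by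
  have := mem_sub.1 hx
  induction this with
  | refl => exact le_refl _
  | tail hab hbc ih =>
    have h1 := ih (mem_sub.2 hab)
    rw [hbc, R.dep_low]
    omega

lemma dep_lt {e x : E} (hx : x ∈ R.Bl e) : R.dep (R.up e) < R.dep (R.up x) := by
  obtain ⟨c, hc, hcx⟩ := mem_Bl.1 hx
  have := dep_le hcx
  rw [mem_Ch.1 hc, R.dep_low] at this
  omega

lemma self_notMem_Bl (e : E) : e ∉ R.Bl e := fun h => lt_irrefl _ (dep_lt h)

lemma parent_notMem {e c : E} (hc : c ∈ R.Ch e) : e ∉ R.sub c :=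
  fun h => self_notMem_Bl e (mem_Bl.2 ⟨c, hc, h⟩)

lemma Bl_sub (e : E) : R.Bl e ⊆ R.sub e := fun _ hx => mem_sub_iff.2 (Or.inr hx)

lemma sub_sub_Bl {e c : E} (hc : c ∈ R.Ch e) : R.sub c ⊆ R.Bl e :=
  fun _ hx => mem_Bl.2 ⟨c, hc, hx⟩

/-- A subtree is attached to the rest of the tree through the upper endpoint of its top edge. -/
lemma boundary {c x y : E} (hx : x ∈ R.sub c) (hy : y ∉ R.sub c) (hxy : adj x y) :
    x = c ∧ (R.up y = R.up c ∨ R.low y = R.up c) := by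
  have hxy' := ((R.adj_iff x y).1 hxy).2
  by_cases hxc : x = c
  · subst hxc
    refine ⟨rfl, ?_⟩
    rcases hxy' with h | h | h
    · exact Or.inl h.symm
    · exact Or.inr h.symm
    · exact absurd (child_mem hx h.symm) hy
  · exfalso
    rcases Relation.ReflTransGen.cases_tail (mem_sub.1 hx) with h | ⟨z, hz, hzx⟩
    · exact hxc h
    have hz' := mem_sub.2 hz
    rcases hxy' with h | h | h
    · exact hy (child_mem hz' (h.symm.trans hzx))
    · exact hy (R.low_inj y z (h.symm.trans hzx) ▸ hz')
    · exact hy (child_mem hx h.symm)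

lemma disj {c c' x : E} (hcc : R.up c = R.up c') (hne : c ≠ c') (hx : x ∈ R.sub c) :
    x ∉ R.sub c' := by
  have := mem_sub.1 hx
  induction this with
  | refl =>
    intro h
    rcases mem_sub_iff.1 h with h | h
    · exact hne h
    · exact absurd (dep_lt h) (by rw [hcc]; exact lt_irrefl _)
  | @tail b d hab hbd ih =>
    intro h
    by_cases hdc : d = c'
    · subst hdc
      have h1 := dep_le (mem_sub.2 hab)
      rw [hcc, hbd, R.dep_low] at h1
      omega
    · exact ih (mem_sub.2 hab) (parent_mem h hdc hbd)

lemma adj_sib {e c c' : E} (hc : c ∈ R.Ch e) (hc' : c' ∈ R.Ch e) (hne : c ≠ c') : adj c c' :=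
  (R.adj_iff _ _).2 ⟨hne, Or.inl ((mem_Ch.1 hc).trans (mem_Ch.1 hc').symm)⟩

lemma ne_of_Ch {e c : E} (hc : c ∈ R.Ch e) : c ≠ e := by
  rintro rfl
  exact parent_notMem hc (self_mem _)

lemma adj_child {e c : E} (hc : c ∈ R.Ch e) : adj e c :=
  (R.adj_iff _ _).2 ⟨(ne_of_Ch hc).symm, Or.inr (Or.inr (mem_Ch.1 hc).symm)⟩

/-- The outside neighbours of a subtree are the parent and the siblings. -/
lemma boundary_Ch {e c x y : E} (hc : c ∈ R.Ch e) (hx : x ∈ R.sub c) (hy : y ∉ R.sub c)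
    (hxy : adj x y) : x = c ∧ (y ∈ R.Ch e ∨ y = e) := by
  obtain ⟨h1, h2⟩ := boundary hx hy hxy
  refine ⟨h1, ?_⟩
  rw [mem_Ch.1 hc] at h2
  rcases h2 with h2 | h2
  · exact Or.inl (mem_Ch.2 h2)
  · exact Or.inr (R.low_inj _ _ h2)

lemma disj_Ch {e c c' x : E} (hc : c ∈ R.Ch e) (hc' : c' ∈ R.Ch e) (hne : c ≠ c')
    (hx : x ∈ R.sub c) : x ∉ R.sub c' :=
  disj ((mem_Ch.1 hc).trans (mem_Ch.1 hc').symm) hne hx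

lemma star {e : E} {S : Finset E} (hS : S ⊆ R.Ch e) : Star adj S R.sub where
  mem r _ := self_mem r
  clq r hr r' hr' hne := adj_sib (hS hr) (hS hr') hne
  disj r hr r' hr' hne x hx := disj_Ch (hS hr) (hS hr') hne hx
  cross r hr r' hr' hne x hx y hy hxy := by
    have h1 := disj_Ch (hS hr') (hS hr) hne.symm hy
    have h2 := disj_Ch (hS hr) (hS hr') hne hx
    exact ⟨(boundary hx h1 hxy).1, (boundary hy h2 (hsy.symm _ _ hxy)).1⟩
  bd r hr x hx y hy hxy r' hr' hy' := by
    rcases (boundary_Ch (hS hr) hx hy hxy).2 with h | h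
    · exact adj_sib (hS hr') h (fun h' => hy' (h' ▸ self_mem _))
    · rw [h]; exact hsy.symm _ _ (adj_child (hS hr'))

lemma star_list {e : E} {S : Finset E} (hS : S ⊆ R.Ch e) (hk : (R.Ch e).card + 2 ≤ k)
    (σ : Col adj k) {j : E} (hj : j ∈ S) :
    S.card + 1 ≤ (Lst (S.biUnion R.sub) j σ).card := by
  have h := le_card_Lst (A := S.biUnion R.sub) (T := insert e (R.Ch e \ S)) (r := j) (fun y hy hjy => by
    have hy' : ∀ c ∈ S, y ∉ R.sub c := fun c hc h' => hy (mem_biUnion.2 ⟨c, hc, h'⟩)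
    rcases (boundary_Ch (hS hj) (self_mem j) (hy' j hj) hjy).2 with h | h
    · exact mem_insert_of_mem (mem_sdiff.2 ⟨h, fun h' => hy' y h' (self_mem y)⟩)
    · rw [h]; exact mem_insert_self _ _) σ
  have h1 := card_insert_le e (R.Ch e \ S)
  have h2 := card_sdiff_add_card_eq_card hS
  omega

lemma list_single {e i : E} (hi : i ∈ R.Ch e) (σ : Col adj k) :
    (Lst (R.sub i) i σ).card + (R.Ch e).card = k := by
  have hne : e ∉ (R.Ch e).erase i := fun h => ne_of_Ch (mem_of_mem_erase h) rfl
  have hcard : (insert e ((R.Ch e).erase i)).card = (R.Ch e).card := by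
    rw [card_insert_of_notMem hne, card_erase_of_mem hi]
    have := card_pos.2 ⟨i, hi⟩
    omega
  rw [← hcard]
  apply card_Lst
  · intro y
    rw [mem_insert, mem_erase]
    constructor
    · rintro (rfl | ⟨h1, h2⟩)
      · exact ⟨parent_notMem hi, hsy.symm _ _ (adj_child hi)⟩
      · exact ⟨disj_Ch h2 hi h1 (self_mem y), adj_sib hi h2 h1.symm⟩
    · rintro ⟨h1, h2⟩
      rcases (boundary_Ch hi (self_mem i) h1 h2).2 with h | h
      · exact Or.inr ⟨fun h' => h1 (h' ▸ self_mem _), h⟩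
      · exact Or.inl h
  · intro x hx y hy hxy
    rw [mem_insert, mem_erase] at hx hy
    rcases hx with rfl | hx
    · rcases hy with rfl | hy
      · exact absurd rfl hxy
      · exact adj_child hy.2
    · rcases hy with rfl | hy
      · exact hsy.symm _ _ (adj_child hx.2)
      · exact adj_sib hx.2 hy.2 hxy

/-- An edge with some of the subtrees below it is a fan. -/
lemma fan_below {c : E} {I : Finset E} (hI : I ⊆ R.Ch c) : Fan adj I R.sub c {c} where
  star := star hI
  disjP i hi x hx h := parent_notMem (hI hi) ((mem_singleton.1 h) ▸ hx)
  adjp i hi := adj_child (hI hi)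
  crossP i hi x hx y hy hxy := by
    rw [mem_singleton] at hx
    subst hx
    exact ⟨rfl, (boundary hy (parent_notMem (hI hi)) (hsy.symm _ _ hxy)).1⟩
  anchP := ⟨mem_singleton_self c, fun x hx y _ hxy => (mem_singleton.1 hx) ▸ hxy⟩
  anchU := by
    refine ⟨mem_union_right _ (mem_singleton_self c), fun x hx y hy hxy => ?_⟩
    rw [mem_union, not_or, mem_singleton] at hy
    rcases mem_union.1 hx with hx | hx
    · obtain ⟨i, hi, hxi⟩ := mem_biUnion.1 hx
      have hyi : y ∉ R.sub i := fun h' => hy.1 (mem_biUnion.2 ⟨i, hi, h'⟩)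
      rcases (boundary_Ch (hI hi) hxi hyi hxy).2 with h | h
      · exact adj_child h
      · exact absurd h hy.2
    · exact (mem_singleton.1 hx) ▸ hxy
  nb i hi y hy hiy := by
    rcases (boundary_Ch (hI hi) (self_mem i) hy hiy).2 with h | h
    · exact Or.inr (adj_child h)
    · exact Or.inl h

lemma Nl_sub (e h : E) : R.Nl e h ⊆ R.Bl e :=
  biUnion_subset_biUnion_of_subset_left _ (erase_subset _ _)

lemma anch_ins (h h' : E) : Anch adj (insert h (R.Nl h h')) h := by
  refine ⟨mem_insert_self _ _, fun x hx y hy hxy => ?_⟩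
  rw [mem_insert, not_or] at hy
  rcases mem_insert.1 hx with rfl | hx
  · exact hxy
  · obtain ⟨c, hc1, hc2, hxc⟩ := mem_Nl.1 hx
    have hyc : y ∉ R.sub c := fun h' => hy.2 (mem_Nl.2 ⟨c, hc1, hc2, h'⟩)
    rcases (boundary_Ch hc2 hxc hyc hxy).2 with h1 | h1
    · exact adj_child h1
    · exact absurd h1 hy.1

lemma anch_Y {e h : E} (hh : h ∈ R.Ch e) (h' : E) :
    Anch adj (R.Nl e h ∪ insert h (R.Nl h h')) h := by
  refine ⟨mem_union_right _ (mem_insert_self _ _), fun x hx y hy hxy => ?_⟩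
  rw [mem_union, not_or] at hy
  rcases mem_union.1 hx with hx | hx
  · obtain ⟨c, hc1, hc2, hxc⟩ := mem_Nl.1 hx
    have hyc : y ∉ R.sub c := fun h' => hy.1 (mem_Nl.2 ⟨c, hc1, hc2, h'⟩)
    rcases (boundary_Ch hc2 hxc hyc hxy).2 with h1 | h1
    · exact adj_sib hh h1 (fun h2 => hy.2 (h2 ▸ mem_insert_self _ _))
    · rw [h1]; exact hsy.symm _ _ (adj_child hh)
  · exact (anch_ins h h').bd x hx y hy.2 hxy

lemma ins_sub (h h' : E) : insert h (R.Nl h h') ⊆ R.sub h := by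
  intro x hx
  rcases mem_insert.1 hx with rfl | hx
  · exact self_mem _
  · exact Bl_sub h (Nl_sub _ _ hx)

/-- The subtrees at the siblings of `h`, together with `h` and all but one of the subtrees below
`h`, form a fan. -/
lemma fan_side {e h : E} (hh : h ∈ R.Ch e) (h' : E) :
    Fan adj ((R.Ch e).erase h) R.sub h (insert h (R.Nl h h')) where
  star := star (erase_subset _ _)
  disjP i hi x hx hxP := by
    have hi' := mem_erase.1 hi
    exact disj_Ch hi'.2 hh hi'.1 hx (ins_sub h h' hxP)
  adjp i hi := adj_sib hh (mem_of_mem_erase hi) (ne_of_mem_erase hi).symm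
  crossP i hi x hx y hy hxy :=
    (star (subset_refl (R.Ch e))).cross h hh i (mem_of_mem_erase hi) (ne_of_mem_erase hi).symm x
      (ins_sub h h' hx) y hy hxy
  anchP := anch_ins h h'
  anchU := anch_Y hh h'
  nb i hi y hy hiy := by
    rcases (boundary_Ch (mem_of_mem_erase hi) (self_mem i) hy hiy).2 with h1 | h1
    · by_cases hyh : y = h
      · exact Or.inl hyh
      · exact Or.inr (adj_sib hh h1 (Ne.symm hyh))
    · right; rw [h1]; exact hsy.symm _ _ (adj_child hh)

/-- The outside neighbours of `h` in the second kind of fan are the parent and the missing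
child. -/
lemma nbr_Y {e h : E} (hh : h ∈ R.Ch e) {h' y : E}
    (hy : y ∉ R.Nl e h ∪ insert h (R.Nl h h')) (hhy : adj h y) : y = e ∨ y = h' := by
  rw [mem_union, not_or, mem_insert, not_or] at hy
  by_cases hys : y ∈ R.sub h
  · right
    by_contra hne
    rcases mem_sub_iff.1 hys with h1 | h1
    · exact hy.2.1 h1
    · obtain ⟨c, hc, hyc⟩ := mem_Bl.1 h1
      have := (boundary hyc (parent_notMem hc) (hsy.symm _ _ hhy)).1
      subst this
      exact hy.2.2 (mem_Nl.2 ⟨y, hne, hc, hyc⟩)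
  · left
    rcases (boundary_Ch hh (self_mem h) hys hhy).2 with h1 | h1
    · exact absurd (mem_Nl.2 ⟨y, hy.2.1, h1, self_mem y⟩) hy.1
    · exact h1

lemma list_Y {e h : E} (hh : h ∈ R.Ch e) (h' : E) (σ : Col adj k) :
    k ≤ (Lst (R.Nl e h ∪ insert h (R.Nl h h')) h σ).card + 2 := by
  have h1 := le_card_Lst (A := R.Nl e h ∪ insert h (R.Nl h h')) (r := h) (T := {e, h'})
    (fun y hy hhy => by
      rw [mem_insert, mem_singleton]; exact nbr_Y hh hy hhy) σ
  have h2 := card_le_two (a := e) (b := h')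
  omega

/-- The fan inequality for an edge `c` with some of the subtrees below it. The factor `k` in front
of the term of `c` is due to `c` possibly having few available colours. -/
lemma En_below (hk : ∀ e, (R.Ch e).card + 2 ≤ k) {c : E} {I : Finset E}
    (hI : I ⊆ R.Ch c) (f : Col adj k → ℝ) :
    En (I.biUnion R.sub ∪ {c}) f ≤
      53 * ∑ i ∈ I, En (R.sub i) f + (24 * k + 5) * En {c} f := by
  apply (fan_below hI).En_le f (fun σ j hj => star_list hI (hk c) σ hj)
    (ℓ := fun _ => (k : ℝ) - (R.Ch c).card)
  · intro i _
    have : (((R.Ch c).card + 2 : ℕ) : ℝ) ≤ k := by exact_mod_cast hk c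
    push_cast at this
    linarith
  · intro i hi σ
    have : (((Lst (R.sub i) i σ).card + (R.Ch c).card : ℕ) : ℝ) = k := by
      exact_mod_cast list_single (hI hi) σ
    push_cast at this
    linarith
  · exact Nat.cast_nonneg k
  · intro σ
    have h1 := card_le_card hI
    have h2 := hk c
    have h3 : 1 ≤ (Lst (I.biUnion R.sub ∪ {c}) c σ).card := card_pos.2 ⟨_, root_mem_Lst _ _ _⟩
    have h4 : I.card ≤ k * (Lst (I.biUnion R.sub ∪ {c}) c σ).card := by nlinarith
    exact_mod_cast h4

/-- The fan inequality for `h` and the subtrees at its siblings. As `h` has at least `k - 2`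
available colours, the constants do not depend on `k`. -/
lemma En_side (hk : ∀ e, (R.Ch e).card + 2 ≤ k) {e h : E}
    (hh : h ∈ R.Ch e) (h' : E) (f : Col adj k → ℝ) :
    En (R.Nl e h ∪ insert h (R.Nl h h')) f ≤
      53 * ∑ i ∈ (R.Ch e).erase h, En (R.sub i) f + 29 * En (insert h (R.Nl h h')) f := by
  have key := (fan_side hh h').En_le f
    (fun σ j hj => star_list (erase_subset h (R.Ch e)) (hk e) σ hj)
    (ℓ := fun _ => (k : ℝ) - (R.Ch e).card) (ρ := 1) ?_ ?_ zero_le_one ?_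
  · refine key.trans (le_of_eq ?_)
    norm_num
  · intro i _
    have : (((R.Ch e).card + 2 : ℕ) : ℝ) ≤ k := by exact_mod_cast hk e
    push_cast at this
    linarith
  · intro i hi σ
    have : (((Lst (R.sub i) i σ).card + (R.Ch e).card : ℕ) : ℝ) = k := by
      exact_mod_cast list_single (mem_of_mem_erase hi) σ
    push_cast at this
    linarith
  · intro σ
    rw [one_mul]
    have h1 := card_erase_le (s := R.Ch e) (a := h)
    have h2 := hk e
    have h3 := list_Y hh h' σ
    have h4 : ((R.Ch e).erase h).card ≤
        (Lst (R.Nl e h ∪ insert h (R.Nl h h')) h σ).card := by omega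
    exact_mod_cast h4

lemma En_Nl (hk : ∀ e, (R.Ch e).card + 2 ≤ k) (e h : E) (f : Col adj k → ℝ) :
    En (R.Nl e h) f ≤ 5 * ∑ i ∈ (R.Ch e).erase h, En (R.sub i) f :=
  (star (erase_subset h (R.Ch e))).En_le f
    (fun σ _ hj => star_list (erase_subset h (R.Ch e)) (hk e) σ hj)

end Rooted

end RootedTree

end TreeCol

/-! ### Contraction along heavy paths -/

namespace TreeCol

section HeavyPath

set_option linter.unusedSectionVars false

variable {E V : Type} [Fintype E] {adj : E → E → Prop} [hsy : Std.Symm adj] {k : ℕ}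

namespace Rooted

variable {R : Rooted adj V}

lemma Bl_eq {e h : E} (hh : h ∈ R.Ch e) : R.Bl e = R.Nl e h ∪ R.sub h := by
  ext x
  rw [mem_union, mem_Nl, mem_Bl]
  constructor
  · rintro ⟨c, hc, hx⟩
    by_cases hch : c = h
    · exact Or.inr (hch ▸ hx)
    · exact Or.inl ⟨c, hch, hc, hx⟩
  · rintro (⟨c, _, hc, hx⟩ | hx)
    · exact ⟨c, hc, hx⟩
    · exact ⟨h, hh, hx⟩

lemma sub_eq (e : E) : R.sub e = insert e (R.Bl e) := by
  ext x; rw [mem_insert, mem_sub_iff]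

lemma sep_Nl_Bl {e h : E} (hh : h ∈ R.Ch e) : Sep adj (R.Nl e h) (R.Bl h) := by
  intro x hx y hy
  obtain ⟨c, hc1, hc2, hxc⟩ := mem_Nl.1 hx
  have hys : y ∉ R.sub c := disj_Ch hh hc2 (Ne.symm hc1) (Bl_sub h hy)
  have hxs : x ∉ R.sub h := disj_Ch hc2 hh hc1 hxc
  have hno : ¬ adj y x := fun h1 => by
    have := (boundary (Bl_sub h hy) hxs h1).1
    exact self_notMem_Bl h (this ▸ hy)
  exact ⟨fun h1 => hys (h1 ▸ hxc), fun h1 => hno (hsy.symm _ _ h1), hno⟩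

lemma h_notMem_T {e h : E} (hh : h ∈ R.Ch e) : h ∉ R.Nl e h ∪ R.Bl h := by
  rw [mem_union, not_or]
  refine ⟨fun h1 => ?_, self_notMem_Bl h⟩
  obtain ⟨c, hc1, hc2, hxc⟩ := mem_Nl.1 h1
  exact disj_Ch hh hc2 (Ne.symm hc1) (self_mem h) hxc

lemma Bl_eq_insert {e h : E} (hh : h ∈ R.Ch e) :
    R.Bl e = insert h (R.Nl e h ∪ R.Bl h) := by
  rw [Bl_eq hh, sub_eq, union_insert]

lemma Bl_erase {e h : E} (hh : h ∈ R.Ch e) : (R.Bl e).erase h = R.Nl e h ∪ R.Bl h := by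
  rw [Bl_eq_insert hh, erase_insert (h_notMem_T hh)]

lemma nbr_Bl {e x y : E} (hx : x ∈ R.Bl e) (hy : y ∉ R.Bl e) (hxy : adj x y) : y = e := by
  obtain ⟨c, hc, hxc⟩ := mem_Bl.1 hx
  have hyc : y ∉ R.sub c := fun h1 => hy (mem_Bl.2 ⟨c, hc, h1⟩)
  rcases (boundary_Ch hc hxc hyc hxy).2 with h1 | h1
  · exact absurd (mem_Bl.2 ⟨y, h1, self_mem y⟩) hy
  · exact h1

lemma anch_Bl {e h : E} (hh : h ∈ R.Ch e) : Anch adj (R.Bl e) h := by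
  refine ⟨mem_Bl.2 ⟨h, hh, self_mem h⟩, fun x hx y hy hxy => ?_⟩
  rw [nbr_Bl hx hy hxy]
  exact hsy.symm _ _ (adj_child hh)

lemma list_Bl {e h : E} (hh : h ∈ R.Ch e) (σ : Col adj k) :
    (Lst (R.Bl e) h σ).card + 1 = k := by
  have := card_Lst (A := R.Bl e) (r := h) (T := {e}) (fun y => by
    rw [mem_singleton]
    constructor
    · rintro rfl
      exact ⟨self_notMem_Bl _, hsy.symm _ _ (adj_child hh)⟩
    · rintro ⟨h1, h2⟩
      exact nbr_Bl (anch_Bl hh).mem h1 h2) (fun x hx y hy hxy => by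
    rw [mem_singleton] at hx hy
    exact absurd (hx.trans hy.symm) hxy) σ
  simpa using this

lemma Y_sub {e h : E} (hh : h ∈ R.Ch e) (h' : E) :
    R.Nl e h ∪ insert h (R.Nl h h') ⊆ R.Bl e := by
  rw [Bl_eq hh]
  exact union_subset_union_right (ins_sub h h')

lemma Y_erase_sub {e h : E} (h' : E) :
    (R.Nl e h ∪ insert h (R.Nl h h')).erase h ⊆ R.Nl e h ∪ R.Bl h := by
  intro x hx
  rw [mem_erase, mem_union, mem_insert] at hx
  rw [mem_union]
  rcases hx.2 with h1 | h1 | h1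
  · exact Or.inl h1
  · exact absurd h1 hx.1
  · exact Or.inr (Nl_sub h h' h1)

lemma h'_notMem_Y {e h h' : E} (hh : h ∈ R.Ch e) (hh' : h' ∈ R.Ch h) :
    h' ∉ R.Nl e h ∪ insert h (R.Nl h h') := by
  rw [mem_union, not_or, mem_insert, not_or]
  refine ⟨fun h1 => ?_, ne_of_Ch hh', fun h1 => ?_⟩
  · exact ((sep_Nl_Bl hh) h' h1 h' (anch_Bl hh').mem).1 rfl
  · exact h_notMem_T hh' (mem_union_left _ h1)

/-- The heavy-path contraction: averaging over the part below `e` that excludes the subtree at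
`h'` shrinks the norm of a function of the colour of `h` with conditional mean zero at least by a
factor `2`. Indeed, the new colour of `h` is uniform over the `k - 2` colours other than those of
`e` and `h'`, so that the average is `-1 / (k - 2)` times the value at the colour of `h'`. -/
lemma norm_contract {e h h' : E} (hh : h ∈ R.Ch e) (hh' : h' ∈ R.Ch h) (hk4 : 4 ≤ k)
    {u : Col adj k → ℝ} (hu : Inv (R.Nl e h ∪ R.Bl h) u) (hu0 : ∀ σ, Pr (R.Bl e) u σ = 0) :
    4 * ∑ σ, Pr (R.Nl e h ∪ insert h (R.Nl h h')) u σ ^ 2 ≤ ∑ σ, u σ ^ 2 := by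
  set Y := R.Nl e h ∪ insert h (R.Nl h h') with hY
  set Be := R.Bl e with hBe
  have hk4' : (4 : ℝ) ≤ k := by exact_mod_cast hk4
  have hX : ∀ σ : Col adj k, ((Lst Be h σ).card : ℝ) = k - 1 := fun σ => by
    have : (((Lst Be h σ).card + 1 : ℕ) : ℝ) = k := by exact_mod_cast list_Bl hh σ
    push_cast at this; linarith
  have hX' : ∀ σ : Col adj k, ((Lst (R.Bl h) h' σ).card : ℝ) = k - 1 := fun σ => by
    have : (((Lst (R.Bl h) h' σ).card + 1 : ℕ) : ℝ) = k := by exact_mod_cast list_Bl hh' σ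
    push_cast at this; linarith
  have hBes : Be = insert h (R.Nl e h ∪ R.Bl h) := Bl_eq_insert hh
  have hsub : R.Bl h ⊆ Be := by
    rw [hBes]; exact (subset_union_right).trans (subset_insert _ _)
  have hagr : ∀ σ η : Col adj k, σ.1 h = η.1 h → (∀ x, x ∉ Be → σ.1 x = η.1 x) → u σ = u η := by
    intro σ η h1 h2
    apply hu
    intro x hx
    by_cases hxh : x = h
    · rw [hxh]; exact h1
    · apply h2
      rw [hBes, mem_insert, not_or]
      exact ⟨hxh, hx⟩
  have hLe : ∀ σ : Col adj k, Lst Y h σ = (Lst Be h σ).erase (σ.1 h') := fun σ =>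
    Lst_erase (Y_sub hh h') (h'_notMem_Y hh hh') (adj_child hh') (fun y hy hy' hhy => by
      rcases nbr_Y hh hy' hhy with h1 | h1
      · exact absurd (h1 ▸ hy) (self_notMem_Bl e)
      · exact h1) σ
  have hsum0 : ∀ σ : Col adj k, ∑ b ∈ Lst Be h σ, u (sw Be h b σ) = 0 := by
    intro σ
    have h1 := hu0 σ
    rw [Pr_eq_sw (anch_Bl hh) (by rw [Bl_erase hh]; exact hu) σ] at h1
    rcases div_eq_zero_iff.1 h1 with h2 | h2
    · exact h2
    · exact absurd h2 (Lst_card_pos _ _ _).ne'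
  have hy : ∀ σ : Col adj k, Pr Y u σ
      = (∑ b ∈ (Lst Be h σ).erase (σ.1 h'), u (sw Be h b σ)) / (Lst Y h σ).card := by
    intro σ
    rw [Pr_eq_sw (anch_Y hh h') (hu.mono (Y_erase_sub h')) σ]
    congr 1
    rw [hLe σ]
    apply sum_congr rfl
    intro b hb
    have hb1 : b ∈ Lst Be h σ := mem_of_mem_erase hb
    apply hagr
    · rw [sw_root (anch_Y hh h') (by rw [← hY, hLe σ]; exact hb), sw_root (anch_Bl hh) hb1]
    · intro x hx
      rw [sw_not_mem hx, sw_not_mem (fun h1 => hx (Y_sub hh h' h1))]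
  let g : Col adj k → ℝ := fun σ =>
    if σ.1 h' ∈ Lst Be h σ then u (sw Be h (σ.1 h') σ) ^ 2 else 0
  have hyg : ∀ σ : Col adj k, 4 * Pr Y u σ ^ 2 ≤ g σ := by
    intro σ
    rw [hy σ]
    by_cases hm : σ.1 h' ∈ Lst Be h σ
    · have h1 : ∑ b ∈ (Lst Be h σ).erase (σ.1 h'), u (sw Be h b σ)
          = - u (sw Be h (σ.1 h') σ) := by
        have := hsum0 σ
        rw [← add_sum_erase _ _ hm] at this
        linarith
      have h2 : ((Lst Y h σ).card : ℝ) = k - 2 := by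
        have h3 : (Lst Y h σ).card + 1 = (Lst Be h σ).card := by
          rw [hLe σ]; exact card_erase_add_one hm
        have h4 : (((Lst Y h σ).card + 1 : ℕ) : ℝ) = k - 1 := by rw [h3]; exact hX σ
        push_cast at h4; linarith
      have h3 : g σ = u (sw Be h (σ.1 h') σ) ^ 2 := if_pos hm
      rw [h1, h2, h3, div_pow, neg_sq, ← mul_div_assoc, div_le_iff₀ (by nlinarith)]
      nlinarith [sq_nonneg (u (sw Be h (σ.1 h') σ)), mul_nonneg
        (sq_nonneg (u (sw Be h (σ.1 h') σ))) (by nlinarith : (0 : ℝ) ≤ ((k : ℝ) - 2) ^ 2 - 4)]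
    · have h3 : g σ = 0 := if_neg hm
      rw [erase_eq_of_notMem hm, hsum0 σ, h3]
      simp
  have hgs : ∑ σ, g σ ≤ ∑ σ, u σ ^ 2 := by
    have h1 := sum_sw (anch_Bl hh') (w := fun _ => 1) (fun _ _ _ => rfl) g
    have h2 := sum_sw (anch_Bl hh) (w := fun _ => 1) (fun _ _ _ => rfl) (fun σ => u σ ^ 2)
    simp only [one_mul] at h1 h2
    rw [← h1, ← h2]
    apply sum_le_sum
    intro σ _
    rw [hX', hX]
    apply div_le_div_of_nonneg_right _ (by linarith)
    have h3 : ∀ b ∈ Lst (R.Bl h) h' σ, g (sw (R.Bl h) h' b σ)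
        = if b ∈ Lst Be h σ then u (sw Be h b σ) ^ 2 else 0 := by
      intro b hb
      have hr : (sw (R.Bl h) h' b σ).1 h' = b := sw_root (anch_Bl hh') hb
      have hl : Lst Be h (sw (R.Bl h) h' b σ) = Lst Be h σ :=
        (Lst_congr ((sw_agr (R.Bl h) h' b σ).mono hsub)).symm
      simp only [g]
      rw [hr, hl]
      split_ifs with hbX
      · congr 1
        apply hagr
        · rw [sw_root (anch_Bl hh) (by rw [← hBe, hl]; exact hbX), sw_root (anch_Bl hh) hbX]
        · intro x hx
          rw [sw_not_mem hx, sw_not_mem hx, sw_not_mem (fun h1 => hx (hsub h1))]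
      · rfl
    rw [sum_congr rfl h3, ← sum_filter]
    apply sum_le_sum_of_subset_of_nonneg
    · intro b hb; exact (mem_filter.1 hb).2
    · intro b _ _; positivity
  rw [mul_sum]
  exact (sum_le_sum fun σ _ => hyg σ).trans hgs

/-- The part of the conditional variance below `e` that is explained by the colour of `h`. -/
noncomputable def Vr (R : Rooted adj V) (e h : E) (f : Col adj k → ℝ) : ℝ :=
  En (R.Bl e) (Pr (R.Nl e h ∪ R.Bl h) f)

lemma sep_Y_Bl {e h h' : E} (hh : h ∈ R.Ch e) (hh' : h' ∈ R.Ch h) :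
    Sep adj (R.Nl e h ∪ insert h (R.Nl h h')) (R.Bl h') := by
  intro x hx y hy
  have hyh : y ∈ R.Bl h := sub_sub_Bl hh' (Bl_sub h' hy)
  rw [mem_union, mem_insert] at hx
  rcases hx with hx | rfl | hx
  · exact sep_Nl_Bl hh x hx y hyh
  · have hno : ¬ adj y x := fun h1 => by
      have := (boundary (Bl_sub h' hy) (parent_notMem hh') h1).1
      exact self_notMem_Bl h' (this ▸ hy)
    exact ⟨fun h1 => self_notMem_Bl x (by rwa [← h1] at hyh), fun h1 => hno (hsy.symm _ _ h1), hno⟩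
  · exact sep_Nl_Bl hh' x hx y hy

/-- One step along the heavy path: the variance explained by the colour of `h` is controlled by a
local term and half of the variance explained by the colour of the next edge `h'`. It follows from
`norm_contract` by duality. -/
lemma Vr_contract {e h h' : E} (hh : h ∈ R.Ch e) (hh' : h' ∈ R.Ch h) (hk4 : 4 ≤ k)
    (f : Col adj k → ℝ) :
    R.Vr e h f ≤ 6 * En (R.Nl e h ∪ insert h (R.Nl h h')) f + 1 / 2 * R.Vr h h' f := by
  set Y := R.Nl e h ∪ insert h (R.Nl h h') with hY
  set Be := R.Bl e with hBe
  set T := R.Nl e h ∪ R.Bl h with hT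
  set K := Y ∪ R.Bl h' with hK
  set J' := R.Nl h h' ∪ R.Bl h' with hJ'
  set J := R.Nl e h ∪ J' with hJ
  have hTB : T ⊆ Be := by rw [hBe, Bl_eq_insert hh]; exact subset_insert _ _
  have hYB : Y ⊆ Be := Y_sub hh h'
  have hb'h : R.Bl h' ⊆ R.Bl h := (Bl_sub h').trans (sub_sub_Bl hh')
  have hKB : K ⊆ Be := union_subset hYB ((hb'h.trans subset_union_right).trans hTB)
  have hJ'h : J' ⊆ R.Bl h := union_subset (Nl_sub h h') hb'h
  have hJT : J ⊆ T := union_subset_union_right hJ'h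
  have hJK : J ⊆ K := by
    intro x hx
    simp only [hJ, hJ', hK, hY, mem_union, mem_insert] at hx ⊢
    tauto
  -- the second part of the decomposition `f = (f - f₂) + f₂`
  let f₂ := Pr Y f
  let u₂ : Col adj k → ℝ := fun σ => Pr T f₂ σ - Pr Be f₂ σ
  have hu₂ : Inv T u₂ := (inv_Pr T f₂).sub ((inv_Pr Be f₂).mono hTB)
  have hu₂0 : ∀ σ, Pr Be u₂ σ = 0 := by
    intro σ
    simp only [u₂]
    rw [Pr_sub, Pr_Pr_of_subset hTB, Pr_Pr_of_superset (subset_refl _), sub_self]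
  have hBf₂ : Pr Be f₂ = Pr Be f := Pr_Pr_of_subset hYB f
  have hcon := norm_contract hh hh' hk4 hu₂ hu₂0
  have hV1 : R.Vr e h f ≤ 4 * En Y f + 4 / 3 * ∑ σ, u₂ σ ^ 2 := by
    have h1 : ∀ σ, Pr T f σ - Pr Be f σ = Pr T (fun σ => f σ - f₂ σ) σ + u₂ σ := by
      intro σ
      simp only [u₂]
      rw [Pr_sub, hBf₂]; ring
    have h2 : ∑ σ, Pr T (fun σ => f σ - f₂ σ) σ ^ 2 ≤ En Y f := sum_Pr_sq_le T _
    have h3 : R.Vr e h f = ∑ σ, (Pr T f σ - Pr Be f σ) ^ 2 := En_Pr hTB f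
    have h4 : R.Vr e h f ≤
        ∑ σ, (4 * Pr T (fun σ => f σ - f₂ σ) σ ^ 2 + 4 / 3 * u₂ σ ^ 2) := by
      rw [h3]
      apply sum_le_sum
      intro σ _
      rw [h1]
      nlinarith [sq_nonneg (3 * Pr T (fun σ => f σ - f₂ σ) σ - u₂ σ)]
    rw [sum_add_distrib, ← mul_sum, ← mul_sum] at h4
    linarith
  let y := Pr Y u₂
  let w : Col adj k → ℝ := fun σ => Pr K f σ - Pr Be f σ
  have hyB : ∀ σ, Pr Be y σ = 0 := fun σ => by
    show Pr Be (Pr Y u₂) σ = 0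
    rw [Pr_Pr_of_subset hYB]; exact hu₂0 σ
  have hsep := sep_Y_Bl hh hh'
  have hyK : Inv K y := by
    apply (inv_Pr Y u₂).union hsep
    exact Inv.Pr hsep (hu₂.mono (hb'h.trans subset_union_right))
  have hin : ∑ σ, u₂ σ ^ 2 = ∑ σ, y σ * w σ := by
    have e1 : ∑ σ, u₂ σ * Pr Be f₂ σ = 0 := by
      rw [← Pr_adj]; exact sum_eq_zero fun σ _ => by rw [hu₂0, zero_mul]
    have e2 : ∑ σ, u₂ σ * Pr T f₂ σ = ∑ σ, u₂ σ * f₂ σ := sum_mul_Pr hu₂ f₂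
    have e3 : ∑ σ, u₂ σ * f₂ σ = ∑ σ, y σ * f σ := (Pr_adj Y u₂ f).symm
    have e4 : ∑ σ, y σ * Pr K f σ = ∑ σ, y σ * f σ := sum_mul_Pr hyK f
    have e5 : ∑ σ, y σ * Pr Be f σ = 0 := by
      rw [← Pr_adj]; exact sum_eq_zero fun σ _ => by rw [hyB, zero_mul]
    have e6 : ∑ σ, u₂ σ ^ 2 = ∑ σ, u₂ σ * Pr T f₂ σ - ∑ σ, u₂ σ * Pr Be f₂ σ := by
      rw [← sum_sub_distrib]; exact sum_congr rfl fun σ _ => by simp only [u₂]; ring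
    have e7 : ∑ σ, y σ * w σ = ∑ σ, y σ * Pr K f σ - ∑ σ, y σ * Pr Be f σ := by
      rw [← sum_sub_distrib]; exact sum_congr rfl fun σ _ => by simp only [w]; ring
    rw [e6, e7, e1, e5, e2, e3, e4]
  have hle : ∑ σ, u₂ σ ^ 2 ≤ 2 * ∑ σ, y σ ^ 2 + 1 / 8 * ∑ σ, w σ ^ 2 := by
    rw [hin, mul_sum, mul_sum, ← sum_add_distrib]
    apply sum_le_sum
    intro σ _
    nlinarith [sq_nonneg (4 * y σ - w σ)]
  have hw : ∑ σ, w σ ^ 2 ≤ R.Vr h h' f + R.Vr e h f := by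
    have h1 : ∑ σ, w σ ^ 2 = En Be (Pr K f) := (En_Pr hKB f).symm
    have h2 : En Be (Pr K f) ≤ En Be (Pr J f) := by
      have := En_Pr_le hKB (Pr J f)
      rwa [Pr_Pr_of_subset hJK] at this
    have h3 : En Be (Pr J f) = En T (Pr J f) + R.Vr e h f := by
      rw [En_split hTB, Pr_Pr_of_subset hJT]; rfl
    have hs : Sep adj (R.Nl e h) (R.Bl h) := sep_Nl_Bl hh
    have hJu : Pr J f = Pr (R.Nl e h) (Pr J' f) := Pr_union (hs.mono (subset_refl _) hJ'h) f
    have h4 : En T (Pr J f) ≤ En (R.Nl e h) (Pr J f) + En (R.Bl h) (Pr J f) := En_union_le hs _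
    have h5 : En (R.Nl e h) (Pr J f) = 0 := by
      have h7 : Pr (R.Nl e h) (Pr J f) = Pr J f := Pr_Pr_of_superset subset_union_left f
      unfold En
      rw [h7]
      exact sum_eq_zero fun σ _ => by rw [sub_self]; norm_num
    have h6 : En (R.Bl h) (Pr J f) ≤ R.Vr h h' f := by
      rw [hJu]; exact En_Pr_sep hs _
    linarith
  have hcon' : 4 * ∑ σ, y σ ^ 2 ≤ ∑ σ, u₂ σ ^ 2 := hcon
  linarith

lemma Bl_empty {e : E} (he : R.Ch e = ∅) : R.Bl e = ∅ := by
  unfold Bl; rw [he]; rfl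

/-- One step along the heavy path when `h` has no children; `h' = h` is then a harmless choice. -/
lemma Vr_leaf {e h : E} (hh : h ∈ R.Ch e) (hc : R.Ch h = ∅) (f : Col adj k → ℝ) :
    R.Vr e h f ≤ 6 * En (R.Nl e h ∪ insert h (R.Nl h h)) f + 1 / 2 * R.Vr h h f := by
  have h1 : R.Nl e h ∪ insert h (R.Nl h h) = R.Bl e := by
    rw [Bl_eq_insert hh, Bl_empty hc]
    have : R.Nl h h = ∅ := by unfold Nl; rw [hc]; rfl
    rw [this, union_insert]
  have h2 : 0 ≤ R.Vr h h f := En_nonneg _ _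
  have h3 : R.Vr e h f ≤ En (R.Bl e) f := En_Pr_le (by
    rw [Bl_eq_insert hh]; exact subset_insert _ _) f
  rw [h1]
  have := En_nonneg (R.Bl e) f
  linarith

end Rooted

end HeavyPath

end TreeCol

/-! ### The Poincaré inequality by recursion over light subtrees -/

namespace TreeCol

section Recursion

set_option linter.unusedSectionVars false

variable {E V : Type} [Fintype E] {adj : E → E → Prop} [hsy : Std.Symm adj] {k : ℕ}

namespace Rooted

lemma exists_heavy (R : Rooted adj V) (e : E) : ∃ h, (R.Ch e = ∅ ∧ h = e) ∨
    (h ∈ R.Ch e ∧ ∀ c ∈ R.Ch e, (R.sub c).card ≤ (R.sub h).card) := by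
  rcases (R.Ch e).eq_empty_or_nonempty with h | h
  · exact ⟨e, Or.inl ⟨h, rfl⟩⟩
  · obtain ⟨x, hx, hm⟩ := exists_max_image (R.Ch e) (fun c => (R.sub c).card) h
    exact ⟨x, Or.inr ⟨hx, hm⟩⟩

/-- The heavy child of `e`: a child with a largest subtree, or `e` itself if there is none. -/
noncomputable def hv (R : Rooted adj V) (e : E) : E := (R.exists_heavy e).choose

variable {R : Rooted adj V}

lemma hv_spec (e : E) : (R.Ch e = ∅ ∧ R.hv e = e) ∨
    (R.hv e ∈ R.Ch e ∧ ∀ c ∈ R.Ch e, (R.sub c).card ≤ (R.sub (R.hv e)).card) :=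
  (R.exists_heavy e).choose_spec

lemma light {e c : E} (hc : c ∈ (R.Ch e).erase (R.hv e)) :
    2 * (R.sub c).card ≤ (R.Bl e).card := by
  obtain ⟨h1, h2⟩ := mem_erase.1 hc
  rcases hv_spec (R := R) e with ⟨h, _⟩ | ⟨hm, hmax⟩
  · rw [h] at h2; simp at h2
  · have hd : Disjoint (R.sub c) (R.sub (R.hv e)) :=
      disjoint_left.2 fun x hx => disj_Ch h2 hm h1 hx
    have h3 := card_le_card (union_subset (sub_sub_Bl h2) (sub_sub_Bl hm))
    rw [card_union_of_disjoint hd] at h3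
    have := hmax c h2
    omega

/-- The total conditional variance of the light subtrees below `e`. -/
noncomputable def SN (R : Rooted adj V) (f : Col adj k → ℝ) (e : E) : ℝ :=
  ∑ c ∈ (R.Ch e).erase (R.hv e), En (R.sub c) f

/-- The potential that is propagated along heavy paths. -/
noncomputable def Psi (R : Rooted adj V) (f : Col adj k → ℝ) (e : E) : ℝ :=
  En (R.Bl e) f + R.Vr e (R.hv e) f + 20000 * R.SN f e

lemma SN_nonneg (f : Col adj k → ℝ) (e : E) : 0 ≤ R.SN f e :=
  sum_nonneg fun _ _ => En_nonneg _ _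

lemma Vr_nonneg (f : Col adj k → ℝ) (e h : E) : 0 ≤ R.Vr e h f := En_nonneg _ _

lemma Psi_empty {e : E} (he : R.Ch e = ∅) (f : Col adj k → ℝ) : R.Psi f e = 0 := by
  unfold Psi Vr SN
  rw [Bl_empty he, En_empty, En_empty, he]
  simp

/-- The subtree with top edge `c` is controlled by the potential at `c`. -/
lemma En_sub_le (hk : ∀ e, (R.Ch e).card + 2 ≤ k) (hk4 : 4 ≤ k) (c : E) (f : Col adj k → ℝ) :
    En (R.sub c) f ≤ 53 * R.Psi f c + 30 * k * En {c} f := by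
  have h1 := En_below hk (subset_refl (R.Ch c)) f
  have h2 : (R.Ch c).biUnion R.sub ∪ {c} = R.sub c := by
    rw [sub_eq, union_comm]; rfl
  rw [h2] at h1
  have h3 : ∑ i ∈ R.Ch c, En (R.sub i) f ≤ R.Psi f c := by
    rcases hv_spec (R := R) c with ⟨h, _⟩ | ⟨hm, _⟩
    · rw [Psi_empty h, h]; simp
    · rw [← add_sum_erase _ _ hm]
      have h4 : En (R.sub (R.hv c)) f ≤ En (R.Bl c) f := En_mono (sub_sub_Bl hm) f
      have h5 := SN_nonneg (R := R) f c
      have h6 := Vr_nonneg (R := R) f c (R.hv c)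
      unfold Psi
      have h7 : ∑ i ∈ (R.Ch c).erase (R.hv c), En (R.sub i) f = R.SN f c := rfl
      linarith
  have hk4' : (4 : ℝ) ≤ k := by exact_mod_cast hk4
  have h8 := En_nonneg {c} f
  nlinarith

/-- Moving one edge down the heavy path does not multiply the potential by a constant, which is what
keeps the bound polynomial: only local terms and terms of light subtrees are added. -/
lemma Psi_step (hk : ∀ e, (R.Ch e).card + 2 ≤ k) (hk4 : 4 ≤ k) {e : E} (hm : R.hv e ∈ R.Ch e)
    (f : Col adj k → ℝ) :
    R.Psi f e ≤ R.Psi f (R.hv e) + 21000 * R.SN f e + 11000 * k * En {R.hv e} f := by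
  set h := R.hv e with hh
  set h' := R.hv h with hh'
  have hk4' : (4 : ℝ) ≤ k := by exact_mod_cast hk4
  have w1 : En (R.Bl e) f ≤ 5 * R.SN f e + En (R.Bl h) f + R.Vr e h f := by
    have hT : R.Nl e h ∪ R.Bl h ⊆ R.Bl e := by
      rw [Bl_eq_insert hm]; exact subset_insert _ _
    have h1 := En_split hT f
    have h2 := En_union_le (sep_Nl_Bl hm) f
    have h3 : En (R.Nl e h) f ≤ 5 * R.SN f e := En_Nl hk e h f
    have h4 : En (R.Bl e) (Pr (R.Nl e h ∪ R.Bl h) f) = R.Vr e h f := rfl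
    linarith
  have w2 : R.Vr e h f ≤ 6 * En (R.Nl e h ∪ insert h (R.Nl h h')) f + 1 / 2 * R.Vr h h' f := by
    rcases hv_spec (R := R) h with ⟨h1, h2⟩ | ⟨h1, _⟩
    · rw [hh', h2]; exact Vr_leaf hm h1 f
    · exact Vr_contract hm h1 hk4 f
  have w3 : En (R.Nl e h ∪ insert h (R.Nl h h')) f
      ≤ 53 * R.SN f e + 29 * En (insert h (R.Nl h h')) f := En_side hk hm h' f
  have w4 : En (insert h (R.Nl h h')) f ≤ 53 * R.SN f h + (24 * k + 5) * En {h} f := by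
    have h1 := En_below hk (erase_subset h' (R.Ch h)) f
    have h2 : ((R.Ch h).erase h').biUnion R.sub ∪ {h} = insert h (R.Nl h h') := by
      rw [union_comm]; rfl
    rwa [h2] at h1
  have n1 := En_nonneg {h} f
  have n2 := SN_nonneg (R := R) f e
  have n3 := SN_nonneg (R := R) f h
  have n4 := Vr_nonneg (R := R) f h h'
  have n5 : 4 * En {h} f ≤ k * En {h} f := mul_le_mul_of_nonneg_right hk4' n1
  unfold Psi
  nlinarith

lemma card_Bl_add (e : E) : (R.sub e).card = (R.Bl e).card + 1 := by
  rw [sub_eq, card_insert_of_notMem (self_notMem_Bl e)]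

lemma sum_Bl (e : E) (F : E → ℝ) :
    ∑ x ∈ R.Bl e, F x = ∑ c ∈ R.Ch e, (F c + ∑ x ∈ R.Bl c, F x) := by
  unfold Bl
  rw [sum_biUnion]
  · apply sum_congr rfl
    intro c _
    rw [sub_eq, sum_insert (self_notMem_Bl c)]
    rfl
  · intro c hc c' hc' hne
    exact disjoint_left.2 fun x hx => disj_Ch hc hc' hne hx

/-- The recursion of `Psi_step`, by induction on the size. The exponent `21` is chosen such that
`21000 * 53 ≤ 2 ^ 21`, where `53` is the constant of `En_sub_le`. -/
lemma Psi_le (hk : ∀ e, (R.Ch e).card + 2 ≤ k) (hk4 : 4 ≤ k) (f : Col adj k → ℝ) :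
    ∀ (n : ℕ) (e : E), (R.Bl e).card = n →
      R.Psi f e ≤ 10 ^ 6 * k * ((n : ℝ) + 1) ^ 21 * ∑ x ∈ R.Bl e, En {x} f := by
  have hk4' : (4 : ℝ) ≤ k := by exact_mod_cast hk4
  intro n
  induction n using Nat.strong_induction_on with
  | _ n ih =>
    intro e hn
    have hS : ∀ A : Finset E, 0 ≤ ∑ x ∈ A, En {x} f := fun A =>
      sum_nonneg fun _ _ => En_nonneg _ _
    rcases hv_spec (R := R) e with ⟨h1, _⟩ | ⟨hm, _⟩
    · rw [Psi_empty h1]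
      have := hS (R.Bl e)
      positivity
    · set h := R.hv e with hh
      set L : ℝ := 10 ^ 6 * k * ((n : ℝ) + 1) ^ 21 with hL
      have hp1 : (1 : ℝ) ≤ ((n : ℝ) + 1) ^ 21 := one_le_pow₀ (by linarith [Nat.cast_nonneg (α := ℝ) n])
      have hkL : 10 ^ 6 * (k : ℝ) ≤ L := le_mul_of_one_le_right (by positivity) hp1
      have hlt : (R.Bl h).card < n := by
        have h2 := card_le_card (sub_sub_Bl hm)
        rw [card_Bl_add, hn] at h2
        omega
      have hheavy : R.Psi f h ≤ L * ∑ x ∈ R.Bl h, En {x} f := by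
        refine (ih _ hlt h rfl).trans (mul_le_mul_of_nonneg_right ?_ (hS _))
        rw [hL]
        have : ((R.Bl h).card : ℝ) ≤ n := by exact_mod_cast hlt.le
        gcongr
      -- light subtrees have at most half the size: `2 ^ 21` absorbs the constant `21000 * 53`
      have hlight : ∀ c ∈ (R.Ch e).erase h,
          21000 * En (R.sub c) f ≤ L * (En {c} f + ∑ x ∈ R.Bl c, En {x} f) := by
        intro c hc
        have h2 := light hc
        rw [card_Bl_add, hn] at h2
        have h3 : R.Psi f c ≤ _ := ih _ (by omega) c rfl
        have h4 := En_sub_le hk hk4 c f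
        have h5 : 2 * (((R.Bl c).card : ℝ) + 1) ≤ n + 1 := by
          have : ((2 * ((R.Bl c).card + 1) : ℕ) : ℝ) ≤ n := by exact_mod_cast h2
          push_cast at this; linarith
        have h6 : 2 ^ 21 * (((R.Bl c).card : ℝ) + 1) ^ 21 ≤ ((n : ℝ) + 1) ^ 21 := by
          rw [← mul_pow]; exact pow_le_pow_left₀ (by positivity) h5 _
        have h7 : 21000 * (53 * R.Psi f c) ≤ L * ∑ x ∈ R.Bl c, En {x} f := by
          calc 21000 * (53 * R.Psi f c)
              ≤ 21000 * (53 * (10 ^ 6 * k * (((R.Bl c).card : ℝ) + 1) ^ 21 *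
                ∑ x ∈ R.Bl c, En {x} f)) := by linarith
            _ = (1113000 * (10 ^ 6 * k * (((R.Bl c).card : ℝ) + 1) ^ 21)) *
                ∑ x ∈ R.Bl c, En {x} f := by ring
            _ ≤ L * ∑ x ∈ R.Bl c, En {x} f := by
              apply mul_le_mul_of_nonneg_right _ (hS _)
              rw [hL]
              have h8 : 0 ≤ (((R.Bl c).card : ℝ) + 1) ^ 21 := by positivity
              have h9 : 1113000 * (((R.Bl c).card : ℝ) + 1) ^ 21 ≤ ((n : ℝ) + 1) ^ 21 := by
                linarith
              have := mul_le_mul_of_nonneg_left h9 (show (0 : ℝ) ≤ 10 ^ 6 * k by positivity)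
              linarith
        have h8 := En_nonneg {c} f
        have h9 : 630000 * (k : ℝ) * En {c} f ≤ L * En {c} f :=
          mul_le_mul_of_nonneg_right (by linarith) h8
        linarith
      have hSN : 21000 * R.SN f e
          ≤ ∑ c ∈ (R.Ch e).erase h, L * (En {c} f + ∑ x ∈ R.Bl c, En {x} f) := by
        unfold SN
        rw [mul_sum]
        exact sum_le_sum hlight
      have hstep := Psi_step hk hk4 hm f
      rw [← hh] at hstep
      have h8 := En_nonneg {h} f
      have h9 : 11000 * (k : ℝ) * En {h} f ≤ L * En {h} f :=
        mul_le_mul_of_nonneg_right (by linarith) h8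
      rw [sum_Bl, mul_sum, ← add_sum_erase _ _ hm]
      linarith

lemma sub_root : R.sub R.e0 = univ := by
  have key : ∀ (n : ℕ) (x : E), R.dep (R.up x) = n → x ∈ R.sub R.e0 := by
    intro n
    induction n with
    | zero =>
      intro x hx
      rcases R.parent x with h | ⟨f, hf⟩
      · rw [R.root_unique x h]; exact self_mem _
      · have := R.dep_low f
        rw [hf] at this; omega
    | succ n ih =>
      intro x hx
      rcases R.parent x with h | ⟨f, hf⟩
      · rw [R.root_unique x h]; exact self_mem _
      · have h1 := R.dep_low f
        rw [hf] at h1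
        exact child_mem (ih f (by omega)) hf.symm
  exact eq_univ_of_forall fun x => key _ x rfl

/-- The Poincaré inequality for edge colourings of a tree: the variance is at most a polynomial
factor times the sum of the single-edge conditional variances. -/
theorem poincare (R : Rooted adj V) (hk : ∀ e, (R.Ch e).card + 2 ≤ k) (hk4 : 4 ≤ k)
    (f : Col adj k → ℝ) :
    En univ f ≤ 10 ^ 8 * k * (Fintype.card E : ℝ) ^ 21 * ∑ x, En {x} f := by
  have h1 := En_sub_le hk hk4 R.e0 f
  have h2 := Psi_le hk hk4 f _ R.e0 rfl
  have h3 : ((R.Bl R.e0).card : ℝ) + 1 = Fintype.card E := by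
    have := card_Bl_add (R := R) R.e0
    rw [sub_root, card_univ] at this
    rw [this]; push_cast; rfl
  have h4 : ∑ x, En {x} f = En {R.e0} f + ∑ x ∈ R.Bl R.e0, En {x} f := by
    rw [← sum_insert (f := fun x => En {x} f) (self_notMem_Bl R.e0), ← sub_eq, sub_root]
  rw [sub_root] at h1
  rw [h3] at h2
  have hp1 : (1 : ℝ) ≤ (Fintype.card E : ℝ) ^ 21 := one_le_pow₀ (by
    rw [← h3]; linarith [Nat.cast_nonneg (α := ℝ) (R.Bl R.e0).card])
  have hS : 0 ≤ ∑ x ∈ R.Bl R.e0, En {x} f := sum_nonneg fun _ _ => En_nonneg _ _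
  have h0 := En_nonneg {R.e0} f
  set M : ℝ := k * (Fintype.card E : ℝ) ^ 21 with hM
  have hkM : (k : ℝ) ≤ M := le_mul_of_one_le_right (by positivity) hp1
  have hM0 : 0 ≤ M := le_trans (Nat.cast_nonneg k) hkM
  have h5 : (k : ℝ) * En {R.e0} f ≤ M * En {R.e0} f := mul_le_mul_of_nonneg_right hkM h0
  have h6 := mul_nonneg hM0 hS
  have h7 := mul_nonneg hM0 h0
  have e1 : 10 ^ 6 * (k : ℝ) * (Fintype.card E : ℝ) ^ 21 = 10 ^ 6 * M := by rw [hM]; ring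
  have e2 : 10 ^ 8 * (k : ℝ) * (Fintype.card E : ℝ) ^ 21 = 10 ^ 8 * M := by rw [hM]; ring
  rw [e1] at h2
  rw [h4, e2]
  linarith

end Rooted

end Recursion

end TreeCol

/-! ### Mixing of symmetric Markov chains -/

namespace TreeCol

section Chain

set_option linter.unusedSectionVars false

variable {Ω : Type} [Fintype Ω] [DecidableEq Ω]

/-- A symmetric transition matrix on a finite set. -/
structure SymChain (P : Matrix Ω Ω ℝ) : Prop where
  nonneg : ∀ x y, 0 ≤ P x y
  row : ∀ x, ∑ y, P x y = 1
  symm : ∀ x y, P x y = P y x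

namespace SymChain

variable {P : Matrix Ω Ω ℝ}

lemma col (hP : SymChain P) (y : Ω) : ∑ x, P x y = 1 := by
  rw [← hP.row y]; exact sum_congr rfl fun x _ => hP.symm x y

lemma sum_mulVec (hP : SymChain P) (f : Ω → ℝ) : ∑ x, P.mulVec f x = ∑ x, f x := by
  simp only [Matrix.mulVec, dotProduct]
  rw [sum_comm]
  apply sum_congr rfl
  intro y _
  rw [← sum_mul, hP.col, one_mul]

/-- Holding probability at least `β` bounds the loss of variance in one step from below by the
Dirichlet form. -/
lemma sq_mulVec_le (hP : SymChain P) {β : ℝ} (hβ : ∀ x, β ≤ P x x) (f : Ω → ℝ) :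
    ∑ x, P.mulVec f x ^ 2 ≤ ∑ x, f x ^ 2 - β * ∑ x, ∑ y, P x y * (f x - f y) ^ 2 := by
  have key : ∀ x, P.mulVec f x ^ 2 ≤
      ∑ y, P x y * f y ^ 2 - β * ∑ y, P x y * (f x - f y) ^ 2 := by
    intro x
    set D := ∑ y, P x y * (f x - f y) ^ 2 with hD
    have hD0 : 0 ≤ D := sum_nonneg fun y _ => mul_nonneg (hP.nonneg x y) (sq_nonneg _)
    set M := ∑ y, P x y * (f y - f x) with hM
    have hrow := hP.row x
    have h1 : P.mulVec f x = f x + M := by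
      simp only [Matrix.mulVec, dotProduct, hM, mul_sub]
      rw [sum_sub_distrib, ← sum_mul, hrow]; ring
    have h2 : ∑ y, P x y * f y ^ 2 = D + 2 * f x * M + f x ^ 2 := by
      have : ∀ y, P x y * f y ^ 2
          = P x y * (f x - f y) ^ 2 + 2 * f x * (P x y * (f y - f x)) + f x ^ 2 * P x y :=
        fun y => by ring
      simp_rw [this]
      rw [sum_add_distrib, sum_add_distrib, ← mul_sum, ← mul_sum, hrow, mul_one]
    have h3 : M ^ 2 ≤ (1 - P x x) * D := by
      have e1 : M = ∑ y ∈ univ.erase x, P x y * (f y - f x) := by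
        rw [hM, ← add_sum_erase _ _ (mem_univ x), sub_self, mul_zero, zero_add]
      have e2 : D = ∑ y ∈ univ.erase x, P x y * (f x - f y) ^ 2 := by
        rw [hD, ← add_sum_erase _ _ (mem_univ x), sub_self]; simp
      have e3 : 1 - P x x = ∑ y ∈ univ.erase x, P x y := by
        rw [← hrow, ← add_sum_erase _ _ (mem_univ x)]; ring
      rw [e1, e2, e3]
      apply sum_sq_le_sum_mul_sum_of_sq_le_mul
      · exact fun y _ => hP.nonneg x y
      · exact fun y _ => mul_nonneg (hP.nonneg x y) (sq_nonneg _)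
      · intro y _; exact le_of_eq (by ring)
    rw [h1, h2]
    nlinarith [mul_nonneg (sub_nonneg.2 (hβ x)) hD0]
  calc ∑ x, P.mulVec f x ^ 2
      ≤ ∑ x, (∑ y, P x y * f y ^ 2 - β * ∑ y, P x y * (f x - f y) ^ 2) :=
        sum_le_sum fun x _ => key x
    _ = _ := by
        rw [sum_sub_distrib, ← mul_sum]
        congr 1
        rw [sum_comm]
        apply sum_congr rfl
        intro y _
        rw [← sum_mul, hP.col, one_mul]

lemma pow_symm (hP : SymChain P) (t : ℕ) (x y : Ω) : (P ^ t) x y = (P ^ t) y x := by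
  have h : P.transpose = P := by ext i j; exact hP.symm j i
  have h2 : (P ^ t).transpose = P ^ t := by rw [Matrix.transpose_pow, h]
  exact congrFun (congrFun h2.symm x) y

lemma pow_row (hP : SymChain P) (t : ℕ) (x : Ω) : ∑ y, (P ^ t) x y = 1 := by
  have h : P.mulVec (fun _ => 1) = fun _ => 1 := by
    funext x; simp [Matrix.mulVec, dotProduct, hP.row]
  have h2 : (P ^ t).mulVec (fun _ => 1) = fun _ => (1 : ℝ) := by
    induction t with
    | zero => simp
    | succ t ih => rw [pow_succ, ← Matrix.mulVec_mulVec, h, ih]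
  have := congrFun h2 x
  simpa [Matrix.mulVec, dotProduct] using this

/-- Exponential `L²` decay of the distribution of the chain from a spectral gap. -/
lemma l2_decay (hP : SymChain P) {δ : ℝ} (hδ : δ ≤ 1)
    (hgap : ∀ f : Ω → ℝ, ∑ x, f x = 0 → ∑ x, P.mulVec f x ^ 2 ≤ (1 - δ) * ∑ x, f x ^ 2)
    (t : ℕ) (σ : Ω) :
    ∑ η, ((P ^ t) σ η - 1 / (Fintype.card Ω : ℝ)) ^ 2 ≤ (1 - δ) ^ t := by
  have hN : (0 : ℝ) < Fintype.card Ω := by exact_mod_cast Fintype.card_pos_iff.2 ⟨σ⟩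
  let f : Ω → ℝ := fun x => (if x = σ then 1 else 0) - 1 / (Fintype.card Ω : ℝ)
  have hf : ∑ x, f x = 0 := by
    simp only [f, sum_sub_distrib, sum_ite_eq', mem_univ, if_true, sum_const, card_univ,
      nsmul_eq_mul]
    field_simp; ring
  have hf2 : ∑ x, f x ^ 2 ≤ 1 := by
    have : ∑ x, f x ^ 2 = ∑ x, ((1 - 2 / (Fintype.card Ω : ℝ)) * (if x = σ then 1 else 0)
        + 1 / (Fintype.card Ω : ℝ) ^ 2) := by
      apply sum_congr rfl
      intro x _
      simp only [f]
      split_ifs <;> ring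
    rw [this, sum_add_distrib, ← mul_sum, sum_ite_eq' univ σ (fun _ => (1 : ℝ)), if_pos (mem_univ _),
      sum_const, card_univ, nsmul_eq_mul]
    have : (Fintype.card Ω : ℝ) * (1 / (Fintype.card Ω : ℝ) ^ 2) = 1 / (Fintype.card Ω : ℝ) := by
      field_simp
    rw [this]
    have : 2 / (Fintype.card Ω : ℝ) = 2 * (1 / (Fintype.card Ω : ℝ)) := by ring
    have h0 : 0 < 1 / (Fintype.card Ω : ℝ) := by positivity
    linarith
  have hdec : ∀ t : ℕ, ∑ x, (P ^ t).mulVec f x = 0 ∧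
      ∑ x, (P ^ t).mulVec f x ^ 2 ≤ (1 - δ) ^ t := by
    intro t
    induction t with
    | zero => simpa using ⟨hf, hf2⟩
    | succ t ih =>
      have e : (P ^ (t + 1)).mulVec f = P.mulVec ((P ^ t).mulVec f) := by
        rw [pow_succ', Matrix.mulVec_mulVec]
      rw [e]
      refine ⟨by rw [hP.sum_mulVec]; exact ih.1, (hgap _ ih.1).trans ?_⟩
      rw [pow_succ']
      exact mul_le_mul_of_nonneg_left ih.2 (by linarith)
  have he : ∀ η, (P ^ t).mulVec f η = (P ^ t) σ η - 1 / (Fintype.card Ω : ℝ) := by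
    intro η
    rw [hP.pow_symm t σ η]
    simp only [Matrix.mulVec, dotProduct, f, mul_sub, sum_sub_distrib, mul_ite, mul_one, mul_zero,
      sum_ite_eq', mem_univ, if_true]
    rw [← sum_mul, hP.pow_row, one_mul]
  have := (hdec t).2
  simp_rw [he] at this
  exact this

lemma pos_of_decay {ε : ℝ} {t : ℕ} {σ : Ω}
    (h : ∑ η, ((P ^ t) σ η - 1 / (Fintype.card Ω : ℝ)) ^ 2 ≤ ε)
    (hε : ε * (Fintype.card Ω : ℝ) ^ 2 < 1) (η : Ω) : 0 < (P ^ t) σ η := by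
  have hN : (0 : ℝ) < Fintype.card Ω := by exact_mod_cast Fintype.card_pos_iff.2 ⟨σ⟩
  have h1 : ((P ^ t) σ η - 1 / (Fintype.card Ω : ℝ)) ^ 2 ≤ ε :=
    (single_le_sum (f := fun η => ((P ^ t) σ η - 1 / (Fintype.card Ω : ℝ)) ^ 2)
      (fun _ _ => sq_nonneg _) (mem_univ η)).trans h
  by_contra hneg
  push Not at hneg
  have h2 : (1 / (Fintype.card Ω : ℝ)) ^ 2 ≤ ε := by
    refine le_trans ?_ h1
    have : 0 < 1 / (Fintype.card Ω : ℝ) := by positivity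
    nlinarith
  have h3 : (1 / (Fintype.card Ω : ℝ)) ^ 2 * (Fintype.card Ω : ℝ) ^ 2 = 1 := by field_simp
  have h4 := mul_le_mul_of_nonneg_right h2 (sq_nonneg (Fintype.card Ω : ℝ))
  linarith

lemma tv_of_decay {ε : ℝ} {t : ℕ} {σ : Ω}
    (h : ∑ η, ((P ^ t) σ η - 1 / (Fintype.card Ω : ℝ)) ^ 2 ≤ ε)
    (hε : ε * (Fintype.card Ω : ℝ) < 1 / 4) :
    (1 / 2) * ∑ η, |(P ^ t) σ η - 1 / (Fintype.card Ω : ℝ)| < 1 / 4 := by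
  set S := ∑ η, |(P ^ t) σ η - 1 / (Fintype.card Ω : ℝ)| with hS
  have h1 : S ^ 2 ≤ (∑ _η : Ω, (1 : ℝ)) *
      ∑ η, ((P ^ t) σ η - 1 / (Fintype.card Ω : ℝ)) ^ 2 := by
    apply sum_sq_le_sum_mul_sum_of_sq_le_mul
    · intros; norm_num
    · intros; positivity
    · intro η _; rw [sq_abs, one_mul]
  simp only [sum_const, card_univ, nsmul_eq_mul, mul_one] at h1
  have h2 := mul_le_mul_of_nonneg_left h (Nat.cast_nonneg (α := ℝ) (Fintype.card Ω))
  have h3 : S ^ 2 < (1 / 2) ^ 2 := by linarith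
  have h4 : S < 1 / 2 := lt_of_pow_lt_pow_left₀ 2 (by norm_num) h3
  linarith

/-- Total variation decay from a contraction of Lipschitz constants, for a metric `d` with
distances at least one and at most `D`. -/
lemma tv_of_contract (hP : SymChain P) {d : Ω → Ω → ℝ} {D κ : ℝ} (hκ : 0 ≤ κ)
    (hd0 : ∀ x y, 0 ≤ d x y) (hd1 : ∀ x y, x ≠ y → 1 ≤ d x y) (hdD : ∀ x y, d x y ≤ D)
    (hcon : ∀ (g : Ω → ℝ) (L : ℝ), (∀ x y, |g x - g y| ≤ L * d x y) →
      ∀ x y, |P.mulVec g x - P.mulVec g y| ≤ κ * L * d x y)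
    (t : ℕ) (σ : Ω) :
    (1 / 2) * ∑ η, |(P ^ t) σ η - 1 / (Fintype.card Ω : ℝ)| ≤ D * κ ^ t := by
  have hN : (0 : ℝ) < Fintype.card Ω := by exact_mod_cast Fintype.card_pos_iff.2 ⟨σ⟩
  let s : Ω → ℝ := fun η => if 0 ≤ (P ^ t) σ η - 1 / (Fintype.card Ω : ℝ) then 1 else -1
  have hs : ∀ x y, |s x - s y| ≤ 2 * d x y := by
    intro x y
    by_cases hxy : x = y
    · subst hxy; simp [hd0]
    · have h1 := hd1 x y hxy
      have h2 : |s x - s y| ≤ 2 := by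
        simp only [s]
        split_ifs <;> norm_num
      linarith
  have hiter : ∀ t : ℕ, ∀ x y, |(P ^ t).mulVec s x - (P ^ t).mulVec s y| ≤ 2 * κ ^ t * d x y := by
    intro t
    induction t with
    | zero => simpa using hs
    | succ t ih =>
      intro x y
      have e : (P ^ (t + 1)).mulVec s = P.mulVec ((P ^ t).mulVec s) := by
        rw [pow_succ', Matrix.mulVec_mulVec]
      rw [e]
      refine (hcon _ _ ih x y).trans (le_of_eq ?_)
      rw [pow_succ]; ring
  have hmean : ∑ x, (P ^ t).mulVec s x = ∑ x, s x := by
    generalize t = t'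
    induction t' with
    | zero => simp
    | succ t ih => rw [pow_succ', ← Matrix.mulVec_mulVec, hP.sum_mulVec, ih]
  have h1 : ∑ η, |(P ^ t) σ η - 1 / (Fintype.card Ω : ℝ)|
      = (∑ τ, ((P ^ t).mulVec s σ - (P ^ t).mulVec s τ)) / Fintype.card Ω := by
    have e1 : ∀ η, |(P ^ t) σ η - 1 / (Fintype.card Ω : ℝ)|
        = (P ^ t) σ η * s η - s η / (Fintype.card Ω : ℝ) := by
      intro η
      simp only [s]
      split_ifs with h
      · rw [abs_of_nonneg h]; ring
      · rw [abs_of_neg (not_le.1 h)]; ring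
    rw [sum_congr rfl fun η _ => e1 η, sum_sub_distrib, sum_sub_distrib, hmean, sum_const,
      card_univ, nsmul_eq_mul, ← sum_div, sub_div, mul_div_cancel_left₀ _ hN.ne']
    rfl
  have h2 : ∑ τ, ((P ^ t).mulVec s σ - (P ^ t).mulVec s τ) ≤ ∑ _τ : Ω, 2 * κ ^ t * D := by
    apply sum_le_sum
    intro τ _
    refine (le_abs_self _).trans ((hiter t σ τ).trans ?_)
    exact mul_le_mul_of_nonneg_left (hdD σ τ) (by positivity)
  rw [sum_const, card_univ, nsmul_eq_mul] at h2
  have h3 : (∑ τ, ((P ^ t).mulVec s σ - (P ^ t).mulVec s τ)) / Fintype.card Ω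
      ≤ 2 * κ ^ t * D := by
    rw [div_le_iff₀ hN]; linarith
  rw [h1]
  linarith

end SymChain

end Chain

end TreeCol

/-! ### The Glauber dynamics -/

namespace TreeCol

section Glauber

set_option linter.unusedSectionVars false

variable {E : Type} [Fintype E] {adj : E → E → Prop} {k : ℕ}

/-- One attempted update of the Glauber dynamics: recolour `e` with `c` if the result is proper. -/
noncomputable def upd (σ : Col adj k) (e : E) (c : Fin k) : Col adj k :=
  if h : ∀ a b, adj a b → Function.update σ.1 e c a ≠ Function.update σ.1 e c b then
    ⟨Function.update σ.1 e c, h⟩ else σ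

/-- The edges at which two colourings differ. -/
noncomputable def dif (σ η : Col adj k) : Finset E := univ.filter fun e => σ.1 e ≠ η.1 e

lemma mem_dif {σ η : Col adj k} {e : E} : e ∈ dif σ η ↔ σ.1 e ≠ η.1 e := by simp [dif]

lemma dif_comm (σ η : Col adj k) : dif σ η = dif η σ := by
  ext e; rw [mem_dif, mem_dif, ne_comm]

lemma dif_eq_singleton {σ η : Col adj k} (hne : σ ≠ η) {e : E} :
    dif σ η = {e} ↔ Agr {e} σ η := by
  constructor
  · intro h x hx
    rw [mem_singleton] at hx
    by_contra hc
    have : x ∈ dif σ η := mem_dif.2 hc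
    rw [h, mem_singleton] at this
    exact hx this
  · intro h
    ext x
    rw [mem_dif, mem_singleton]
    constructor
    · intro hx
      by_contra hc
      exact hx (h x (by rwa [mem_singleton]))
    · rintro rfl hc
      apply hne
      apply Subtype.ext
      funext y
      by_cases hy : y = x
      · rw [hy]; exact hc
      · exact h y (by rwa [mem_singleton])

lemma upd_eq_iff {σ η : Col adj k} (hne : σ ≠ η) (e : E) (c : Fin k) :
    upd σ e c = η ↔ c = η.1 e ∧ dif σ η = {e} := by
  rw [dif_eq_singleton hne]
  constructor
  · intro h
    unfold upd at h
    split_ifs at h with hp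
    · rw [← h]
      refine ⟨by simp, fun x hx => ?_⟩
      rw [mem_singleton] at hx
      simp [Function.update_of_ne hx]
    · exact absurd h hne
  · rintro ⟨h1, h2⟩
    have h3 : Function.update σ.1 e c = η.1 := by
      funext x
      by_cases hx : x = e
      · subst hx; simp [h1]
      · rw [Function.update_of_ne hx]; exact h2 x (by rwa [mem_singleton])
    unfold upd
    rw [dif_pos (by rw [h3]; exact η.2)]
    exact Subtype.ext h3

lemma upd_self (σ : Col adj k) (e : E) : upd σ e (σ.1 e) = σ := by
  unfold upd
  split_ifs
  · exact Subtype.ext (Function.update_eq_self e σ.1)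
  · rfl

lemma sum_singleton_ite (σ η : Col adj k) :
    ∑ e, (if dif σ η = {e} then (1 : ℝ) else 0) = if (dif σ η).card = 1 then 1 else 0 := by
  split_ifs with h
  · obtain ⟨a, ha⟩ := card_eq_one.1 h
    rw [ha]
    simp
  · apply sum_eq_zero
    intro e _
    rw [if_neg]
    intro h'
    exact h (by rw [h']; simp)

/-- The transition matrix of the Glauber dynamics, written as an average over the random choices
of an edge and a colour. -/
noncomputable def gl (adj : E → E → Prop) (k : ℕ) : Matrix (Col adj k) (Col adj k) ℝ :=
  fun σ η => (∑ e, ∑ c, if upd σ e c = η then (1 : ℝ) else 0) / (Fintype.card E * k)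

lemma gl_off {σ η : Col adj k} (hne : σ ≠ η) :
    gl adj k σ η = if (dif σ η).card = 1 then 1 / ((Fintype.card E : ℝ) * k) else 0 := by
  have h : ∑ e, ∑ c, (if upd σ e c = η then (1 : ℝ) else 0)
      = if (dif σ η).card = 1 then 1 else 0 := by
    rw [← sum_singleton_ite]
    apply sum_congr rfl
    intro e _
    simp_rw [upd_eq_iff hne]
    by_cases hd : dif σ η = {e} <;> simp [hd]
  unfold gl
  rw [h]
  split_ifs <;> simp

lemma gl_mulVec (g : Col adj k → ℝ) (σ : Col adj k) :
    (gl adj k).mulVec g σ = (∑ e, ∑ c, g (upd σ e c)) / (Fintype.card E * k) := by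
  simp only [Matrix.mulVec, dotProduct, gl]
  simp_rw [div_mul_eq_mul_div]
  rw [← sum_div]
  congr 1
  simp_rw [sum_mul]
  rw [sum_comm]
  apply sum_congr rfl
  intro e _
  rw [sum_comm]
  apply sum_congr rfl
  intro c _
  simp

lemma gl_nonneg (σ η : Col adj k) : 0 ≤ gl adj k σ η := by
  unfold gl
  apply div_nonneg _ (by positivity)
  exact sum_nonneg fun _ _ => sum_nonneg fun _ _ => by split_ifs <;> norm_num

lemma gl_symChain (hE : 0 < Fintype.card E) (hk : 0 < k) : SymChain (gl adj k) where
  nonneg := gl_nonneg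
  row σ := by
    have h := gl_mulVec (fun _ => 1) σ
    simp only [Matrix.mulVec, dotProduct, mul_one, sum_const, card_univ, nsmul_eq_mul,
      Fintype.card_fin] at h
    rw [h]
    have : (0 : ℝ) < Fintype.card E * k := by positivity
    exact div_self this.ne'
  symm σ η := by
    by_cases h : σ = η
    · rw [h]
    · rw [gl_off h, gl_off (Ne.symm h), dif_comm]

lemma gl_diag (hE : 0 < Fintype.card E) (hk : 0 < k) (σ : Col adj k) :
    1 / (k : ℝ) ≤ gl adj k σ σ := by
  unfold gl
  have hE' : (0 : ℝ) < Fintype.card E := by exact_mod_cast hE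
  have hk' : (0 : ℝ) < k := by exact_mod_cast hk
  rw [div_le_div_iff₀ hk' (by positivity)]
  have h1 : ∀ e, (1 : ℝ) ≤ ∑ c, if upd σ e c = σ then (1 : ℝ) else 0 := by
    intro e
    refine le_trans ?_ (single_le_sum (f := fun c => if upd σ e c = σ then (1 : ℝ) else 0)
      (fun c _ => by split_ifs <;> norm_num) (mem_univ (σ.1 e)))
    rw [if_pos (upd_self σ e)]
  have h2 : (Fintype.card E : ℝ) ≤ ∑ e, ∑ c, if upd σ e c = σ then (1 : ℝ) else 0 := by
    have := sum_le_sum (s := univ) fun e (_ : e ∈ univ) => h1 e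
    simpa using this
  rw [one_mul]
  exact mul_le_mul_of_nonneg_right h2 hk'.le

/-- The single-edge conditional variances are controlled by the Dirichlet form. -/
lemma sum_En_le (hE : 0 < Fintype.card E) (hk : 0 < k) (f : Col adj k → ℝ) :
    ∑ x, En {x} f ≤ Fintype.card E * k * ∑ σ, ∑ η, gl adj k σ η * (f σ - f η) ^ 2 := by
  have hmk : (0 : ℝ) < Fintype.card E * k := by positivity
  have h1 : ∀ x, En {x} f ≤
      ∑ σ, ∑ η : Col adj k, (if Agr {x} σ η then (f σ - f η) ^ 2 else 0) := by
    intro x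
    unfold En
    apply sum_le_sum
    intro σ _
    rw [← sum_filter]
    have hc := cls_pos {x} σ
    have e1 : f σ - Pr {x} f σ = (∑ η ∈ cls {x} σ, (f σ - f η)) / (cls {x} σ).card := by
      unfold Pr
      rw [sum_sub_distrib, sum_const, nsmul_eq_mul]
      field_simp
    have e2 : (∑ η ∈ cls {x} σ, (f σ - f η)) ^ 2
        ≤ (cls {x} σ).card * ∑ η ∈ cls {x} σ, (f σ - f η) ^ 2 := sq_sum_le_card_mul_sum_sq
    have hS : 0 ≤ ∑ η ∈ cls {x} σ, (f σ - f η) ^ 2 := sum_nonneg fun _ _ => sq_nonneg _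
    have hc1 : (1 : ℝ) ≤ (cls {x} σ).card := by
      have : 0 < (cls {x} σ).card := by exact_mod_cast hc
      exact_mod_cast this
    show _ ≤ ∑ η ∈ cls {x} σ, (f σ - f η) ^ 2
    rw [e1, div_pow, div_le_iff₀ (by positivity)]
    refine e2.trans ?_
    rw [mul_comm]
    apply mul_le_mul_of_nonneg_left _ hS
    nlinarith
  refine (sum_le_sum fun x _ => h1 x).trans (le_of_eq ?_)
  rw [sum_comm, mul_sum]
  apply sum_congr rfl
  intro σ _
  rw [sum_comm, mul_sum]
  apply sum_congr rfl
  intro η _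
  by_cases h : σ = η
  · subst h; simp
  · rw [gl_off h]
    simp_rw [← dif_eq_singleton h]
    have e3 : ∑ e, (if dif σ η = {e} then (f σ - f η) ^ 2 else 0)
        = (∑ e, (if dif σ η = {e} then (1 : ℝ) else 0)) * (f σ - f η) ^ 2 := by
      rw [sum_mul]; exact sum_congr rfl fun e _ => by split_ifs <;> simp
    rw [e3, sum_singleton_ite]
    split_ifs
    · field_simp
    · simp

lemma En_univ (f : Col adj k → ℝ) (hf : ∑ σ, f σ = 0) : En univ f = ∑ σ, f σ ^ 2 := by
  have : ∀ σ, Pr univ f σ = 0 := by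
    intro σ
    have h : cls univ σ = univ := by
      ext η; simp [mem_cls, Agr]
    unfold Pr
    rw [h, hf, zero_div]
  unfold En
  simp_rw [this, sub_zero]

/-- A Poincaré inequality gives a spectral gap for the Glauber dynamics. -/
lemma gl_gap (hE : 0 < Fintype.card E) (hk : 0 < k) {Γ : ℝ} (hΓ : 0 < Γ)
    (hpoin : ∀ f : Col adj k → ℝ, En univ f ≤ Γ * ∑ x, En {x} f)
    (f : Col adj k → ℝ) (hf : ∑ σ, f σ = 0) :
    ∑ σ, (gl adj k).mulVec f σ ^ 2 ≤
      (1 - 1 / (k * (Γ * (Fintype.card E * k)))) * ∑ σ, f σ ^ 2 := by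
  have hE' : (0 : ℝ) < Fintype.card E := by exact_mod_cast hE
  have hk' : (0 : ℝ) < k := by exact_mod_cast hk
  have h1 := (gl_symChain (adj := adj) hE hk).sq_mulVec_le (gl_diag hE hk) f
  have h2 := hpoin f
  rw [En_univ f hf] at h2
  set D := ∑ σ, ∑ η, gl adj k σ η * (f σ - f η) ^ 2
  have h3 : ∑ σ, f σ ^ 2 ≤ Γ * (Fintype.card E * k) * D := by
    refine h2.trans ?_
    rw [mul_assoc]
    exact mul_le_mul_of_nonneg_left (sum_En_le hE hk f) hΓ.le
  have h4 : 1 / (k * (Γ * (Fintype.card E * k))) * ∑ σ, f σ ^ 2 ≤ 1 / (k : ℝ) * D := by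
    rw [div_mul_eq_mul_div, div_mul_eq_mul_div, one_mul, one_mul,
      div_le_div_iff₀ (by positivity) hk']
    nlinarith
  linarith

/-- The colour `c` is not used by a neighbour of `e`. -/
def Av (σ : Col adj k) (e : E) (c : Fin k) : Prop := ∀ f, adj e f → σ.1 f ≠ c

variable [hsy : Std.Symm adj]

lemma upd_val (σ : Col adj k) (e : E) (c : Fin k) :
    (upd σ e c).1 = if Av σ e c then Function.update σ.1 e c else σ.1 := by
  have hir : ∀ a, ¬ adj a a := fun a h => σ.2 a a h rfl
  have hiff : (∀ a b, adj a b → Function.update σ.1 e c a ≠ Function.update σ.1 e c b) ↔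
      Av σ e c := by
    constructor
    · intro h f hf
      have hfe : f ≠ e := by rintro rfl; exact hir _ hf
      have := h e f hf
      rw [Function.update_self, Function.update_of_ne hfe] at this
      exact this.symm
    · intro h a b hab
      by_cases ha : a = e
      · subst ha
        have hb : b ≠ a := by rintro rfl; exact hir _ hab
        rw [Function.update_self, Function.update_of_ne hb]
        exact (h b hab).symm
      · rw [Function.update_of_ne ha]
        by_cases hb : b = e
        · subst hb
          rw [Function.update_self]
          exact h a (hsy.symm _ _ hab)
        · rw [Function.update_of_ne hb]
          exact σ.2 a b hab
  unfold upd
  by_cases h : Av σ e c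
  · rw [dif_pos (hiff.2 h), if_pos h]
  · rw [dif_neg (fun h' => h (hiff.1 h')), if_neg h]

lemma upd_ne (σ : Col adj k) {e x : E} (c : Fin k) (hx : x ≠ e) :
    (upd σ e c).1 x = σ.1 x := by
  rw [upd_val]; split_ifs
  · rw [Function.update_of_ne hx]
  · rfl

/-- Coupled updates at an edge where the colourings disagree. -/
lemma coupled_dif {σ η : Col adj k} {e : E} (he : e ∈ dif σ η) :
    ∑ c, ((dif (upd σ e c) (upd η e c)).card : ℝ)
      ≤ k * ((dif σ η).card - 1) + 2 * Fintype.card E := by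
  let B : Finset (Fin k) := univ.image σ.1 ∪ univ.image η.1
  have hB : (B.card : ℝ) ≤ 2 * Fintype.card E := by
    have h1 : B.card ≤ _ := card_union_le (univ.image σ.1) (univ.image η.1)
    have h2 := card_image_le (s := (univ : Finset E)) (f := σ.1)
    have h3 := card_image_le (s := (univ : Finset E)) (f := η.1)
    rw [card_univ] at h2 h3
    have : B.card ≤ 2 * Fintype.card E := by omega
    exact_mod_cast this
  have h : ∀ c, ((dif (upd σ e c) (upd η e c)).card : ℝ)
      ≤ ((dif σ η).card - 1) + if c ∈ B then 1 else 0 := by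
    intro c
    split_ifs with hc
    · have : dif (upd σ e c) (upd η e c) ⊆ dif σ η := by
        intro x hx
        by_cases hxe : x = e
        · rw [hxe]; exact he
        · rw [mem_dif, upd_ne σ c hxe, upd_ne η c hxe] at hx
          exact mem_dif.2 hx
      have := card_le_card this
      have : ((dif (upd σ e c) (upd η e c)).card : ℝ) ≤ (dif σ η).card := by exact_mod_cast this
      linarith
    · have ha : Av σ e c := fun f _ h => hc (mem_union_left _ (mem_image.2 ⟨f, mem_univ _, h⟩))
      have hb : Av η e c := fun f _ h => hc (mem_union_right _ (mem_image.2 ⟨f, mem_univ _, h⟩))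
      have : dif (upd σ e c) (upd η e c) ⊆ (dif σ η).erase e := by
        intro x hx
        by_cases hxe : x = e
        · rw [mem_dif, upd_val, upd_val, if_pos ha, if_pos hb, hxe] at hx
          simp at hx
        · rw [mem_dif, upd_ne σ c hxe, upd_ne η c hxe] at hx
          exact mem_erase.2 ⟨hxe, mem_dif.2 hx⟩
      have h1 := card_le_card this
      have h2 := card_erase_add_one he
      have : (((dif (upd σ e c) (upd η e c)).card + 1 : ℕ) : ℝ) ≤ (dif σ η).card := by
        exact_mod_cast (by omega)
      push_cast at this
      linarith
  refine (sum_le_sum fun c _ => h c).trans ?_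
  rw [sum_add_distrib, sum_const, card_univ, Fintype.card_fin, nsmul_eq_mul, ← sum_filter]
  simp only [sum_const, nsmul_eq_mul, mul_one, filter_mem_eq_inter, univ_inter]
  linarith

/-- Coupled updates at an edge where the colourings agree. -/
lemma coupled_same {σ η : Col adj k} {e : E} (he : e ∉ dif σ η) :
    ∑ c, ((dif (upd σ e c) (upd η e c)).card : ℝ) ≤ k * (dif σ η).card + 2 * (dif σ η).card := by
  let B : Finset (Fin k) := (dif σ η).image σ.1 ∪ (dif σ η).image η.1
  have hB : (B.card : ℝ) ≤ 2 * (dif σ η).card := by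
    have h1 : B.card ≤ _ := card_union_le ((dif σ η).image σ.1) ((dif σ η).image η.1)
    have h2 := card_image_le (s := dif σ η) (f := σ.1)
    have h3 := card_image_le (s := dif σ η) (f := η.1)
    have : B.card ≤ 2 * (dif σ η).card := by omega
    exact_mod_cast this
  have he' : σ.1 e = η.1 e := by
    by_contra h; exact he (mem_dif.2 h)
  have h : ∀ c, ((dif (upd σ e c) (upd η e c)).card : ℝ)
      ≤ (dif σ η).card + if c ∈ B then 1 else 0 := by
    intro c
    split_ifs with hc
    · have : dif (upd σ e c) (upd η e c) ⊆ insert e (dif σ η) := by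
        intro x hx
        by_cases hxe : x = e
        · rw [hxe]; exact mem_insert_self _ _
        · rw [mem_dif, upd_ne σ c hxe, upd_ne η c hxe] at hx
          exact mem_insert_of_mem (mem_dif.2 hx)
      have h1 := card_le_card this
      have h2 := card_insert_le e (dif σ η)
      exact_mod_cast h1.trans h2
    · have hav : Av σ e c ↔ Av η e c := by
        constructor
        · intro h f hf hfc
          by_cases hfd : f ∈ dif σ η
          · exact hc (mem_union_right _ (mem_image.2 ⟨f, hfd, hfc⟩))
          · rw [mem_dif, not_not] at hfd
            exact h f hf (hfd.trans hfc)
        · intro h f hf hfc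
          by_cases hfd : f ∈ dif σ η
          · exact hc (mem_union_left _ (mem_image.2 ⟨f, hfd, hfc⟩))
          · rw [mem_dif, not_not] at hfd
            exact h f hf (hfd.symm.trans hfc)
      have : dif (upd σ e c) (upd η e c) ⊆ dif σ η := by
        intro x hx
        by_cases hxe : x = e
        · rw [mem_dif, upd_val, upd_val, hxe] at hx
          by_cases ha : Av σ e c
          · rw [if_pos ha, if_pos (hav.1 ha)] at hx
            simp at hx
          · rw [if_neg ha, if_neg (fun h => ha (hav.2 h))] at hx
            exact absurd he' hx
        · rw [mem_dif, upd_ne σ c hxe, upd_ne η c hxe] at hx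
          exact mem_dif.2 hx
      have h1 := card_le_card this
      rw [add_zero]
      exact_mod_cast h1
  refine (sum_le_sum fun c _ => h c).trans ?_
  rw [sum_add_distrib, sum_const, card_univ, Fintype.card_fin, nsmul_eq_mul, ← sum_filter]
  simp only [sum_const, nsmul_eq_mul, mul_one, filter_mem_eq_inter, univ_inter]
  linarith

lemma coupled_sum (hk8 : 8 * Fintype.card E ≤ k) (σ η : Col adj k) :
    ∑ e, ∑ c, ((dif (upd σ e c) (upd η e c)).card : ℝ)
      ≤ (Fintype.card E * k - k / 2) * (dif σ η).card := by
  set m : ℝ := (Fintype.card E : ℝ) with hm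
  set d : ℝ := ((dif σ η).card : ℝ) with hd
  have hd0 : 0 ≤ d := Nat.cast_nonneg _
  have hm0 : 0 ≤ m := Nat.cast_nonneg _
  have hk8' : 8 * m ≤ k := by rw [hm]; exact_mod_cast hk8
  have h : ∀ e, ∑ c, ((dif (upd σ e c) (upd η e c)).card : ℝ)
      ≤ (k * d + 2 * d) + (if e ∈ dif σ η then 2 * m - k else 0) := by
    intro e
    split_ifs with he
    · have := coupled_dif he
      rw [← hm, ← hd] at this
      linarith
    · have := coupled_same he
      rw [← hd] at this
      linarith
  refine (sum_le_sum fun e _ => h e).trans ?_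
  rw [sum_add_distrib, sum_const, card_univ, nsmul_eq_mul, ← sum_filter, filter_mem_eq_inter,
    univ_inter, sum_const, nsmul_eq_mul, ← hm, ← hd]
  nlinarith

/-- With at least `8|E|` colours, the identity coupling contracts the Hamming distance. -/
lemma gl_contract (hE : 0 < Fintype.card E) (hk8 : 8 * Fintype.card E ≤ k)
    (g : Col adj k → ℝ) (L : ℝ) (hg : ∀ x y, |g x - g y| ≤ L * (dif x y).card) (x y : Col adj k) :
    |(gl adj k).mulVec g x - (gl adj k).mulVec g y|
      ≤ (1 - 1 / (2 * Fintype.card E)) * L * (dif x y).card := by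
  have hE' : (0 : ℝ) < Fintype.card E := by exact_mod_cast hE
  have hk' : (0 : ℝ) < k := by
    have : 0 < k := by omega
    exact_mod_cast this
  have hL : 0 ≤ L ∨ dif x y = ∅ := by
    by_cases h : dif x y = ∅
    · exact Or.inr h
    · left
      have h1 := (abs_nonneg _).trans (hg x y)
      have h2 : (0 : ℝ) < (dif x y).card := by
        exact_mod_cast card_pos.2 (nonempty_iff_ne_empty.2 h)
      exact nonneg_of_mul_nonneg_left h1 h2
  rcases hL with hL | hL
  · rw [gl_mulVec, gl_mulVec, ← sub_div, abs_div, abs_of_pos (by positivity : (0 : ℝ) < Fintype.card E * k),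
      div_le_iff₀ (by positivity)]
    calc |∑ e, ∑ c, g (upd x e c) - ∑ e, ∑ c, g (upd y e c)|
        = |∑ e, ∑ c, (g (upd x e c) - g (upd y e c))| := by
          simp only [sum_sub_distrib]
      _ ≤ ∑ e, ∑ c, |g (upd x e c) - g (upd y e c)| :=
          (abs_sum_le_sum_abs _ _).trans (sum_le_sum fun e _ => abs_sum_le_sum_abs _ _)
      _ ≤ ∑ e, ∑ c, L * (dif (upd x e c) (upd y e c)).card :=
          sum_le_sum fun e _ => sum_le_sum fun c _ => hg _ _
      _ = L * ∑ e, ∑ c, ((dif (upd x e c) (upd y e c)).card : ℝ) := by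
          simp only [mul_sum]
      _ ≤ L * ((Fintype.card E * k - k / 2) * (dif x y).card) :=
          mul_le_mul_of_nonneg_left (coupled_sum hk8 x y) hL
      _ = _ := by field_simp
  · have hxy : x = y := by
      apply Subtype.ext; funext e
      by_contra h
      have : e ∈ dif x y := mem_dif.2 h
      rw [hL] at this
      simp at this
    subst hxy
    simp [hL]

end Glauber

end TreeCol

/-! ### Rooting a tree at a leaf -/

namespace TreeCol

section FromTree

set_option linter.unusedSectionVars false

variable {V : Type} [Fintype V] [DecidableEq V] {G : SimpleGraph V} [DecidableRel G.Adj]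

instance edgeInc_symm : Std.Symm (fun e f : Edge G => EdgeInc e.1 f.1) :=
  ⟨fun _ _ h => ⟨h.1.symm, h.2.imp fun _ hv => ⟨hv.2, hv.1⟩⟩⟩

/-- In a tree, a vertex has at most one neighbour closer to the root. -/
lemma closer_unique (hG : G.IsTree) (r : V) {a a' b : V} (h : G.Adj a b) (h' : G.Adj a' b)
    (hd : G.dist r b = G.dist r a + 1) (hd' : G.dist r b = G.dist r a' + 1) : a = a' := by
  obtain ⟨p, hp⟩ := hG.connected.exists_walk_length_eq_dist r a
  obtain ⟨p', hp'⟩ := hG.connected.exists_walk_length_eq_dist r a'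
  have h1 : (p.concat h).IsPath :=
    SimpleGraph.Walk.isPath_of_length_eq_dist _ (by rw [SimpleGraph.Walk.length_concat, hp, hd])
  have h2 : (p'.concat h').IsPath :=
    SimpleGraph.Walk.isPath_of_length_eq_dist _ (by rw [SimpleGraph.Walk.length_concat, hp', hd'])
  have h3 := (hG.existsUnique_path r b).unique h1 h2
  have h4 := congrArg SimpleGraph.Walk.penultimate h3
  simpa using h4

/-- A vertex other than the root has a neighbour closer to the root. -/
lemma exists_closer (hG : G.IsTree) {r a : V} (hne : a ≠ r) :
    ∃ w, G.Adj w a ∧ G.dist r a = G.dist r w + 1 := by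
  obtain ⟨p, hp⟩ := hG.connected.exists_walk_length_eq_dist r a
  have hnil : ¬ p.Nil := SimpleGraph.Walk.not_nil_of_ne hne.symm
  have hadj := p.adj_penultimate hnil
  refine ⟨p.penultimate, hadj, ?_⟩
  have h1 := SimpleGraph.dist_le p.dropLast
  have h2 : p.dropLast.length + 1 = p.length := by
    have h := congrArg SimpleGraph.Walk.length (p.concat_dropLast hadj)
    rwa [SimpleGraph.Walk.length_concat] at h
  rcases hG.dist_eq_dist_add_one_of_adj r hadj with h | h <;> omega

lemma exists_up_low (hG : G.IsTree) (r : V) (e : Edge G) :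
    ∃ q : V × V, e.1 = s(q.1, q.2) ∧ G.Adj q.1 q.2 ∧ G.dist r q.2 = G.dist r q.1 + 1 := by
  obtain ⟨e, he⟩ := e
  induction e using Sym2.ind with
  | _ a b =>
    have hab : G.Adj a b := by simpa using he
    rcases hG.dist_eq_dist_add_one_of_adj r hab with h | h
    · exact ⟨(b, a), Sym2.eq_swap, hab.symm, h⟩
    · exact ⟨(a, b), rfl, hab, h⟩

/-- A tree, rooted at a leaf, gives a rooted structure on its edges; an edge `e` has at most
`Δ - 1` child edges. -/
lemma exists_rooted (hG : G.IsTree) (hV : 2 ≤ Fintype.card V) :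
    ∃ R : Rooted (fun e f : Edge G => EdgeInc e.1 f.1) V,
      ∀ e, (R.Ch e).card + 1 ≤ G.maxDegree := by
  have : Nontrivial V := Fintype.one_lt_card_iff_nontrivial.1 hV
  obtain ⟨r, hr⟩ := hG.exists_vert_degree_one_of_nontrivial
  obtain ⟨s, hrs, hs⟩ := SimpleGraph.degree_eq_one_iff_existsUnique_adj.1 hr
  choose q hq hqa hqd using exists_up_low hG r
  have hlow : ∀ e f, (q e).2 = (q f).2 → e = f := by
    intro e f h
    have h1 : (q e).1 = (q f).1 :=
      closer_unique hG r (hqa e) (h ▸ hqa f) (hqd e) (by rw [h]; exact hqd f)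
    apply Subtype.ext
    rw [hq e, hq f, h, h1]
  have hup0 : ∀ e, (q e).1 = r → (q e).2 = s := fun e h => hs _ (h ▸ hqa e)
  let e0 : Edge G := ⟨s(r, s), by simpa using hrs⟩
  have he0 : (q e0).1 = r := by
    have h1 : s(r, s) = s((q e0).1, (q e0).2) := hq e0
    rcases Sym2.eq_iff.1 h1 with h | h
    · exact h.1.symm
    · have := hqd e0
      rw [← h.1, SimpleGraph.dist_self] at this
      omega
  let R : Rooted (fun e f : Edge G => EdgeInc e.1 f.1) V :=
    { up := fun e => (q e).1
      low := fun e => (q e).2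
      dep := G.dist r
      e0 := e0
      low_inj := hlow
      dep_low := hqd
      root_unique := by
        intro e he
        rw [he0] at he
        exact hlow e e0 (by rw [hup0 e he, hup0 e0 he0])
      parent := by
        intro e
        by_cases h : (q e).1 = r
        · left; rw [h, he0]
        · right
          obtain ⟨w, hw, hd⟩ := exists_closer hG h
          let f : Edge G := ⟨s(w, (q e).1), by simpa using hw⟩
          refine ⟨f, ?_⟩
          have h1 : s(w, (q e).1) = s((q f).1, (q f).2) := hq f
          rcases Sym2.eq_iff.1 h1 with h | h
          · exact h.2.symm
          · have := hqd f
            rw [← h.1, ← h.2] at this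
            omega
      adj_iff := by
        intro e f
        constructor
        · rintro ⟨hne, v, hv, hv'⟩
          have hne' : e ≠ f := fun h => hne (congrArg _ h)
          refine ⟨hne', ?_⟩
          rw [hq e, Sym2.mem_iff] at hv
          rw [hq f, Sym2.mem_iff] at hv'
          rcases hv with hv | hv <;> rcases hv' with hv' | hv'
          · exact Or.inl (hv.symm.trans hv')
          · exact Or.inr (Or.inl (hv.symm.trans hv'))
          · exact Or.inr (Or.inr (hv.symm.trans hv'))
          · exact absurd (hlow e f (hv.symm.trans hv')) hne'
        · rintro ⟨hne, h⟩
          refine ⟨fun h => hne (Subtype.ext h), ?_⟩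
          rw [hq e, hq f]
          rcases h with h | h | h
          · exact ⟨(q e).1, by simp, by simp [h]⟩
          · exact ⟨(q e).1, by simp, by simp [h]⟩
          · exact ⟨(q e).2, by simp, by simp [h]⟩ }
  refine ⟨R, fun e => ?_⟩
  have hnot : e ∉ R.Ch e := by
    intro h
    have h1 : (q e).1 = (q e).2 := Rooted.mem_Ch.1 h
    exact (hqa e).ne h1
  -- the child edges of `e` and `e` itself are distinct edges at the vertex `low e`
  have hsub : (insert e (R.Ch e)).image (fun x : Edge G => x.1)
      ⊆ G.incidenceFinset (q e).2 := by
    intro x hx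
    obtain ⟨y, hy, rfl⟩ := mem_image.1 hx
    rw [SimpleGraph.mem_incidenceFinset]
    refine ⟨SimpleGraph.mem_edgeFinset.1 y.2, ?_⟩
    rw [hq y]
    rcases mem_insert.1 hy with rfl | hy
    · simp
    · have h1 : (q y).1 = (q e).2 := Rooted.mem_Ch.1 hy
      simp [h1]
  have h1 := card_le_card hsub
  rw [card_image_of_injective _ Subtype.val_injective, card_insert_of_notMem hnot,
    SimpleGraph.card_incidenceFinset_eq_degree] at h1
  exact h1.trans (G.degree_le_maxDegree _)

end FromTree

end TreeCol

/-! ### Mixing time bounds for trees -/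

namespace TreeCol

section Final

set_option linter.unusedSectionVars false

variable {E V : Type} [Fintype E] {adj : E → E → Prop} [hsy : Std.Symm adj] {k : ℕ}

/-- The spectral-gap lower bound given by the Poincaré inequality on a tree with `m` edges. -/
noncomputable def gapConst (m k : ℕ) : ℝ :=
  1 / (k * ((10 ^ 8 * k * (m : ℝ) ^ 21) * (m * k)))

lemma gapConst_pos {m k : ℕ} (hm : 0 < m) (hk : 0 < k) : 0 < gapConst m k := by
  unfold gapConst; positivity

lemma gapConst_le_one {m k : ℕ} (hm : 0 < m) (hk : 0 < k) : gapConst m k ≤ 1 := by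
  unfold gapConst
  have hk' : (1 : ℝ) ≤ k := by exact_mod_cast hk
  have hm' : (1 : ℝ) ≤ m := by exact_mod_cast hm
  apply div_le_one_of_le₀ _ (by positivity)
  have h1 : (1 : ℝ) ≤ m ^ 21 := one_le_pow₀ hm'
  have h2 : (1 : ℝ) ≤ 10 ^ 8 * k * (m : ℝ) ^ 21 :=
    one_le_mul_of_one_le_of_one_le (one_le_mul_of_one_le_of_one_le (by norm_num) hk') h1
  exact one_le_mul_of_one_le_of_one_le hk'
    (one_le_mul_of_one_le_of_one_le h2 (one_le_mul_of_one_le_of_one_le hm' hk'))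

lemma tree_decay (R : Rooted adj V) (hk : ∀ e, (R.Ch e).card + 2 ≤ k) (hk4 : 4 ≤ k)
    (t : ℕ) (σ : Col adj k) :
    ∑ η, ((gl adj k ^ t) σ η - 1 / (Fintype.card (Col adj k) : ℝ)) ^ 2
      ≤ (1 - gapConst (Fintype.card E) k) ^ t := by
  have hE : 0 < Fintype.card E := Fintype.card_pos_iff.2 ⟨R.e0⟩
  have hk0 : 0 < k := by omega
  have hE' : (0 : ℝ) < Fintype.card E := by exact_mod_cast hE
  have hk' : (0 : ℝ) < k := by exact_mod_cast hk0
  refine (gl_symChain hE hk0).l2_decay (gapConst_le_one hE hk0) ?_ t σ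
  intro f hf
  exact gl_gap hE hk0 (by positivity) (R.poincare hk hk4) f hf

lemma tree_ergodic (R : Rooted adj V) (hk : ∀ e, (R.Ch e).card + 2 ≤ k) (hk4 : 4 ≤ k) :
    ∃ t : ℕ, ∀ σ η : Col adj k, 0 < (gl adj k ^ t) σ η := by
  have hE : 0 < Fintype.card E := Fintype.card_pos_iff.2 ⟨R.e0⟩
  have hk0 : 0 < k := by omega
  have h0 := gapConst_pos hE hk0
  have h1 := gapConst_le_one hE hk0
  set N : ℝ := (Fintype.card (Col adj k) : ℝ) with hN
  have hN0 : 0 ≤ N := Nat.cast_nonneg _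
  obtain ⟨t, ht⟩ := exists_pow_lt_of_lt_one (x := 1 / (N ^ 2 + 1))
    (y := 1 - gapConst (Fintype.card E) k) (by positivity) (by linarith)
  refine ⟨t, fun σ η => SymChain.pos_of_decay (tree_decay R hk hk4 t σ) ?_ η⟩
  rw [lt_div_iff₀ (by positivity)] at ht
  have h2 : 0 ≤ (1 - gapConst (Fintype.card E) k) ^ t := pow_nonneg (by linarith) _
  rw [← hN]
  linarith

/-- The number of colourings is at most `k ^ |E| ≤ exp (k |E|)`. -/
lemma card_col_le : (Fintype.card (Col adj k) : ℝ) ≤ Real.exp (k * Fintype.card E) := by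
  have h1 : Fintype.card (Col adj k) ≤ k ^ Fintype.card E := by
    refine (Fintype.card_subtype_le _).trans ?_
    simp
  have h2 : (k : ℝ) ≤ Real.exp k := by
    have := Real.add_one_le_exp (k : ℝ)
    linarith
  calc (Fintype.card (Col adj k) : ℝ) ≤ (k : ℝ) ^ Fintype.card E := by exact_mod_cast h1
    _ ≤ Real.exp k ^ Fintype.card E := pow_le_pow_left₀ (Nat.cast_nonneg _) h2 _
    _ = Real.exp (k * Fintype.card E) := by rw [← Real.exp_nat_mul, mul_comm]

/-- Mixing when `k` is at most linear in `n`, from the spectral gap. -/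
lemma mixing_small (R : Rooted adj V) (hk : ∀ e, (R.Ch e).card + 2 ≤ k) (hk4 : 4 ≤ k)
    {n : ℕ} (hn : Fintype.card E + 1 = n) (hn4 : 4 ≤ n) (hkn : k ≤ 8 * n) {t : ℕ}
    (ht : (t : ℝ) = (n : ℝ) ^ 50) (σ : Col adj k) :
    (1 / 2) * ∑ η, |(gl adj k ^ t) σ η - 1 / (Fintype.card (Col adj k) : ℝ)| < 1 / 4 := by
  have hE : 0 < Fintype.card E := Fintype.card_pos_iff.2 ⟨R.e0⟩
  have hk0 : 0 < k := by omega
  have hE' : (0 : ℝ) < Fintype.card E := by exact_mod_cast hE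
  have hk' : (0 : ℝ) < k := by exact_mod_cast hk0
  have hn' : (4 : ℝ) ≤ n := by exact_mod_cast hn4
  have hkn' : (k : ℝ) ≤ 8 * n := by exact_mod_cast hkn
  have hmn : (Fintype.card E : ℝ) ≤ n := by exact_mod_cast (by omega : Fintype.card E ≤ n)
  refine SymChain.tv_of_decay (tree_decay R hk hk4 _ σ) ?_
  set m : ℝ := (Fintype.card E : ℝ) with hm
  set δ := gapConst (Fintype.card E) k with hδ
  have h1 : δ ≤ 1 := gapConst_le_one hE hk0
  -- the gap is at least `1 / (10 ^ 12 n ^ 25)`, and `10 ^ 12 ≤ 4 ^ 20 ≤ n ^ 20`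
  have hδn : 1 ≤ δ * (n : ℝ) ^ 45 := by
    have h3 : (10 : ℝ) ^ 12 ≤ (n : ℝ) ^ 20 :=
      (by norm_num : (10 : ℝ) ^ 12 ≤ 4 ^ 20).trans (pow_le_pow_left₀ (by norm_num) hn' _)
    rw [hδ, gapConst, ← hm, div_mul_eq_mul_div, one_mul, one_le_div (by positivity)]
    calc (k : ℝ) * (10 ^ 8 * k * m ^ 21 * (m * k)) = 10 ^ 8 * k ^ 3 * m ^ 22 := by ring
      _ ≤ 10 ^ 8 * (8 * n) ^ 3 * (n : ℝ) ^ 22 := by gcongr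
      _ ≤ 10 ^ 12 * (n : ℝ) ^ 25 := by
          rw [mul_pow]
          have : (0 : ℝ) ≤ (n : ℝ) ^ 25 := by positivity
          nlinarith
      _ ≤ (n : ℝ) ^ 20 * (n : ℝ) ^ 25 := by gcongr
      _ = (n : ℝ) ^ 45 := by ring
  have hδt : (n : ℝ) ^ 5 ≤ δ * (n : ℝ) ^ 50 := by
    calc (n : ℝ) ^ 5 = 1 * (n : ℝ) ^ 5 := (one_mul _).symm
      _ ≤ δ * (n : ℝ) ^ 45 * (n : ℝ) ^ 5 := by gcongr
      _ = δ * (n : ℝ) ^ 50 := by ring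
  have hkm : (k : ℝ) * m + 4 ≤ (n : ℝ) ^ 5 := by
    have h4 : (k : ℝ) * m ≤ 8 * n * n := by gcongr
    have h5 : (4 : ℝ) ^ 3 ≤ (n : ℝ) ^ 3 := pow_le_pow_left₀ (by norm_num) hn' _
    have h6 : (n : ℝ) ^ 5 = n ^ 3 * (n * n) := by ring
    nlinarith
  have hpow : (1 - δ) ^ t ≤ Real.exp (-(δ * (n : ℝ) ^ 50)) := by
    have h7 : 1 - δ ≤ Real.exp (-δ) := by
      have := Real.add_one_le_exp (-δ)
      linarith
    calc (1 - δ) ^ t ≤ Real.exp (-δ) ^ t := pow_le_pow_left₀ (by linarith) h7 _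
      _ = Real.exp (-(δ * (n : ℝ) ^ 50)) := by
          rw [← Real.exp_nat_mul, ht]; congr 1; ring
  have hexp : Real.exp (-4) < 1 / 4 := by
    have h8 := Real.add_one_lt_exp (x := 4) (by norm_num)
    rw [Real.exp_neg, ← one_div]
    exact one_div_lt_one_div_of_lt (by norm_num) (by linarith)
  calc (1 - δ) ^ t * (Fintype.card (Col adj k) : ℝ)
      ≤ Real.exp (-(δ * (n : ℝ) ^ 50)) * Real.exp (k * m) :=
        mul_le_mul hpow card_col_le (Nat.cast_nonneg _) (Real.exp_nonneg _)
    _ = Real.exp (-(δ * (n : ℝ) ^ 50) + k * m) := (Real.exp_add _ _).symm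
    _ ≤ Real.exp (-4) := Real.exp_le_exp.2 (by linarith)
    _ < 1 / 4 := hexp

/-- Mixing when `k` is large, from the contraction of the Hamming distance. -/
lemma mixing_large {n : ℕ} (hE : 0 < Fintype.card E) (hn : Fintype.card E + 1 = n)
    (hn4 : 4 ≤ n) (hkn : 8 * n ≤ k) {t : ℕ} (ht : (t : ℝ) = (n : ℝ) ^ 50) (σ : Col adj k) :
    (1 / 2) * ∑ η, |(gl adj k ^ t) σ η - 1 / (Fintype.card (Col adj k) : ℝ)| < 1 / 4 := by
  have hE' : (1 : ℝ) ≤ Fintype.card E := by exact_mod_cast hE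
  have hn' : (4 : ℝ) ≤ n := by exact_mod_cast hn4
  have hmn : (Fintype.card E : ℝ) ≤ n := by exact_mod_cast (by omega : Fintype.card E ≤ n)
  set m : ℝ := (Fintype.card E : ℝ) with hm
  have hκ : 0 ≤ 1 - 1 / (2 * m) := by
    have : 1 / (2 * m) ≤ 1 := div_le_one_of_le₀ (by linarith) (by positivity)
    linarith
  have h := (gl_symChain (adj := adj) hE (by omega : 0 < k)).tv_of_contract
    (d := fun x y => ((dif x y).card : ℝ)) (D := m) hκ
    (fun x y => Nat.cast_nonneg _)
    (fun x y hxy => by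
      have : (dif x y).Nonempty := by
        by_contra hne
        rw [not_nonempty_iff_eq_empty] at hne
        apply hxy
        apply Subtype.ext
        funext e
        by_contra he
        have : e ∈ dif x y := mem_dif.2 he
        simp [hne] at this
      exact_mod_cast this.card_pos)
    (fun x y => by rw [hm]; exact_mod_cast card_le_univ (dif x y))
    (fun g L hg x y => gl_contract hE (by omega) g L hg x y)
    t σ
  refine h.trans_lt ?_
  have hpow : (1 - 1 / (2 * m)) ^ t ≤ Real.exp (-((n : ℝ) ^ 50 / (2 * m))) := by
    have h7 : 1 - 1 / (2 * m) ≤ Real.exp (-(1 / (2 * m))) := by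
      have := Real.add_one_le_exp (-(1 / (2 * m)))
      linarith
    calc (1 - 1 / (2 * m)) ^ t ≤ Real.exp (-(1 / (2 * m))) ^ t :=
          pow_le_pow_left₀ hκ h7 _
      _ = Real.exp (-((n : ℝ) ^ 50 / (2 * m))) := by
          rw [← Real.exp_nat_mul, ht]; congr 1; ring
  have hx : 4 * (n : ℝ) ≤ (n : ℝ) ^ 50 / (2 * m) := by
    rw [le_div_iff₀ (by positivity)]
    have h9 : (4 : ℝ) ^ 48 ≤ (n : ℝ) ^ 48 := pow_le_pow_left₀ (by norm_num) hn' _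
    calc 4 * (n : ℝ) * (2 * m) ≤ 4 * (n : ℝ) * (2 * n) := by gcongr
      _ = 8 * (n : ℝ) ^ 2 := by ring
      _ ≤ (n : ℝ) ^ 48 * (n : ℝ) ^ 2 := by gcongr; linarith
      _ = (n : ℝ) ^ 50 := by ring
  have hexp : Real.exp (-((n : ℝ) ^ 50 / (2 * m))) < 1 / (4 * n) := by
    rw [Real.exp_neg, ← one_div]
    apply one_div_lt_one_div_of_lt (by positivity)
    have := Real.add_one_le_exp ((n : ℝ) ^ 50 / (2 * m))
    linarith
  have hnpos : (0 : ℝ) < n := by linarith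
  calc m * (1 - 1 / (2 * m)) ^ t ≤ n * Real.exp (-((n : ℝ) ^ 50 / (2 * m))) :=
        mul_le_mul hmn hpow (pow_nonneg hκ _) (by linarith)
    _ < n * (1 / (4 * n)) := by gcongr
    _ = 1 / 4 := by field_simp

end Final

section Transfer

/-- All entries of `P ^ t` are positive. -/
def PowPos {Ω : Type} [Fintype Ω] [DecidableEq Ω] (P : Matrix Ω Ω ℝ) (t : ℕ) : Prop :=
  ∀ σ η, 0 < (P ^ t) σ η

/-- The total variation distance to uniformity after `t` steps from `σ` is below `1 / 4`. -/
def TvLt {Ω : Type} [Fintype Ω] [DecidableEq Ω] (P : Matrix Ω Ω ℝ) (t : ℕ) (σ : Ω) : Prop :=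
  (1 / 2) * ∑ η, |(P ^ t) σ η - 1 / (Fintype.card Ω : ℝ)| < 1 / 4

lemma SymChain.diag {Ω : Type} [Fintype Ω] {P : Matrix Ω Ω ℝ} (hP : SymChain P) (x : Ω)
    (Q : Ω → ℝ) (hQ : ∀ y, y ≠ x → P x y = Q y) [DecidablePred fun b : Ω => b ≠ x] :
    P x x = 1 - ∑ y ∈ univ.filter fun b => b ≠ x, Q y := by
  have hrow := hP.row x
  rw [← add_sum_erase univ _ (mem_univ x)] at hrow
  have hfe : (univ.filter fun b => b ≠ x) = univ.erase x := by
    ext b; simp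
  rw [eq_sub_iff_add_eq, ← hrow, hfe]
  congr 1
  exact sum_congr rfl fun y hy => (hQ y (ne_of_mem_erase hy)).symm

/-! The colourings of the edges of `G` carry two `Fintype` instances that are not definitionally
equal, as equality of edges is decided either by `DecidableEq V` or classically. The next three
lemmas pass from one to the other. -/

lemma SymChain.inst {Ω : Type} {F F' : Fintype Ω} {P : Matrix Ω Ω ℝ} (h : @SymChain Ω F P) :
    @SymChain Ω F' P := by
  rwa [Subsingleton.elim F' F]

lemma PowPos.inst {Ω : Type} {F F' : Fintype Ω} {D D' : DecidableEq Ω} {P : Matrix Ω Ω ℝ}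
    {t : ℕ} (h : @PowPos Ω F D P t) : @PowPos Ω F' D' P t := by
  rwa [Subsingleton.elim F' F, Subsingleton.elim D' D]

lemma TvLt.inst {Ω : Type} {F F' : Fintype Ω} {D D' : DecidableEq Ω} {P : Matrix Ω Ω ℝ}
    {t : ℕ} {σ : Ω} (h : @TvLt Ω F D P t σ) : @TvLt Ω F' D' P t σ := by
  rwa [Subsingleton.elim F' F, Subsingleton.elim D' D]

variable {V : Type} [Fintype V] [DecidableEq V] {G : SimpleGraph V} [DecidableRel G.Adj]

/-- The Glauber matrix of the edge set of `G` is the given transition matrix. -/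
lemma gl_eq_Pstep {k : ℕ} (hE : 0 < Fintype.card (Edge G)) (hk : 0 < k) :
    gl (fun e f : Edge G => EdgeInc e.1 f.1) k = Pstep G k := by
  have hoff : ∀ σ η : ECol G k, σ ≠ η →
      gl (fun e f : Edge G => EdgeInc e.1 f.1) k σ η = Poff G k σ η := by
    intro σ η hne
    rw [gl_off hne, Poff, Fintype.card_coe]
    refine if_congr ?_ rfl rfl
    rw [dif]
  ext σ η
  by_cases h : σ = η
  · subst h
    rw [Pstep, Matrix.of_apply, if_pos rfl]
    have hS : SymChain (gl (fun e f : Edge G => EdgeInc e.1 f.1) k) :=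
      (gl_symChain hE hk).inst
    exact hS.diag σ _ fun η hη => hoff σ η hη.symm
  · rw [hoff σ η h, Pstep, Matrix.of_apply, if_neg h]

end Transfer

end TreeCol

open TreeCol

/-- there is a constant `C > 0` such that for every finite tree `G` on `n ≥ 2`
vertices with maximum degree `Δ ≥ 3` and every `k ≥ Δ + 1`, the discrete-time Glauber
dynamics for `k`-edge-colourings of `G` is ergodic (some power of `P` is strictly positive,
i.e. `P` is irreducible and aperiodic), its stationary distribution is the uniform
distribution on the set of proper `k`-edge-colourings, and its mixing time is at most
`n^C`. -/
theorem tree_edge_colouring_mixing :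
    ∃ C : ℝ, 0 < C ∧
      ∀ (V : Type) [Fintype V] [DecidableEq V] (G : SimpleGraph V) [DecidableRel G.Adj],
        G.IsTree → 2 ≤ Fintype.card V → 3 ≤ G.maxDegree →
      ∀ k : ℕ, G.maxDegree + 1 ≤ k →
        (∃ t : ℕ, ∀ σ η : ECol G k, 0 < (Pstep G k ^ t) σ η) ∧
        (∀ η : ECol G k,
          ∑ σ : ECol G k, (1 / (Fintype.card (ECol G k) : ℝ)) * Pstep G k σ η =
            1 / (Fintype.card (ECol G k) : ℝ)) ∧
        (mixTime G k : ℝ) ≤ (Fintype.card V : ℝ) ^ C := by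
  refine ⟨50, by norm_num, ?_⟩
  intro V _ _ G _ hG hV hΔ k hk
  obtain ⟨R, hR⟩ := exists_rooted hG hV
  have hRk : ∀ e, (R.Ch e).card + 2 ≤ k := fun e => by have := hR e; omega
  have hk4 : 4 ≤ k := by omega
  have hE : 0 < Fintype.card (Edge G) := Fintype.card_pos_iff.2 ⟨R.e0⟩
  have hcard : Fintype.card (Edge G) + 1 = Fintype.card V := by
    rw [Fintype.card_coe]; exact hG.card_edgeFinset
  have : Nonempty V := ⟨R.up R.e0⟩
  have hn4 : 4 ≤ Fintype.card V := by
    have := G.maxDegree_lt_card_verts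
    omega
  have hP := gl_eq_Pstep (G := G) hE (by omega : 0 < k)
  have hS : SymChain (Pstep G k) := hP ▸ (gl_symChain hE (by omega)).inst
  refine ⟨?_, ?_, ?_⟩
  · obtain ⟨t, ht⟩ := tree_ergodic R hRk hk4
    have h : PowPos (Pstep G k) t := hP ▸ PowPos.inst ht
    exact ⟨t, h⟩
  · intro η
    rw [← mul_sum, hS.col, mul_one]
  · obtain ⟨t, ht⟩ : ∃ t : ℕ, t = Fintype.card V ^ 50 := ⟨_, rfl⟩
    have ht' : (t : ℝ) = (Fintype.card V : ℝ) ^ 50 := by rw [ht]; push_cast; rfl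
    have hmix : mixTime G k ≤ t := by
      apply Nat.sInf_le
      intro σ
      have h : TvLt (Pstep G k) t σ := by
        rw [← hP]
        rcases le_total k (8 * Fintype.card V) with h | h
        · exact TvLt.inst (mixing_small R hRk hk4 hcard hn4 h ht' σ)
        · exact TvLt.inst (mixing_large hE hcard hn4 h ht' σ)
      exact h
    have h50 : (Fintype.card V : ℝ) ^ (50 : ℝ) = (Fintype.card V : ℝ) ^ 50 := by
      rw [← Real.rpow_natCast]; norm_num
    rw [h50, ← ht']
    exact_mod_cast hmix
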